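/- For all integers j with 0 ≤ j ≤ 8 and all integers k ≤ 2, the space S_{j,k}(Γ₂[2]) of Siegel cusp forms of degree 2 and weight (j,k) on Γ₂[2] is zero. -/

import Mathlib

noncomputable section

open Matrix Complex Filter Topology

/-- The standard symplectic form matrix of size 4. -/
def J4 : Matrix (Fin 4) (Fin 4) ℤ := !![0,0,1,0; 0,0,0,1; -1,0,0,0; 0,-1,0,0]

/-- The Siegel modular group `Γ₂ = Sp(4,ℤ)`, as a set of 4×4 integer matrices. -/
def Sp4Z : Set (Matrix (Fin 4) (Fin 4) ℤ) := {γ | γᵀ * J4 * γ = J4}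

/-- The principal congruence subgroup `Γ₂[2]` of level 2. -/
def Sp4Z2 : Set (Matrix (Fin 4) (Fin 4) ℤ) :=
  {γ | γ ∈ Sp4Z ∧ ∀ i j, ((γ i j : ZMod 2) = if i = j then 1 else 0)}

/-- The Siegel upper half space of degree 2: symmetric 2×2 complex matrices with
positive definite imaginary part (encoded as functions `Fin 2 → Fin 2 → ℂ`). -/
def H2 : Set (Fin 2 → Fin 2 → ℂ) :=
  {τ | (Matrix.of τ).IsSymm ∧ (Matrix.of fun i j => (τ i j).im).PosDef}

/-- The four 2×2 blocks of a 4×4 integer matrix, as complex matrices. -/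
def blk (γ : Matrix (Fin 4) (Fin 4) ℤ) (r s : Fin 2) : Matrix (Fin 2) (Fin 2) ℂ :=
  Matrix.of fun i j =>
    ((γ ⟨2 * (r : ℕ) + (i : ℕ), by have h1 := r.isLt; have h2 := i.isLt; omega⟩
        ⟨2 * (s : ℕ) + (j : ℕ), by have h1 := s.isLt; have h2 := j.isLt; omega⟩ : ℤ) : ℂ)

/-- The factor `cτ + d`. -/
def den (γ : Matrix (Fin 4) (Fin 4) ℤ) (τ : Fin 2 → Fin 2 → ℂ) : Matrix (Fin 2) (Fin 2) ℂ :=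
  blk γ 1 0 * Matrix.of τ + blk γ 1 1

/-- The action `γ·τ = (aτ+b)(cτ+d)⁻¹` of `Sp(4)` on the Siegel upper half space. -/
def moeb (γ : Matrix (Fin 4) (Fin 4) ℤ) (τ : Fin 2 → Fin 2 → ℂ) : Fin 2 → Fin 2 → ℂ :=
  fun i j => ((blk γ 0 0 * Matrix.of τ + blk γ 0 1) * (den γ τ)⁻¹) i j

/-- Matrix coefficients of the `j`-th symmetric power of the standard representation of
`GL(2,ℂ)`, in the basis `x₁^(j-i) x₂^i`. -/
def symCoeff (j : ℕ) (m : Matrix (Fin 2) (Fin 2) ℂ) (l i : Fin (j + 1)) : ℂ :=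
  (((Polynomial.C (m 0 0) + Polynomial.C (m 1 0) * Polynomial.X) ^ (j - (l : ℕ)) *
    (Polynomial.C (m 0 1) + Polynomial.C (m 1 1) * Polynomial.X) ^ (l : ℕ)).coeff i)

/-- The `j`-th symmetric power `Sym^j(m)` acting on coordinate vectors. -/
def symAct (j : ℕ) (m : Matrix (Fin 2) (Fin 2) ℂ) (v : Fin (j + 1) → ℂ) : Fin (j + 1) → ℂ :=
  fun i => ∑ l, symCoeff j m l i * v l

lemma symAct_add (j : ℕ) (m : Matrix (Fin 2) (Fin 2) ℂ) (v w : Fin (j + 1) → ℂ) :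
    symAct j m (v + w) = symAct j m v + symAct j m w := by
  funext i
  simp [symAct, mul_add, Finset.sum_add_distrib]

lemma symAct_smul (j : ℕ) (m : Matrix (Fin 2) (Fin 2) ℂ) (a : ℂ) (v : Fin (j + 1) → ℂ) :
    symAct j m (a • v) = a • symAct j m v := by
  funext i
  simp only [symAct, Pi.smul_apply, smul_eq_mul, Finset.mul_sum]
  exact Finset.sum_congr rfl fun l _ => by ring

lemma symAct_zero (j : ℕ) (m : Matrix (Fin 2) (Fin 2) ℂ) : symAct j m 0 = 0 := by
  funext i; simp [symAct]

/-- The weight `(j,k)` automorphy action `Sym^j(m) ⊗ det(m)^k`. -/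
def wt (j : ℕ) (k : ℤ) (m : Matrix (Fin 2) (Fin 2) ℂ) (v : Fin (j + 1) → ℂ) :
    Fin (j + 1) → ℂ :=
  (m.det ^ k) • symAct j m v

lemma wt_add (j : ℕ) (k : ℤ) (m : Matrix (Fin 2) (Fin 2) ℂ) (v w : Fin (j + 1) → ℂ) :
    wt j k m (v + w) = wt j k m v + wt j k m w := by
  simp [wt, symAct_add, smul_add]

lemma wt_smul (j : ℕ) (k : ℤ) (m : Matrix (Fin 2) (Fin 2) ℂ) (a : ℂ) (v : Fin (j + 1) → ℂ) :
    wt j k m (a • v) = a • wt j k m v := by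
  rw [wt, wt, symAct_smul, smul_comm]

lemma wt_zero (j : ℕ) (k : ℤ) (m : Matrix (Fin 2) (Fin 2) ℂ) : wt j k m 0 = 0 := by
  simp [wt, symAct_zero]

/-- The slash operation `(F|γ)(τ) = Sym^j(cτ+d)⁻¹ det(cτ+d)⁻ᵏ F(γ·τ)`. -/
def slashS (j : ℕ) (k : ℤ) (γ : Matrix (Fin 4) (Fin 4) ℤ)
    (F : (Fin 2 → Fin 2 → ℂ) → (Fin (j + 1) → ℂ)) (τ : Fin 2 → Fin 2 → ℂ) :
    Fin (j + 1) → ℂ :=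
  ((den γ τ).det ^ (-k)) • symAct j ((den γ τ)⁻¹) (F (moeb γ τ))

lemma slashS_add (j : ℕ) (k : ℤ) (γ : Matrix (Fin 4) (Fin 4) ℤ)
    (F G : (Fin 2 → Fin 2 → ℂ) → (Fin (j + 1) → ℂ)) (τ : Fin 2 → Fin 2 → ℂ) :
    slashS j k γ (F + G) τ = slashS j k γ F τ + slashS j k γ G τ := by
  simp [slashS, symAct_add, smul_add]

lemma slashS_smul (j : ℕ) (k : ℤ) (γ : Matrix (Fin 4) (Fin 4) ℤ) (a : ℂ)
    (F : (Fin 2 → Fin 2 → ℂ) → (Fin (j + 1) → ℂ)) (τ : Fin 2 → Fin 2 → ℂ) :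
    slashS j k γ (a • F) τ = a • slashS j k γ F τ := by
  simp only [slashS, Pi.smul_apply, symAct_smul]
  rw [smul_comm]

lemma slashS_zero (j : ℕ) (k : ℤ) (γ : Matrix (Fin 4) (Fin 4) ℤ) (τ : Fin 2 → Fin 2 → ℂ) :
    slashS j k γ (0 : (Fin 2 → Fin 2 → ℂ) → (Fin (j + 1) → ℂ)) τ = 0 := by
  simp [slashS, symAct_zero]

/-- The diagonal point `diag(τ₁,τ₂)` of the Siegel upper half space. -/
def diagH (τ₁ τ₂ : ℂ) : Fin 2 → Fin 2 → ℂ :=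
  fun i j => if i = j then (if i = 0 then τ₁ else τ₂) else 0

/-- `F` is a Siegel cusp form of degree 2 and weight `(j,k)` on `Γ`, with character `χ`:
holomorphic on `ℍ₂`, transforming by `F(γ·τ) = χ(γ) Sym^j(cτ+d) det(cτ+d)^k F(τ)` for `γ ∈ Γ`,
with `(F|γ)(diag(τ₁,it)) → 0` as `t → ∞` for every `γ ∈ Γ₂`, and (normalization) vanishing
off `ℍ₂`. -/
def IsSiegelCuspForm (j : ℕ) (k : ℤ) (Γ : Set (Matrix (Fin 4) (Fin 4) ℤ))
    (χ : Matrix (Fin 4) (Fin 4) ℤ → ℂ)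
    (F : (Fin 2 → Fin 2 → ℂ) → (Fin (j + 1) → ℂ)) : Prop :=
  DifferentiableOn ℂ F H2 ∧
  (∀ γ ∈ Γ, ∀ τ ∈ H2, F (moeb γ τ) = χ γ • wt j k (den γ τ) (F τ)) ∧
  (∀ γ ∈ Sp4Z, ∀ τ₁ : ℂ, 0 < τ₁.im →
    Tendsto (fun t : ℝ => slashS j k γ F (diagH τ₁ (t * Complex.I))) atTop (𝓝 0)) ∧
  (∀ τ, τ ∉ H2 → F τ = 0)

/-- The space `S_{j,k}(Γ, χ)` of Siegel cusp forms of degree 2 and weight `(j,k)` on `Γ`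
with character `χ`, as a complex vector space. -/
def SiegelCusp (j : ℕ) (k : ℤ) (Γ : Set (Matrix (Fin 4) (Fin 4) ℤ))
    (χ : Matrix (Fin 4) (Fin 4) ℤ → ℂ) :
    Submodule ℂ ((Fin 2 → Fin 2 → ℂ) → (Fin (j + 1) → ℂ)) where
  carrier := {F | IsSiegelCuspForm j k Γ χ F}
  add_mem' := by
    rintro F G hF hG
    refine ⟨hF.1.add hG.1, ?_, ?_, ?_⟩
    · intro γ hγ τ hτ
      show F (moeb γ τ) + G (moeb γ τ) = χ γ • wt j k (den γ τ) (F τ + G τ)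
      rw [wt_add, smul_add, hF.2.1 γ hγ τ hτ, hG.2.1 γ hγ τ hτ]
    · intro γ hγ τ₁ hτ
      have h := (hF.2.2.1 γ hγ τ₁ hτ).add (hG.2.2.1 γ hγ τ₁ hτ)
      rw [add_zero] at h
      exact h.congr fun t => (slashS_add j k γ F G _).symm
    · intro τ hτ
      show F τ + G τ = 0
      rw [hF.2.2.2 τ hτ, hG.2.2.2 τ hτ, add_zero]
  zero_mem' := by
    refine ⟨?_, ?_, ?_, ?_⟩
    · exact differentiableOn_const 0
    · intro γ hγ τ hτ
      show (0 : Fin (j + 1) → ℂ) = χ γ • wt j k (den γ τ) 0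
      rw [wt_zero, smul_zero]
    · intro γ hγ τ₁ hτ
      have : (fun t : ℝ => slashS j k γ (0 : (Fin 2 → Fin 2 → ℂ) → (Fin (j + 1) → ℂ))
          (diagH τ₁ (t * Complex.I))) = fun _ => 0 := by
        funext t; exact slashS_zero j k γ _
      rw [this]
      exact tendsto_const_nhds
    · intro τ _; rfl
  smul_mem' := by
    rintro a F hF
    refine ⟨hF.1.const_smul a, ?_, ?_, ?_⟩
    · intro γ hγ τ hτ
      show a • F (moeb γ τ) = χ γ • wt j k (den γ τ) (a • F τ)
      rw [hF.2.1 γ hγ τ hτ, wt_smul, smul_comm]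
    · intro γ hγ τ₁ hτ
      have h := (hF.2.2.1 γ hγ τ₁ hτ).const_smul a
      rw [smul_zero] at h
      exact h.congr fun t => (slashS_smul j k γ a F _).symm
    · intro τ hτ
      show a • F τ = 0
      rw [hF.2.2.2 τ hτ, smul_zero]

/-- `ε` is (on `Γ₂`) the unique nontrivial homomorphism `Γ₂ → {±1}`. -/
def IsEps (ε : Matrix (Fin 4) (Fin 4) ℤ → ℂ) : Prop :=
  (∀ γ ∈ Sp4Z, ε γ = 1 ∨ ε γ = -1) ∧
  (∀ γ ∈ Sp4Z, ∀ δ ∈ Sp4Z, ε (γ * δ) = ε γ * ε δ) ∧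
  (∃ γ ∈ Sp4Z, ε γ ≠ 1)

section

abbrev SLZ := Matrix.SpecialLinearGroup (Fin 2) ℤ
abbrev SLF := Matrix.SpecialLinearGroup (Fin 2) (ZMod 2)

/-- reduction mod 2 -/
def redu : SLZ →* SLF := Matrix.SpecialLinearGroup.map (Int.castRingHom (ZMod 2))

lemma redu_surj : Function.Surjective redu := by
  intro c
  have key : ∀ a b c d : ZMod 2, a * d - b * c = 1 → ∃ a' b' c' d' : ℤ, a' * d' - b' * c' = 1 ∧
      (a' : ZMod 2) = a ∧ (b' : ZMod 2) = b ∧ (c' : ZMod 2) = c ∧ (d' : ZMod 2) = d := by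
    intro a b c d h
    have e : ∀ x : ZMod 2, x = 0 ∨ x = 1 := by decide
    rcases e a with rfl | rfl <;> rcases e b with rfl | rfl <;> rcases e c with rfl | rfl <;>
      rcases e d with rfl | rfl <;> first
      | (exfalso; revert h; decide)
      | exact ⟨0, -1, 1, 0, by decide⟩
      | exact ⟨0, -1, 1, 1, by decide⟩
      | exact ⟨1, 0, 0, 1, by decide⟩
      | exact ⟨1, 1, 0, 1, by decide⟩
      | exact ⟨1, 0, 1, 1, by decide⟩
      | exact ⟨1, -1, 1, 0, by decide⟩
  have hd := c.det_coe
  rw [Matrix.det_fin_two] at hd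
  obtain ⟨a', b', c', d', h, h1, h2, h3, h4⟩ := key _ _ _ _ hd
  refine ⟨⟨!![a', b'; c', d'], by simp [Matrix.det_fin_two, h]⟩, ?_⟩
  ext i j
  fin_cases i <;> fin_cases j
  · exact h1
  · exact h2
  · exact h3
  · exact h4

lemma redu_entry (σ : SLZ) (i j : Fin 2) : redu σ i j = (σ i j : ZMod 2) := by
  simp [redu]

/-- the factor of automorphy `cτ+d` -/
def JJ (σ : SLZ) (τ : ℂ) : ℂ := (σ 1 0 : ℂ) * τ + (σ 1 1 : ℂ)
/-- the Möbius action -/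
def MM (σ : SLZ) (τ : ℂ) : ℂ := ((σ 0 0 : ℂ) * τ + (σ 0 1 : ℂ)) / JJ σ τ

lemma JJ_eq (σ : SLZ) (τ : UpperHalfPlane) : JJ σ τ = UpperHalfPlane.denom σ τ := by
  rw [ModularGroup.denom_apply]; rfl

lemma MM_eq (σ : SLZ) (τ : UpperHalfPlane) : MM σ τ = ((σ • τ : UpperHalfPlane) : ℂ) := by
  rw [UpperHalfPlane.specialLinearGroup_apply]; simp [MM, JJ]

lemma JJ_ne (σ : SLZ) {τ : ℂ} (h : 0 < τ.im) : JJ σ τ ≠ 0 := by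
  have := JJ_eq σ ⟨τ, h⟩
  rw [show JJ σ τ = _ from this]
  exact UpperHalfPlane.denom_ne_zero _ _

lemma MM_im (σ : SLZ) {τ : ℂ} (h : 0 < τ.im) : 0 < (MM σ τ).im := by
  have := MM_eq σ ⟨τ, h⟩
  rw [show MM σ τ = _ from this]
  exact UpperHalfPlane.im_pos _

/-- valence lemma for level 2 -/
lemma lemV (w : ℤ) (g : SLZ → ℂ → ℂ)
    (hol : ∀ σ, DifferentiableOn ℂ (g σ) {z | 0 < z.im})
    (hsl : ∀ ρ σ τ, 0 < τ.im → g (ρ * σ) τ = (JJ σ τ) ^ (-w) * g ρ (MM σ τ))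
    (hmod : ∀ σ σ', redu σ = redu σ' → ∀ τ, 0 < τ.im → g σ τ = g σ' τ)
    (v : SLF → ℕ)
    (hb : ∀ σ, ∃ C Y : ℝ, ∀ τ : ℂ, 0 < τ.im → Y ≤ τ.im →
      ‖g σ τ‖ ≤ C * Real.exp (-(Real.pi * v (redu σ) * τ.im)))
    (hV : w < ∑ c, (v c : ℤ)) : ∀ σ τ, 0 < τ.im → g σ τ = 0 := by
  classical
  let s : SLF → SLZ := Function.surjInv redu_surj
  have hs : ∀ c, redu (s c) = c := Function.surjInv_eq redu_surj
  have hcard : Fintype.card SLF = 6 := by decide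
  set N : UpperHalfPlane → ℂ := fun τ => ∏ c, g (s c) τ with hN
  set V : ℕ := ∑ c, v c with hVdef
  have hNsl : ∀ (σ : SLZ) (τ : UpperHalfPlane), N (σ • τ) = (JJ σ τ) ^ (6 * w) * N τ := by
    intro σ τ
    have h1 : N τ = ∏ c, ((JJ σ τ) ^ (-w) * g (s c) (MM σ τ)) := by
      rw [hN]
      dsimp only
      rw [← Equiv.prod_comp (Equiv.mulRight (redu σ))]
      refine Finset.prod_congr rfl fun c _ => ?_
      rw [← hsl _ _ _ τ.im_pos]
      refine hmod _ _ ?_ _ τ.im_pos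
      simp [hs]
    rw [h1, Finset.prod_mul_distrib, Finset.prod_const, Finset.card_univ, hcard, hN]
    dsimp only
    rw [MM_eq, ← mul_assoc, ← zpow_natCast, ← _root_.zpow_mul, ← zpow_add₀ (JJ_ne σ τ.im_pos)]
    have : 6 * w + -w * ((6 : ℕ) : ℤ) = 0 := by push_cast; ring
    rw [this, zpow_zero, one_mul]
  let f : UpperHalfPlane → ℂ := fun τ => N τ ^ 2 / ModularForm.discriminant τ ^ V
  have hDsl : ∀ (σ : SLZ) (τ : UpperHalfPlane), ModularForm.discriminant (σ • τ) = (JJ σ τ) ^ (12 : ℤ) * ModularForm.discriminant τ := by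
    intro σ τ
    have := SlashInvariantForm.slash_action_eqn'' CuspForm.discriminant
      (γ := (Matrix.SpecialLinearGroup.mapGL ℝ σ))
      (show _ ∈ (Matrix.SpecialLinearGroup.mapGL (n := Fin 2) (R := ℤ) ℝ).range from ⟨σ, rfl⟩) τ
    rw [JJ_eq]
    exact this
  have hfsl : ∀ σ : SLZ, SlashAction.map (12 * w - 12 * (V : ℤ)) σ f = f := by
    intro σ
    ext τ
    rw [ModularForm.SL_slash_apply, ← JJ_eq]
    dsimp only [f]
    have hJ : JJ σ τ ≠ 0 := JJ_ne σ τ.im_pos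
    rw [hNsl, hDsl, mul_pow, mul_pow, mul_div_mul_comm, mul_assoc, mul_comm _ (_ ^ _), ← mul_assoc]
    rw [← zpow_natCast, ← zpow_natCast, ← _root_.zpow_mul, ← _root_.zpow_mul, ← zpow_sub₀ hJ, ← zpow_add₀ hJ]
    have : (6 * w * ((2 : ℕ) : ℤ) - 12 * (V : ℤ) + -(12 * w - 12 * (V : ℤ))) = 0 := by push_cast; ring
    rw [this, zpow_zero, one_mul]
  have hfb : UpperHalfPlane.IsBoundedAtImInfty f := by
    choose C Y hCY using hb
    have h1 : N =O[UpperHalfPlane.atImInfty] fun τ => Real.exp (-Real.pi * V * τ.im) := by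
      have : ∀ c ∈ (Finset.univ : Finset SLF), (fun τ : UpperHalfPlane => g (s c) τ) =O[UpperHalfPlane.atImInfty]
          fun τ => Real.exp (-(Real.pi * v c * τ.im)) := by
        intro c _
        refine Asymptotics.IsBigO.of_bound (C (s c)) ?_
        rw [Filter.eventually_iff, UpperHalfPlane.atImInfty_mem]
        refine ⟨Y (s c), fun τ hτ => ?_⟩
        have := hCY (s c) τ τ.im_pos hτ
        rw [hs] at this
        simpa [abs_of_pos (Real.exp_pos _)] using this
      have h2 := Asymptotics.IsBigO.finsetProd this
      refine (h2.congr_right fun τ => ?_)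
      rw [← Real.exp_sum]
      congr 1
      rw [hVdef]
      push_cast
      rw [Finset.mul_sum, Finset.sum_mul]
      exact Finset.sum_congr rfl fun _ _ => by ring
    have h2 : (fun τ => N τ ^ 2) =O[UpperHalfPlane.atImInfty] fun τ => ModularForm.discriminant τ ^ V := by
      refine (h1.pow 2).trans ?_
      refine (Asymptotics.IsBigO.congr_left (ModularForm.exp_isBigO_discriminant.pow V) fun τ => ?_)
      rw [← Real.exp_nat_mul, ← Real.exp_nat_mul]
      congr 1; push_cast; ring
    exact (Asymptotics.div_isBoundedUnder_of_isBigO h2).isBigO_one ℝ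
  let F : ModularForm (Matrix.SpecialLinearGroup.mapGL (n := Fin 2) (R := ℤ) ℝ).range (12 * w - 12 * (V : ℤ)) :=
    { toFun := f
      slash_action_eq' := fun _ ⟨γ, hγ⟩ ↦ hγ ▸ hfsl γ
      holo' := by
        rw [UpperHalfPlane.mdifferentiable_iff]
        have h1 : DifferentiableOn ℂ (fun z => ∏ c, g (s c) z) {z | 0 < z.im} :=
          DifferentiableOn.fun_finsetProd fun c _ => hol _
        have h2 := UpperHalfPlane.mdifferentiable_iff.1 CuspForm.discriminant.holo'
        refine ((h1.pow 2).div (h2.pow V) ?_).congr ?_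
        · intro z hz
          exact pow_ne_zero _ (ModularForm.discriminant_ne_zero _)
        · intro z hz
          simp only [Function.comp, f, Pi.div_apply, Pi.pow_apply, hN, UpperHalfPlane.ofComplex_apply_of_im_pos hz]
          rfl
      bdd_at_cusps' := by
        intro c hc
        rw [Subgroup.IsArithmetic.isCusp_iff_isCusp_SL2Z] at hc
        rw [OnePoint.isBoundedAt_iff_forall_SL2Z hc]
        intro γ _
        have := hfsl γ
        rw [this]
        exact hfb }
  have hF0 : f = 0 := ModularFormClass.levelOne_neg_weight_eq_zero
    (by have : w < (V : ℤ) := by rw [hVdef]; push_cast; exact hV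
        linarith) F
  have hN0 : ∀ z, 0 < z.im → ∏ c, g (s c) z = 0 := by
    intro z hz
    have := congrFun hF0 ⟨z, hz⟩
    simp only [f, hN, Pi.zero_apply, div_eq_zero_iff, pow_eq_zero_iff', ModularForm.discriminant_ne_zero, false_and, or_false] at this
    exact this.1
  have hopen : IsOpen {z : ℂ | 0 < z.im} := isOpen_lt continuous_const Complex.continuous_im
  have hpre : IsPreconnected {z : ℂ | 0 < z.im} := (convex_halfSpace_im_gt 0).isPreconnected
  have hex : ∃ c, ∀ z, 0 < z.im → g (s c) z = 0 := by
    have gen : ∀ S : Finset SLF, (∀ z, 0 < z.im → ∏ c ∈ S, g (s c) z = 0) → ∃ c, ∀ z, 0 < z.im → g (s c) z = 0 := by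
      intro S
      induction S using Finset.induction_on with
      | empty => intro h; have := h I (by simp); simp at this
      | insert a S ha ih =>
        intro h
        have h1 := (hol (s a)).analyticOnNhd hopen
        have h2 : AnalyticOnNhd ℂ (fun z => ∏ c ∈ S, g (s c) z) {z | 0 < z.im} :=
          (DifferentiableOn.fun_finsetProd fun c _ => hol _).analyticOnNhd hopen
        rcases AnalyticOnNhd.eq_zero_or_eq_zero_of_mul_eq_zero h1 h2 (fun z hz => by
          have := h z hz; rwa [Finset.prod_insert ha] at this) hpre with h3 | h3
        · exact ⟨a, h3⟩
        · exact ih h3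
    exact gen _ hN0
  obtain ⟨c, hc⟩ := hex
  intro σ τ hτ
  have h1 := hsl (s c) ((s c)⁻¹ * σ) τ hτ
  rw [mul_inv_cancel_left, hc _ (MM_im _ hτ), mul_zero] at h1
  exact h1

end

section

/-- normalised quasimodular function -/
def LL (τ : ℂ) : ℂ := -(Real.pi * I / 6) * EisensteinSeries.E2 (UpperHalfPlane.ofComplex τ)

lemma LL_diff : DifferentiableOn ℂ LL {z | 0 < z.im} :=
  (UpperHalfPlane.mdifferentiable_iff.1 E2_mdifferentiable).const_mul _

lemma LL_tr (σ : SLZ) (τ : ℂ) (h : 0 < τ.im) :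
    LL (MM σ τ) = JJ σ τ ^ 2 * LL τ - (σ 1 0 : ℂ) * JJ σ τ := by
  have h1 := congrFun (EisensteinSeries.E2_slash_action σ) ⟨τ, h⟩
  rw [ModularForm.SL_slash_apply, ← JJ_eq] at h1
  have h3 : UpperHalfPlane.ofComplex (MM σ τ) = σ • (⟨τ, h⟩ : UpperHalfPlane) := by
    rw [UpperHalfPlane.ofComplex_apply_of_im_pos (MM_im σ h)]
    ext1
    exact MM_eq σ ⟨τ, h⟩
  have hJ := JJ_ne σ h
  have hJ' : JJ σ (⟨τ, h⟩ : UpperHalfPlane) = JJ σ τ := rfl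
  simp only [EisensteinSeries.D2, Pi.sub_apply, Pi.smul_apply, riemannZeta_two, smul_eq_mul, ← JJ_eq, hJ'] at h1
  rw [LL, LL, h3, UpperHalfPlane.ofComplex_apply_of_im_pos h]
  have hden : UpperHalfPlane.denom (σ : GL (Fin 2) ℝ) (⟨τ, h⟩ : UpperHalfPlane) = JJ σ τ := (JJ_eq σ ⟨τ, h⟩).symm
  have hp : (Real.pi : ℂ) ≠ 0 := by exact_mod_cast Real.pi_ne_zero
  have h4 : EisensteinSeries.E2 (σ • (⟨τ, h⟩ : UpperHalfPlane)) = JJ σ τ ^ 2 * EisensteinSeries.E2 ⟨τ, h⟩ - 6 * I / Real.pi * (σ 1 0 : ℂ) * JJ σ τ := by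
    have h5 : JJ σ τ ^ (-(2:ℤ)) = (JJ σ τ ^ 2)⁻¹ := by rw [_root_.zpow_neg]; norm_cast
    rw [h5, ← div_eq_mul_inv, div_eq_iff (pow_ne_zero 2 hJ)] at h1
    try rw [hden] at h1
    rw [h1]
    field_simp
  rw [h4]
  field_simp
  linear_combination ((σ 1 0 : ℂ) * 6) * I_sq

def LL0 : ℂ := -(Real.pi * I / 6)
lemma LL0_ne : LL0 ≠ 0 := by
  have hp : (Real.pi : ℂ) ≠ 0 := by exact_mod_cast Real.pi_ne_zero
  simp [LL0, hp]

lemma LL_decay : ∃ C, 0 ≤ C ∧ ∀ τ : ℂ, 1 ≤ τ.im → ‖LL τ - LL0‖ ≤ C * Real.exp (-(2 * Real.pi * τ.im)) := by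
  have hS := (EisensteinSeries.summable_sigma_mul_cexp_pow (k := 2) one_le_two UpperHalfPlane.I).norm
  set a : ℕ → ℝ := fun n => ‖((ArithmeticFunction.sigma 1 n : ℕ) : ℂ) * cexp (2 * Real.pi * I * UpperHalfPlane.I) ^ n‖ with ha
  have hS' : Summable a := hS
  have hSp : Summable (fun n : ℕ+ => a n) := hS'.comp_injective PNat.coe_injective
  set q0 := Real.exp (-(2 * Real.pi)) with hq0
  have hq0p : 0 < q0 := Real.exp_pos _
  have hnI : ‖cexp (2 * Real.pi * I * UpperHalfPlane.I)‖ = q0 := by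
    rw [Complex.norm_exp]; simp [hq0, mul_assoc]
  refine ⟨‖LL0‖ * (24 * (q0⁻¹ * ∑' n : ℕ+, a n)), by positivity, fun τ hτ => ?_⟩
  have hτ0 : 0 < τ.im := by linarith
  rw [LL, UpperHalfPlane.ofComplex_apply_of_im_pos hτ0, EisensteinSeries.E2_eq_tsum_cexp]
  set Q := cexp (2 * Real.pi * I * (⟨τ, hτ0⟩ : UpperHalfPlane)) with hQ
  have hnQ : ‖Q‖ = Real.exp (-(2 * Real.pi * τ.im)) := by
    rw [hQ, Complex.norm_exp]; congr 1; simp [mul_assoc]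
  have hle : ‖Q‖ ≤ q0 := by
    rw [hnQ, hq0]; apply Real.exp_le_exp.2; nlinarith [Real.pi_pos]
  have hterm : ∀ n : ℕ+, ‖((ArithmeticFunction.sigma 1 (n : ℕ) : ℕ) : ℂ) * Q ^ (n : ℕ)‖ ≤ (‖Q‖ * q0⁻¹) * a n := by
    intro n
    obtain ⟨m, hm⟩ : ∃ m : ℕ, (n : ℕ) = m + 1 := ⟨n.natPred, by simp⟩
    rw [ha]
    simp only [norm_mul, norm_pow, hnI]
    rw [hm, pow_succ, pow_succ]
    have : ‖Q‖ ^ m ≤ q0 ^ m := pow_le_pow_left₀ (norm_nonneg _) hle m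
    calc ‖((ArithmeticFunction.sigma 1 (m+1) : ℕ) : ℂ)‖ * (‖Q‖ ^ m * ‖Q‖) ≤ ‖((ArithmeticFunction.sigma 1 (m+1) : ℕ) : ℂ)‖ * (q0 ^ m * ‖Q‖) := by gcongr
      _ = _ := by field_simp
  have hb : ‖∑' n : ℕ+, ((ArithmeticFunction.sigma 1 (n : ℕ) : ℕ) : ℂ) * Q ^ (n : ℕ)‖ ≤ (‖Q‖ * q0⁻¹) * ∑' n : ℕ+, a n := by
    rw [← tsum_mul_left]
    exact tsum_of_norm_bounded (hSp.mul_left _).hasSum hterm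
  have : -(Real.pi * I / 6) * (1 - 24 * ∑' n : ℕ+, ((ArithmeticFunction.sigma 1 (n : ℕ) : ℕ) : ℂ) * Q ^ (n : ℕ)) - LL0 = -LL0 * (24 * ∑' n : ℕ+, ((ArithmeticFunction.sigma 1 (n : ℕ) : ℕ) : ℂ) * Q ^ (n : ℕ)) := by
    rw [LL0]; ring
  rw [this, norm_mul, norm_mul, norm_neg, ← hnQ]
  simp only [Complex.norm_ofNat]
  calc _ ≤ ‖LL0‖ * (24 * ((‖Q‖ * q0⁻¹) * ∑' n : ℕ+, a n)) := by gcongr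
    _ = _ := by ring

/-- base quasimodular function of level Γ₀(2) -/
def psi (σ : SLZ) (τ : ℂ) : ℂ :=
  ((4 * LL (2 * MM σ τ) - LL (MM σ τ)) + (σ 1 0 : ℂ) * JJ σ τ) / JJ σ τ ^ 2

lemma JJ_mul (ρ σ : SLZ) {τ : ℂ} (h : 0 < τ.im) : JJ (ρ * σ) τ = JJ ρ (MM σ τ) * JJ σ τ := by
  have hJ := JJ_ne σ h
  have e1 : (ρ * σ) 1 0 = ρ 1 0 * σ 0 0 + ρ 1 1 * σ 1 0 := by
    simp [Matrix.mul_apply, Fin.sum_univ_two]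
  have e2 : (ρ * σ) 1 1 = ρ 1 0 * σ 0 1 + ρ 1 1 * σ 1 1 := by
    simp [Matrix.mul_apply, Fin.sum_univ_two]
  have : JJ ρ (MM σ τ) * JJ σ τ = (ρ 1 0 : ℂ) * ((σ 0 0 : ℂ) * τ + σ 0 1) + ρ 1 1 * JJ σ τ := by
    rw [JJ, MM]; field_simp
  rw [this, JJ, e1, e2, JJ]; push_cast; ring

lemma MM_mul (ρ σ : SLZ) {τ : ℂ} (h : 0 < τ.im) : MM (ρ * σ) τ = MM ρ (MM σ τ) := by
  have h1 := MM_eq (ρ * σ) ⟨τ, h⟩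
  have h2 := MM_eq σ ⟨τ, h⟩
  have h3 := MM_eq ρ (σ • ⟨τ, h⟩)
  rw [mul_smul, ← h3, ← h2] at h1
  exact h1

lemma psi_cocycle (ρ σ : SLZ) {τ : ℂ} (h : 0 < τ.im) :
    psi ρ (MM σ τ) = JJ σ τ ^ 2 * psi (ρ * σ) τ - (σ 1 0 : ℂ) * JJ σ τ := by
  have hJ := JJ_ne σ h
  have hJ2 := JJ_ne ρ (MM_im σ h)
  have e1 : (ρ * σ) 1 0 = ρ 1 0 * σ 0 0 + ρ 1 1 * σ 1 0 := by
    simp [Matrix.mul_apply, Fin.sum_univ_two]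
  have key : (ρ 1 0 : ℂ) = ((ρ * σ) 1 0 : ℂ) * JJ σ τ - (σ 1 0 : ℂ) * (JJ ρ (MM σ τ) * JJ σ τ) := by
    have : JJ ρ (MM σ τ) * JJ σ τ = (ρ 1 0 : ℂ) * ((σ 0 0 : ℂ) * τ + σ 0 1) + ρ 1 1 * JJ σ τ := by
      rw [JJ, MM]; field_simp
    have hd := σ.det_coe
    rw [Matrix.det_fin_two] at hd
    have hd' : (σ 0 0 : ℂ) * σ 1 1 - σ 0 1 * σ 1 0 = 1 := by exact_mod_cast hd
    rw [this, e1, JJ]; push_cast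
    linear_combination (-(ρ 1 0 : ℂ)) * hd'
  rw [psi, psi, MM_mul _ _ h, JJ_mul _ _ h, key]
  field_simp
  ring

lemma MM_eq_of {σ : SLZ} {τ : ℂ} {a b c d : ℤ} (h00 : σ 0 0 = a) (h01 : σ 0 1 = b) (h10 : σ 1 0 = c) (h11 : σ 1 1 = d) :
    MM σ τ = (a * τ + b) / (c * τ + d) ∧ JJ σ τ = c * τ + d := by
  simp [MM, JJ, h00, h01, h10, h11]

lemma LL_tr' (a b c d : ℤ) (hd : a * d - b * c = 1) {τ : ℂ} (h : 0 < τ.im) :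
    LL ((a * τ + b) / (c * τ + d)) = (c * τ + d) ^ 2 * LL τ - c * (c * τ + d) := by
  have := LL_tr ⟨!![a, b; c, d], by simp [Matrix.det_fin_two, hd]⟩ τ h
  simpa [MM, JJ] using this

lemma psi_formula (σ : SLZ) {τ : ℂ} (h : 0 < τ.im) :
    (Even (σ 1 0) → psi σ τ = 4 * LL (2 * τ) - LL τ) ∧
    (¬ Even (σ 1 0) → Even (σ 1 1) → psi σ τ = LL (τ / 2) - LL τ) ∧
    (¬ Even (σ 1 0) → ¬ Even (σ 1 1) → psi σ τ = LL ((τ + 1) / 2) - LL τ) := by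
  have hJ := JJ_ne σ h
  have hd := σ.det_coe
  rw [Matrix.det_fin_two] at hd
  set a := σ 0 0
  set b := σ 0 1
  have hMM : MM σ τ = (a * τ + b) / JJ σ τ := rfl
  refine ⟨fun hc => ?_, fun hc hdd => ?_, fun hc hdd => ?_⟩
  · obtain ⟨c, hc⟩ := hc
    have h2 : JJ σ τ = c * (2 * τ) + (σ 1 1 : ℂ) := by rw [JJ, hc]; push_cast; ring
    have := LL_tr' a (2 * b) c (σ 1 1) (by linear_combination hd + b * hc) (τ := 2 * τ) (by simpa using h)
    rw [← h2] at this
    have h3 : ((a : ℂ) * (2 * τ) + ((2 * b : ℤ) : ℂ)) / JJ σ τ = 2 * MM σ τ := by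
      rw [hMM]; push_cast; ring
    rw [h3] at this
    rw [psi, this, LL_tr σ τ h, hc]
    push_cast
    field_simp
    ring
  · obtain ⟨d, hdd⟩ := hdd
    have h2 : JJ σ τ / 2 = (σ 1 0 : ℂ) * (τ / 2) + (d : ℂ) := by rw [JJ, hdd]; push_cast; ring
    have := LL_tr' (2 * a) b (σ 1 0) d (by linear_combination hd - a * hdd) (τ := τ / 2) (by simpa using h)
    rw [← h2] at this
    have h3 : (((2 * a : ℤ) : ℂ) * (τ / 2) + (b : ℂ)) / (JJ σ τ / 2) = 2 * MM σ τ := by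
      rw [hMM]; push_cast; field_simp
    rw [h3] at this
    rw [psi, this, LL_tr σ τ h]
    field_simp
    ring
  · obtain ⟨d, hdd⟩ : ∃ d, σ 1 1 = σ 1 0 + 2 * d := by
      rw [Int.not_even_iff_odd] at hc hdd
      obtain ⟨d, hd'⟩ := hdd.sub_odd hc
      exact ⟨d, by linarith⟩
    have h2 : JJ σ τ / 2 = (σ 1 0 : ℂ) * ((τ + 1) / 2) + (d : ℂ) := by rw [JJ, hdd]; push_cast; ring
    have := LL_tr' (2 * a) (b - a) (σ 1 0) d (by linear_combination hd - a * hdd) (τ := (τ + 1) / 2) (by simpa using h)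
    rw [← h2] at this
    have h3 : (((2 * a : ℤ) : ℂ) * ((τ + 1) / 2) + ((b - a : ℤ) : ℂ)) / (JJ σ τ / 2) = 2 * MM σ τ := by
      rw [hMM]; push_cast; field_simp; ring
    rw [h3] at this
    rw [psi, this, LL_tr σ τ h]
    field_simp
    ring

lemma even_iff_redu (σ : SLZ) (i j : Fin 2) : Even (σ i j) ↔ redu σ i j = 0 := by
  rw [redu_entry, ZMod.intCast_zmod_eq_zero_iff_dvd _ 2]
  exact even_iff_two_dvd

lemma psi_mod (σ σ' : SLZ) (hr : redu σ = redu σ') {τ : ℂ} (h : 0 < τ.im) : psi σ τ = psi σ' τ := by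
  have h1 : Even (σ 1 0) ↔ Even (σ' 1 0) := by rw [even_iff_redu, even_iff_redu, hr]
  have h2 : Even (σ 1 1) ↔ Even (σ' 1 1) := by rw [even_iff_redu, even_iff_redu, hr]
  obtain ⟨p1, p2, p3⟩ := psi_formula σ h
  obtain ⟨r1, r2, r3⟩ := psi_formula σ' h
  by_cases hc : Even (σ 1 0)
  · rw [p1 hc, r1 (h1.1 hc)]
  · by_cases hd : Even (σ 1 1)
    · rw [p2 hc hd, r2 (fun h => hc (h1.2 h)) (h2.1 hd)]
    · rw [p3 hc hd, r3 (fun h => hc (h1.2 h)) (fun h => hd (h2.2 h))]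

lemma psi_hol (σ : SLZ) : DifferentiableOn ℂ (psi σ) {z | 0 < z.im} := by
  have hmap : ∀ (f : ℂ → ℂ), Differentiable ℂ f → (∀ z, 0 < z.im → 0 < (f z).im) →
      DifferentiableOn ℂ (fun z => LL (f z)) {z | 0 < z.im} := fun f hf h =>
    LL_diff.comp hf.differentiableOn h
  by_cases hc : Even (σ 1 0)
  · refine DifferentiableOn.congr ?_ fun z hz => (psi_formula σ hz).1 hc
    exact ((hmap (fun z => 2 * z) (by fun_prop) (by simp)).const_mul 4).sub LL_diff
  · by_cases hd : Even (σ 1 1)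
    · refine DifferentiableOn.congr ?_ fun z hz => (psi_formula σ hz).2.1 hc hd
      exact (hmap (fun z => z / 2) (by fun_prop) (by simp)).sub LL_diff
    · refine DifferentiableOn.congr ?_ fun z hz => (psi_formula σ hz).2.2 hc hd
      exact (hmap (fun z => (z + 1) / 2) (by fun_prop) (by simp)).sub LL_diff

lemma psi_bound : ∃ C, 0 ≤ C ∧ ∀ σ : SLZ, ∀ τ : ℂ, 2 ≤ τ.im →
    (Even (σ 1 0) → ‖psi σ τ - 3 * LL0‖ ≤ C * Real.exp (-(Real.pi * τ.im))) ∧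
    (¬ Even (σ 1 0) → ‖psi σ τ‖ ≤ C * Real.exp (-(Real.pi * τ.im))) := by
  obtain ⟨C, hC, h⟩ := LL_decay
  refine ⟨5 * C, by positivity, fun σ τ hτ => ?_⟩
  have hτ0 : 0 < τ.im := by linarith
  have hp := Real.pi_pos
  have b : ∀ w : ℂ, τ.im / 2 ≤ w.im → ‖LL w - LL0‖ ≤ C * Real.exp (-(Real.pi * τ.im)) := by
    intro w hw
    refine (h w (by linarith)).trans ?_
    exact mul_le_mul_of_nonneg_left (Real.exp_le_exp.2 (by nlinarith)) hC
  have bτ := b τ (by linarith)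
  obtain ⟨p1, p2, p3⟩ := psi_formula σ hτ0
  have two : ∀ w : ℂ, τ.im / 2 ≤ w.im → ‖LL w - LL τ‖ ≤ 5 * C * Real.exp (-(Real.pi * τ.im)) := by
    intro w hw
    have h1 := b w hw
    have : LL w - LL τ = (LL w - LL0) - (LL τ - LL0) := by ring
    rw [this]
    have h2 := norm_sub_le (LL w - LL0) (LL τ - LL0)
    have : 0 ≤ C * Real.exp (-(Real.pi * τ.im)) := by positivity
    linarith
  refine ⟨fun hc => ?_, fun hc => ?_⟩
  · rw [p1 hc]
    have : 4 * LL (2 * τ) - LL τ - 3 * LL0 = 4 * (LL (2 * τ) - LL0) - (LL τ - LL0) := by ring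
    rw [this]
    have h1 := norm_sub_le (4 * (LL (2 * τ) - LL0)) (LL τ - LL0)
    have h2 := b (2 * τ) (by simp; linarith)
    rw [norm_mul, Complex.norm_ofNat] at h1
    linarith
  · by_cases hd : Even (σ 1 1)
    · rw [p2 hc hd]; exact two _ (by simp)
    · rw [p3 hc hd]; exact two _ (by simp)

lemma psi_ne_aux {σ σ' : SLZ} (hc : Even (σ 1 0)) (hc' : ¬ Even (σ' 1 0)) :
    ¬ ∀ τ : ℂ, 0 < τ.im → psi σ τ = psi σ' τ := by
  intro hall
  obtain ⟨C, hC, hb⟩ := psi_bound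
  have hpos : 0 < ‖3 * LL0‖ := by simp [LL0_ne]
  have ht : Tendsto (fun t : ℝ => 2 * C * Real.exp (-(Real.pi * t))) atTop (𝓝 (2 * C * 0)) := by
    apply Tendsto.const_mul
    exact Real.tendsto_exp_neg_atTop_nhds_zero.comp (tendsto_id.const_mul_atTop Real.pi_pos)
  rw [mul_zero] at ht
  obtain ⟨t, ht1, ht2⟩ := ((ht.eventually_lt_const hpos).and (eventually_ge_atTop 2)).exists
  have h1 := (hb σ (t * I) (by simpa using ht2)).1 hc
  have h2 := (hb σ' (t * I) (by simpa using ht2)).2 hc'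
  rw [hall _ (by simp; linarith)] at h1
  simp only [mul_im, ofReal_re, I_im, mul_one, ofReal_im, I_re, mul_zero, add_zero] at h1 h2
  have h3 := norm_sub_le (psi σ' (t * I)) (psi σ' (t * I) - 3 * LL0)
  rw [sub_sub_cancel] at h3
  linarith

lemma psi_kill (f : ℂ → ℂ) (hf : DifferentiableOn ℂ f {z | 0 < z.im})
    (h : ∀ τ : ℂ, 0 < τ.im → psi 1 τ ≠ psi ModularGroup.S τ →
      psi 1 τ ≠ psi (ModularGroup.S * ModularGroup.T) τ →
      psi ModularGroup.S τ ≠ psi (ModularGroup.S * ModularGroup.T) τ → f τ = 0) :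
    ∀ τ : ℂ, 0 < τ.im → f τ = 0 := by
  have hopen : IsOpen {z : ℂ | 0 < z.im} := isOpen_lt continuous_const Complex.continuous_im
  have hpre : IsPreconnected {z : ℂ | 0 < z.im} := (convex_halfSpace_im_gt 0).isPreconnected
  have e1 : Even ((1 : SLZ) 1 0) := by decide
  have e2 : ¬ Even (ModularGroup.S 1 0) := by decide
  have e3 : ¬ Even ((ModularGroup.S * ModularGroup.T) 1 0) := by decide
  have n1 := psi_ne_aux e1 e2
  have n2 := psi_ne_aux e1 e3
  have n3 : ¬ ∀ τ : ℂ, 0 < τ.im → psi ModularGroup.S τ = psi (ModularGroup.S * ModularGroup.T) τ := by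
    intro hall
    have h1 : ¬ ∀ τ : ℂ, 0 < τ.im → psi (ModularGroup.S * ModularGroup.S) τ = psi (ModularGroup.S * ModularGroup.T * ModularGroup.S) τ := psi_ne_aux (by decide) (by decide)
    apply h1
    intro τ hτ
    have c1 := psi_cocycle ModularGroup.S ModularGroup.S hτ
    have c2 := psi_cocycle (ModularGroup.S * ModularGroup.T) ModularGroup.S hτ
    rw [hall _ (MM_im _ hτ), c2] at c1
    have hJ := JJ_ne ModularGroup.S hτ
    have : JJ ModularGroup.S τ ^ 2 ≠ 0 := pow_ne_zero 2 hJ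
    have := mul_left_cancel₀ this (sub_left_injective c1)
    exact this.symm
  have key : ∀ g1 g2 : ℂ → ℂ, DifferentiableOn ℂ g1 {z | 0 < z.im} → DifferentiableOn ℂ g2 {z | 0 < z.im} →
      (∀ τ : ℂ, 0 < τ.im → g1 τ * g2 τ = 0) → (¬ ∀ τ : ℂ, 0 < τ.im → g2 τ = 0) → ∀ τ : ℂ, 0 < τ.im → g1 τ = 0 := by
    intro g1 g2 h1 h2 h12 hn
    rcases AnalyticOnNhd.eq_zero_or_eq_zero_of_mul_eq_zero (h1.analyticOnNhd hopen) (h2.analyticOnNhd hopen) h12 hpre with h3 | h3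
    · exact h3
    · exact absurd h3 hn
  have d1 := (psi_hol 1).sub (psi_hol ModularGroup.S)
  have d2 := (psi_hol 1).sub (psi_hol (ModularGroup.S * ModularGroup.T))
  have d3 := (psi_hol ModularGroup.S).sub (psi_hol (ModularGroup.S * ModularGroup.T))
  refine key f _ hf d1 ?_ (by simpa [sub_eq_zero] using n1)
  refine key _ _ (hf.mul d1) d2 ?_ (by simpa [sub_eq_zero] using n2)
  refine key _ _ ((hf.mul d1).mul d2) d3 ?_ (by simpa [sub_eq_zero] using n3)
  intro τ hτ
  by_cases a1 : psi 1 τ = psi ModularGroup.S τ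
  · simp [a1]
  by_cases a2 : psi 1 τ = psi (ModularGroup.S * ModularGroup.T) τ
  · simp [a2]
  by_cases a3 : psi ModularGroup.S τ = psi (ModularGroup.S * ModularGroup.T) τ
  · simp [a3]
  simp [h τ hτ a1 a2 a3]

end

section

def PP (q w : ℂ) : ℂ := ∏' n : ℕ, (1 + -(q ^ n * w))

lemma PP_summ {q : ℂ} (hq : ‖q‖ < 1) (w : ℂ) : Summable (fun n : ℕ => ‖-(q ^ n * w)‖) := by
  simp only [norm_neg, norm_mul, norm_pow]
  exact (summable_geometric_of_lt_one (norm_nonneg _) hq).mul_right _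

lemma PP_fe {q : ℂ} (hq : ‖q‖ < 1) (w : ℂ) : PP q w = (1 - w) * PP q (q * w) := by
  have h := multipliable_one_add_of_summable (PP_summ hq (q * w))
  rw [PP, tprod_eq_zero_mul', PP]
  · simp only [pow_zero, one_mul, ← sub_eq_add_neg, pow_succ, mul_assoc]
  · simpa only [pow_succ, mul_assoc] using h

lemma PP_ne {q : ℂ} (hq : ‖q‖ < 1) {w : ℂ} (h : ∀ n : ℕ, q ^ n * w ≠ 1) : PP q w ≠ 0 := by
  apply tprod_one_add_ne_zero_of_summable _ (PP_summ hq w)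
  intro n hn
  apply h n
  linear_combination -hn

lemma PP_diff {q : ℂ} (hq : ‖q‖ < 1) : Differentiable ℂ (PP q) := by
  intro w
  have ho : IsOpen (Metric.ball (0:ℂ) (‖w‖ + 1)) := Metric.isOpen_ball
  have hu : Summable (fun n : ℕ => ‖q‖ ^ n * (‖w‖ + 1)) :=
    (summable_geometric_of_lt_one (norm_nonneg _) hq).mul_right _
  have h := hu.hasProdLocallyUniformlyOn_nat_one_add (f := fun n w => -(q ^ n * w)) ho
    (Eventually.of_forall fun n x hx => by
      rw [norm_neg, norm_mul, norm_pow]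
      have : ‖x‖ < ‖w‖ + 1 := by simpa using hx
      gcongr) (fun n => by fun_prop)
  have h2 := (hasProdLocallyUniformlyOn_iff_tendstoLocallyUniformlyOn.1 h).differentiableOn
    (Eventually.of_forall fun s => by fun_prop) ho
  exact h2.differentiableAt (ho.mem_nhds (by simp))

def TH (τ z : ℂ) : ℂ := PP (cexp (2 * Real.pi * I * τ)) (cexp (2 * Real.pi * I * z)) *
  PP (cexp (2 * Real.pi * I * τ)) (cexp (2 * Real.pi * I * (τ - z)))

lemma nq {τ : ℂ} (h : 0 < τ.im) : ‖cexp (2 * Real.pi * I * τ)‖ < 1 := by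
  rw [Complex.norm_exp, Real.exp_lt_one_iff]
  simp [mul_assoc]
  positivity

lemma TH_diff {τ : ℂ} (h : 0 < τ.im) : Differentiable ℂ (TH τ) := by
  have := PP_diff (nq h)
  unfold TH
  exact (this.comp (by fun_prop)).mul (this.comp (by fun_prop))

lemma exp1 (z : ℂ) : cexp (2 * Real.pi * I * (z + 1)) = cexp (2 * Real.pi * I * z) := by
  rw [mul_add, mul_one, Complex.exp_add, Complex.exp_two_pi_mul_I, mul_one]

lemma TH_one (τ z : ℂ) : TH τ (z + 1) = TH τ z := by
  rw [TH, TH, exp1, ← exp1 (τ - (z + 1))]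
  congr 4; ring

lemma TH_tau {τ : ℂ} (h : 0 < τ.im) (z : ℂ) :
    TH τ (z + τ) = - cexp (-(2 * Real.pi * I * z)) * TH τ z := by
  have hq := nq h
  have e1 : cexp (2 * Real.pi * I * (τ - (z + τ))) = cexp (-(2 * Real.pi * I * z)) := by
    congr 1; ring
  have e2 : cexp (2 * Real.pi * I * (z + τ)) = cexp (2 * Real.pi * I * τ) * cexp (2 * Real.pi * I * z) := by
    rw [← Complex.exp_add]; congr 1; ring
  have e3 : cexp (2 * Real.pi * I * (τ - z)) = cexp (2 * Real.pi * I * τ) * cexp (-(2 * Real.pi * I * z)) := by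
    rw [← Complex.exp_add]; congr 1; ring
  have e4 : cexp (-(2 * Real.pi * I * z)) * cexp (2 * Real.pi * I * z) = 1 := by
    rw [← Complex.exp_add]; simp
  rw [TH, TH, e1, e2, e3, PP_fe hq (cexp (2 * Real.pi * I * z)), PP_fe hq (cexp (-(2 * Real.pi * I * z)))]
  linear_combination (PP (cexp (2 * Real.pi * I * τ)) (cexp (2 * Real.pi * I * τ) * cexp (2 * Real.pi * I * z)) *
    PP (cexp (2 * Real.pi * I * τ)) (cexp (2 * Real.pi * I * τ) * cexp (-(2 * Real.pi * I * z)))) * (-e4)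

lemma TH_zero {τ : ℂ} (h : 0 < τ.im) {z : ℂ} (hz : TH τ z = 0) : ∃ a b : ℤ, z = a + b * τ := by
  have hq := nq h
  have h2 : (2 * Real.pi * I : ℂ) ≠ 0 := by simp [Real.pi_ne_zero]
  rcases mul_eq_zero.1 hz with h1 | h1
  · by_contra hne
    refine PP_ne hq (fun n hn => hne ?_) h1
    rw [← Complex.exp_nat_mul, ← Complex.exp_add, Complex.exp_eq_one_iff] at hn
    obtain ⟨m, hm⟩ := hn
    refine ⟨m, -n, mul_left_cancel₀ h2 ?_⟩
    push_cast
    linear_combination hm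
  · by_contra hne
    refine PP_ne hq (fun n hn => hne ?_) h1
    rw [← Complex.exp_nat_mul, ← Complex.exp_add, Complex.exp_eq_one_iff] at hn
    obtain ⟨m, hm⟩ := hn
    refine ⟨-m, n + 1, mul_left_cancel₀ h2 ?_⟩
    push_cast
    linear_combination -hm

lemma TH_lower {τ : ℂ} (h : 0 < τ.im) : ∃ c > 0, ∀ᶠ u in 𝓝 (0:ℂ), c * ‖u‖ ≤ ‖TH τ u‖ := by
  have hq := nq h
  set q := cexp (2 * Real.pi * I * τ) with hqd
  have hqne : ∀ n : ℕ, q ^ n * q ≠ 1 := by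
    intro n hn
    have : ‖q ^ n * q‖ = 1 := by rw [hn]; simp
    rw [← pow_succ, norm_pow] at this
    have := pow_lt_one₀ (norm_nonneg _) hq (Nat.succ_ne_zero n)
    simp at this
    linarith
  have hP := PP_ne hq hqne
  have hd : deriv (TH τ) 0 = -(2 * Real.pi * I) * PP q q ^ 2 := by
    have e : TH τ = fun z => (1 - cexp (2 * Real.pi * I * z)) * (PP q (q * cexp (2 * Real.pi * I * z)) * PP q (cexp (2 * Real.pi * I * (τ - z)))) := by
      funext z
      rw [TH, PP_fe hq, mul_assoc]
    have d1 : HasDerivAt (fun z : ℂ => 1 - cexp (2 * Real.pi * I * z)) (-(2 * Real.pi * I)) 0 := by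
      have := ((((hasDerivAt_id (0:ℂ)).const_mul (2 * Real.pi * I)).cexp)).const_sub 1
      simpa using this
    have d2 : DifferentiableAt ℂ (fun z : ℂ => (PP q (q * cexp (2 * Real.pi * I * z)) * PP q (cexp (2 * Real.pi * I * (τ - z))))) 0 := by
      have hp := PP_diff hq
      apply Differentiable.differentiableAt
      exact (hp.comp (by fun_prop)).mul (hp.comp (by fun_prop))
    rw [e]
    refine (d1.mul d2.hasDerivAt).deriv.trans ?_
    simp [← hqd]
    ring
  have hT0 : TH τ 0 = 0 := by
    rw [TH, PP_fe hq]; simp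
  have hne : deriv (TH τ) 0 ≠ 0 := by
    rw [hd]
    simp [Real.pi_ne_zero, hP]
  have hder := (TH_diff h 0).hasDerivAt
  have hs := hder.tendsto_slope
  have hs2 := hs.norm.eventually (lt_mem_nhds (show ‖deriv (TH τ) 0‖ / 2 < ‖deriv (TH τ) 0‖ by
    have := norm_pos_iff.2 hne; linarith))
  refine ⟨‖deriv (TH τ) 0‖ / 2, by have := norm_pos_iff.2 hne; linarith, ?_⟩
  rw [eventually_nhdsWithin_iff] at hs2
  filter_upwards [hs2] with u hu
  by_cases hu0 : u = 0
  · simp [hu0, hT0]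
  · have := hu hu0
    rw [slope_def_field, hT0, sub_zero, sub_zero, norm_div, lt_div_iff₀ (norm_pos_iff.2 hu0)] at this
    exact this.le

end

section

lemma lat_bdd {τ : ℂ} (h : 0 < τ.im) (N : ℂ → ℝ) (h1 : ∀ z, N (z + 2) = N z) (h2 : ∀ z, N (z + 2 * τ) = N z)
    (hl : ∀ z, ∃ C, ∀ᶠ w in 𝓝 z, N w ≤ C) : ∃ C, ∀ z, N z ≤ C := by
  set K : Set ℂ := (fun p : ℝ × ℝ => (p.1 : ℂ) + p.2 * τ) '' (Set.Icc 0 2 ×ˢ Set.Icc 0 2) with hK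
  have hKc : IsCompact K := (isCompact_Icc.prod isCompact_Icc).image (by fun_prop)
  have hb : ∃ C, ∀ z ∈ K, N z ≤ C := by
    refine hKc.induction_on (p := fun s => ∃ C, ∀ z ∈ s, N z ≤ C) ⟨0, by simp⟩ ?_ ?_ ?_
    · rintro s t hst ⟨C, hC⟩
      exact ⟨C, fun z hz => hC z (hst hz)⟩
    · rintro s t ⟨C, hC⟩ ⟨D, hD⟩
      refine ⟨max C D, fun z hz => ?_⟩
      rcases hz with hz | hz
      · exact (hC z hz).trans (le_max_left _ _)
      · exact (hD z hz).trans (le_max_right _ _)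
    · intro z _
      obtain ⟨C, hC⟩ := hl z
      exact ⟨_, mem_nhdsWithin_of_mem_nhds hC, C, fun w hw => hw⟩
  obtain ⟨C, hC⟩ := hb
  have p1 : ∀ n : ℤ, ∀ z, N (z + 2 * n) = N z := fun n z => by
    have := Function.Periodic.int_mul (f := N) h1 n z
    rwa [mul_comm] at this
  have p2 : ∀ n : ℤ, ∀ z, N (z + 2 * n * τ) = N z := fun n z => by
    have := Function.Periodic.int_mul (f := N) h2 n z
    rwa [← mul_assoc, mul_comm (n:ℂ)] at this
  refine ⟨C, fun z => ?_⟩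
  set y := z.im / τ.im
  set x := z.re - y * τ.re
  have hz : z = x + y * τ := by
    apply Complex.ext
    · simp [x]
    · simp [y]; field_simp
  have hx := Int.floor_le (x / 2)
  have hx' := Int.lt_floor_add_one (x / 2)
  have hy := Int.floor_le (y / 2)
  have hy' := Int.lt_floor_add_one (y / 2)
  set n := ⌊x / 2⌋
  set m := ⌊y / 2⌋
  have e : z = (((x - 2 * n : ℝ) : ℂ) + ((y - 2 * m : ℝ) : ℂ) * τ) + 2 * m * τ + 2 * n := by
    rw [hz]; push_cast; ring
  rw [e, p1, p2]
  apply hC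
  refine ⟨(x - 2 * n, y - 2 * m), ⟨⟨?_, ?_⟩, ⟨?_, ?_⟩⟩, rfl⟩ <;> simp only <;> linarith

lemma theta_main {ι : Type*} {τ : ℂ} (h : 0 < τ.im) (r : ℤ) (m : ℕ) (φ : ι → ℂ → ℂ)
    (A : ι → ℂ → ℝ) (hA : ∀ γ z, A γ z = ‖φ γ z‖ * Real.exp (-(Real.pi * r * z.im ^ 2 / τ.im)))
    (hd : ∀ γ, Differentiable ℂ (φ γ))
    (h1 : ∀ γ, ∃ γ', ∀ z, A γ' z = A γ (z + 1)) (h2 : ∀ γ, ∃ γ', ∀ z, A γ' z = A γ (z + τ))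
    (h3 : ∀ γ z, A γ (z + 2) = A γ z) (h4 : ∀ γ z, A γ (z + 2 * τ) = A γ z)
    (h0 : ∀ γ, ∃ C, ∀ᶠ u in 𝓝 (0:ℂ), ‖φ γ u‖ ≤ C * ‖u‖ ^ m) :
    (r < m → ∀ γ z, φ γ z = 0) ∧ (r = 0 → ∀ γ z, φ γ z = φ γ 0) := by
  have hAc : ∀ γ, Continuous (A γ) := by
    intro γ
    rw [show A γ = _ from funext (hA γ)]
    have := (hd γ).continuous
    have := Complex.continuous_im
    fun_prop
  constructor
  swap
  · intro hr γ z
    obtain ⟨C, hC⟩ := lat_bdd h (A γ) (h3 γ) (h4 γ) (fun z =>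
      ⟨A γ z + 1, (hAc γ).continuousAt.eventually (eventually_le_nhds (by linarith))⟩)
    apply (hd γ).apply_eq_apply_of_bounded
    refine isBounded_iff_forall_norm_le.2 ⟨C, ?_⟩
    rintro _ ⟨w, rfl⟩
    have := hC w
    rw [hA, hr] at this
    simpa using this
  intro hrm γ z
  -- the theta weight
  set B : ℂ → ℝ := fun z => ‖TH τ z‖ * Real.exp (-(Real.pi * (z.im ^ 2 / τ.im - z.im))) with hB
  have hTc := (TH_diff h).continuous
  have hBc : Continuous B := by
    have := Complex.continuous_im
    rw [hB]; fun_prop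
  have B1 : ∀ z, B (z + 1) = B z := by
    intro z; simp only [hB, TH_one]; simp
  have Bt : ∀ z, B (z + τ) = B z := by
    intro z
    simp only [hB, TH_tau h, norm_mul, norm_neg, Complex.norm_exp]
    rw [mul_comm (Real.exp _) ‖_‖, mul_assoc, ← Real.exp_add]
    congr 2
    simp [mul_assoc]
    field_simp
    ring
  have Bl : ∀ a b : ℤ, ∀ z, B (z + (a + b * τ)) = B z := by
    have p1 : ∀ n : ℤ, ∀ z, B (z + n) = B z := fun n z => by
      have := Function.Periodic.int_mul (f := B) B1 n z
      rwa [mul_one] at this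
    have p2 : ∀ n : ℤ, ∀ z, B (z + n * τ) = B z := fun n z => Function.Periodic.int_mul (f := B) Bt n z
    intro a b z
    rw [← add_assoc, p2, p1]
  obtain ⟨c, hc, hlow⟩ := TH_lower h
  have hexpc : Continuous fun z : ℂ => Real.exp (-(Real.pi * (z.im ^ 2 / τ.im - z.im))) := by
    have := Complex.continuous_im
    fun_prop
  have Blow : ∀ᶠ u in 𝓝 (0:ℂ), c / 2 * ‖u‖ ≤ B u := by
    have h5 : ∀ᶠ u in 𝓝 (0:ℂ), 1 / 2 ≤ Real.exp (-(Real.pi * (u.im ^ 2 / τ.im - u.im))) :=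
      hexpc.continuousAt.eventually (eventually_ge_nhds (by norm_num))
    filter_upwards [hlow, h5] with u hu hu5
    simp only [hB]
    calc c / 2 * ‖u‖ = (c * ‖u‖) * (1 / 2) := by ring
      _ ≤ _ := by gcongr
  -- vanishing at all lattice points
  set Good : ℂ → Prop := fun l => ∀ γ, ∃ C, ∀ᶠ u in 𝓝 (0:ℂ), A γ (u + l) ≤ C * ‖u‖ ^ m with hGood
  have g0 : Good 0 := by
    intro γ
    obtain ⟨C, hC⟩ := h0 γ
    have hexpc : Continuous fun z : ℂ => Real.exp (-(Real.pi * r * z.im ^ 2 / τ.im)) := by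
      have := Complex.continuous_im
      fun_prop
    have h5 : ∀ᶠ u in 𝓝 (0:ℂ), Real.exp (-(Real.pi * r * u.im ^ 2 / τ.im)) ≤ 2 :=
      hexpc.continuousAt.eventually (eventually_le_nhds (by norm_num))
    refine ⟨C * 2, ?_⟩
    filter_upwards [hC, h5] with u hu hu5
    rw [add_zero, hA]
    calc ‖φ γ u‖ * Real.exp (-(Real.pi * r * u.im ^ 2 / τ.im)) ≤ (C * ‖u‖ ^ m) * 2 := by gcongr; exact (norm_nonneg _).trans hu
      _ = _ := by ring
  have s1 : ∀ l, Good l → Good (l + 1) := by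
    intro l hl γ
    obtain ⟨γ', hγ⟩ := h1 γ
    obtain ⟨C, hC⟩ := hl γ'
    refine ⟨C, hC.mono fun u hu => ?_⟩
    rwa [hγ, add_assoc] at hu
  have s2 : ∀ l, Good l → Good (l + τ) := by
    intro l hl γ
    obtain ⟨γ', hγ⟩ := h2 γ
    obtain ⟨C, hC⟩ := hl γ'
    refine ⟨C, hC.mono fun u hu => ?_⟩
    rwa [hγ, add_assoc] at hu
  have s3 : ∀ l, Good (l + 2) → Good l := by
    intro l hl γ
    obtain ⟨C, hC⟩ := hl γ
    refine ⟨C, hC.mono fun u hu => ?_⟩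
    rwa [← add_assoc, h3] at hu
  have s4 : ∀ l, Good (l + 2 * τ) → Good l := by
    intro l hl γ
    obtain ⟨C, hC⟩ := hl γ
    refine ⟨C, hC.mono fun u hu => ?_⟩
    rwa [← add_assoc, h4] at hu
  have gl : ∀ a b : ℤ, Good (a + b * τ) := by
    have ga : ∀ a : ℤ, Good a := by
      intro n
      induction n using Int.induction_on with
      | zero => simpa using g0
      | succ n ih => have := s1 _ ih; push_cast; exact this
      | pred n ih =>
        apply s3
        have := s1 _ ih
        convert this using 1; push_cast; ring
    intro a n
    induction n using Int.induction_on with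
    | zero => simpa using ga a
    | succ n ih => have := s2 _ ih; convert this using 1; push_cast; ring
    | pred n ih =>
      apply s4
      have := s2 _ ih
      convert this using 1; push_cast; ring
  -- isolated zeros
  have hiso : ∀ z0, ∀ᶠ w in 𝓝[≠] z0, TH τ w ≠ 0 := by
    intro z0
    by_cases hz0 : TH τ z0 = 0
    · obtain ⟨a, b, hab⟩ := TH_zero h hz0
      have ht : Tendsto (fun w => w - z0) (𝓝 z0) (𝓝 0) := by
        have : Continuous fun w : ℂ => w - z0 := by fun_prop
        simpa using this.tendsto z0
      rw [eventually_nhdsWithin_iff]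
      filter_upwards [ht.eventually Blow] with w hw hne h0
      have : B w = B (w - z0) := by rw [← Bl a b (w - z0), ← hab]; simp
      have hBw : B w = 0 := by simp [hB, h0]
      rw [← this, hBw] at hw
      have : 0 < ‖w - z0‖ := norm_pos_iff.2 (sub_ne_zero.2 hne)
      have : 0 < c / 2 * ‖w - z0‖ := by positivity
      linarith
    · exact (hTc.continuousAt.eventually_ne hz0).filter_mono nhdsWithin_le_nhds
  -- the bounded quotient
  have hN : ∃ C, ∀ z, A γ z / B z ^ m ≤ C := by
    apply lat_bdd h
    · intro z
      have := Bl 2 0 z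
      simp only [Int.cast_ofNat, Int.cast_zero, zero_mul, add_zero] at this
      rw [h3, this]
    · intro z
      have := Bl 0 2 z
      simp only [Int.cast_ofNat, Int.cast_zero, zero_add] at this
      rw [h4, this]
    · intro z0
      by_cases hz0 : TH τ z0 = 0
      · obtain ⟨a, b, hab⟩ := TH_zero h hz0
        obtain ⟨C, hC⟩ := gl a b γ
        have ht : Tendsto (fun w => w - z0) (𝓝 z0) (𝓝 0) := by
          have : Continuous fun w : ℂ => w - z0 := by fun_prop
          simpa using this.tendsto z0
        refine ⟨max (C / (c / 2) ^ m) (A γ z0 / B z0 ^ m), ?_⟩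
        filter_upwards [ht.eventually Blow, ht.eventually hC] with w hw hw2
        by_cases hwz : w = z0
        · rw [hwz]; exact le_max_right _ _
        refine le_trans ?_ (le_max_left _ _)
        have : B w = B (w - z0) := by rw [← Bl a b (w - z0), ← hab]; simp
        rw [← hab, sub_add_cancel] at hw2
        rw [← this] at hw
        have hpos : 0 < ‖w - z0‖ := norm_pos_iff.2 (sub_ne_zero.2 hwz)
        have hBpos : 0 < B w := lt_of_lt_of_le (by positivity) hw
        have hA0 : 0 ≤ A γ w := by rw [hA]; positivity
        have hC0 : 0 ≤ C := nonneg_of_mul_nonneg_left (hA0.trans hw2) (by positivity)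
        rw [div_le_div_iff₀ (by positivity) (by positivity)]
        calc A γ w * (c / 2) ^ m ≤ (C * ‖w - z0‖ ^ m) * (c / 2) ^ m := by gcongr
          _ = C * (c / 2 * ‖w - z0‖) ^ m := by rw [mul_pow]; ring
          _ ≤ C * B w ^ m := by gcongr
      · have hBz : B z0 ≠ 0 := by simp [hB, hz0, Real.exp_ne_zero]
        have : ContinuousAt (fun w => A γ w / B w ^ m) z0 :=
          (hAc γ).continuousAt.div (hBc.continuousAt.pow m) (pow_ne_zero _ hBz)
        exact ⟨_, this.eventually (eventually_le_nhds (lt_add_one _))⟩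
  obtain ⟨C, hC⟩ := hN
  set E : ℂ → ℝ := fun z => Real.exp (-(Real.pi * ((m - r) * z.im ^ 2 / τ.im - m * z.im))) with hE
  have hEc : Continuous E := by
    have := Complex.continuous_im
    rw [hE]; fun_prop
  have hquo : ∀ z, ‖φ γ z / TH τ z ^ m‖ ≤ C * E z := by
    intro z
    have h6 := hC z
    have : A γ z / B z ^ m = ‖φ γ z / TH τ z ^ m‖ / E z := by
      rw [hA, hB, hE]
      simp only
      rw [mul_pow, ← Real.exp_nat_mul, norm_div, norm_pow, mul_div_mul_comm, ← Real.exp_sub, div_eq_mul_inv _ (Real.exp _), ← Real.exp_neg]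
      congr 2
      field_simp; ring
    rw [this, div_le_iff₀ (Real.exp_pos _)] at h6
    exact h6
  have hC0 : 0 ≤ C := by
    have := (norm_nonneg _).trans (hquo 0)
    simpa [hE] using this
  set H : ℂ → ℂ := fun z => limUnder (𝓝[≠] z) (fun w => φ γ w / TH τ w ^ m) with hH
  have hHeq : ∀ z, TH τ z ≠ 0 → H z = φ γ z / TH τ z ^ m := by
    intro z hz
    apply Tendsto.limUnder_eq
    have : ContinuousAt (fun w => φ γ w / TH τ w ^ m) z :=
      (hd γ).continuous.continuousAt.div (hTc.continuousAt.pow m) (pow_ne_zero _ hz)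
    exact this.tendsto.mono_left nhdsWithin_le_nhds
  have hHd : Differentiable ℂ H := by
    intro z0
    obtain ⟨s, hs, hsp⟩ := (eventually_nhdsWithin_iff.1 (hiso z0)).exists_mem
    have hs2 : {w | E w ≤ E z0 + 1} ∈ 𝓝 z0 := hEc.continuousAt.eventually (eventually_le_nhds (lt_add_one _))
    have key := Complex.differentiableOn_update_limUnder_of_bddAbove (f := fun w => φ γ w / TH τ w ^ m) (c := z0) (inter_mem hs hs2)
      (fun w hw => ((hd γ w).div ((TH_diff h w).pow m) (pow_ne_zero _ (hsp w hw.1.1 hw.2))).differentiableWithinAt)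
      ⟨C * (E z0 + 1), by
        rintro _ ⟨w, hw, rfl⟩
        exact (hquo w).trans (mul_le_mul_of_nonneg_left hw.1.2 hC0)⟩
    refine (key.differentiableAt (inter_mem hs hs2)).congr_of_eventuallyEq ?_
    filter_upwards [hs] with w hw
    by_cases hwz : w = z0
    · rw [hwz]; simp [hH]
    · rw [Function.update_of_ne hwz, hHeq _ (hsp w hw hwz)]
  have hHb : ∀ z, ‖H z‖ ≤ C * E z := by
    intro z
    have t1 : Tendsto (fun w => ‖H w‖) (𝓝[≠] z) (𝓝 ‖H z‖) := hHd.continuous.norm.continuousAt.tendsto.mono_left nhdsWithin_le_nhds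
    have t2 : Tendsto (fun w => C * E w) (𝓝[≠] z) (𝓝 (C * E z)) :=
      (hEc.const_mul C).continuousAt.tendsto.mono_left nhdsWithin_le_nhds
    refine le_of_tendsto_of_tendsto t1 t2 ?_
    filter_upwards [hiso z] with w hw
    rw [hHeq w hw]; exact hquo w
  have hmr : (0:ℝ) < m - r := by
    have : (r:ℝ) < m := by exact_mod_cast hrm
    linarith
  -- decay
  have hlim : Tendsto (fun t : ℝ => C * E (t * I)) atTop (𝓝 (C * 0)) := by
    apply Tendsto.const_mul
    simp only [hE]
    apply Real.tendsto_exp_neg_atTop_nhds_zero.comp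
    apply Tendsto.const_mul_atTop Real.pi_pos
    have : ∀ t : ℝ, (m - r) * ((t:ℂ) * I).im ^ 2 / τ.im - m * ((t:ℂ) * I).im = t * ((m - r) / τ.im * t - m) := by
      intro t; simp; ring
    simp only [this]
    apply tendsto_id.atTop_mul_atTop₀
    apply tendsto_atTop_add_const_right
    exact tendsto_id.const_mul_atTop (by positivity)
  have hEb : ∃ D, ∀ z, E z ≤ D := by
    refine ⟨Real.exp (Real.pi * ((m:ℝ) ^ 2 * τ.im / (m - r))), fun z => ?_⟩
    apply Real.exp_le_exp.2
    rw [← mul_neg]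
    apply mul_le_mul_of_nonneg_left _ Real.pi_pos.le
    rw [neg_sub, sub_le_iff_le_add, div_add_div _ _ hmr.ne' h.ne', le_div_iff₀ (by positivity)]
    nlinarith [sq_nonneg ((m - r) * z.im - m * τ.im), sq_nonneg ((m - r) * z.im), sq_nonneg (m * τ.im)]
  obtain ⟨D, hD⟩ := hEb
  have hconst : ∀ z w, H z = H w := by
    intro z w
    apply hHd.apply_eq_apply_of_bounded
    refine isBounded_iff_forall_norm_le.2 ⟨C * D, ?_⟩
    rintro _ ⟨w, rfl⟩
    exact (hHb w).trans (mul_le_mul_of_nonneg_left (hD w) hC0)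
  have hH0 : ∀ z, H z = 0 := by
    intro z
    rw [← norm_le_zero_iff]
    rw [mul_zero] at hlim
    refine ge_of_tendsto' hlim fun t => ?_
    rw [hconst z (t * I)]; exact hHb _
  have t1 : Tendsto (fun w => φ γ w) (𝓝[≠] z) (𝓝 (φ γ z)) := (hd γ).continuous.continuousAt.tendsto.mono_left nhdsWithin_le_nhds
  refine tendsto_nhds_unique (t1.congr' ?_) tendsto_const_nhds
  filter_upwards [hiso z] with w hw
  have := hHeq w hw
  rw [hH0, eq_comm, div_eq_zero_iff] at this
  exact this.resolve_right (pow_ne_zero _ hw)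

end

section

lemma param_hol (F : ℂ → ℝ → ℂ) (z0 : ℂ) {R M : ℝ} (hR : 0 < R)
    (hc : ∀ z ∈ Metric.ball z0 R, Continuous (F z))
    (hd : ∀ x, DifferentiableOn ℂ (fun z => F z x) (Metric.ball z0 R))
    (hM : ∀ z ∈ Metric.ball z0 R, ∀ x ∈ Set.Icc (0:ℝ) 2, ‖F z x‖ ≤ M) :
    DifferentiableAt ℂ (fun z => ∫ x in (0:ℝ)..2, F z x) z0 := by
  have hbm : Metric.ball z0 (R / 2) ⊆ Metric.ball z0 R := Metric.ball_subset_ball (by linarith)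
  have hdz : ∀ z ∈ Metric.ball z0 R, ∀ x, HasDerivAt (fun z => F z x) (deriv (fun z => F z x) z) z := fun z hz x =>
    ((hd x).differentiableAt (Metric.isOpen_ball.mem_nhds hz)).hasDerivAt
  have key := intervalIntegral.hasDerivAt_integral_of_dominated_loc_of_deriv_le (μ := MeasureTheory.volume) (a := 0) (b := 2)
    (F := F) (F' := fun z x => deriv (fun z => F z x) z) (x₀ := z0) (s := Metric.ball z0 (R / 2)) (bound := fun _ => M / (R / 4))
    (Metric.ball_mem_nhds _ (by linarith))
    (by
      filter_upwards [Metric.ball_mem_nhds z0 hR] with z hz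
      exact (hc z hz).aestronglyMeasurable)
    ((hc z0 (Metric.mem_ball_self hR)).intervalIntegrable _ _) ?_ ?_ (by simp) ?_
  · exact key.2.differentiableAt
  · -- measurability
    have hseq : Tendsto (fun n : ℕ => z0 + ((1 / ((n:ℝ) + 1) : ℝ) : ℂ)) atTop (𝓝[≠] z0) := by
      rw [tendsto_nhdsWithin_iff]
      constructor
      · have := (Complex.continuous_ofReal.tendsto 0).comp (tendsto_one_div_add_atTop_nhds_zero_nat (𝕜 := ℝ))
        have := this.const_add z0
        simpa using this
      · refine Eventually.of_forall fun n => ?_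
        simp only [Set.mem_compl_iff, Set.mem_singleton_iff, add_eq_left, Complex.ofReal_eq_zero]
        positivity
    have hev : ∀ᶠ n : ℕ in atTop, z0 + ((1 / ((n:ℝ) + 1) : ℝ) : ℂ) ∈ Metric.ball z0 R :=
      (hseq.mono_right nhdsWithin_le_nhds).eventually (Metric.ball_mem_nhds z0 hR)
    obtain ⟨N, hN⟩ := eventually_atTop.1 hev
    refine aestronglyMeasurable_of_tendsto_ae (u := atTop)
      (f := fun (n : ℕ) (x : ℝ) => slope (fun z => F z x) z0 (z0 + ((1 / (((n + N : ℕ):ℝ) + 1) : ℝ) : ℂ))) ?_ ?_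
    · intro n
      apply Continuous.aestronglyMeasurable
      have := hc _ (hN (n + N) (by omega))
      have := hc z0 (Metric.mem_ball_self hR)
      simp only [slope_def_field]
      fun_prop
    · refine Eventually.of_forall fun x => ?_
      have h1 := (hdz z0 (Metric.mem_ball_self hR) x).tendsto_slope
      have h2 := h1.comp hseq
      exact h2.comp (tendsto_add_atTop_nat N)
  · refine Eventually.of_forall fun x hx z hz => ?_
    have hx' : x ∈ Set.Icc (0:ℝ) 2 := by
      rw [Set.uIoc_of_le (by norm_num)] at hx
      exact ⟨hx.1.le, hx.2⟩
    have hsub : Metric.closedBall z (R / 4) ⊆ Metric.ball z0 R := by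
      intro w hw
      have h1 : dist w z ≤ R / 4 := hw
      have h2 : dist z z0 < R / 2 := hz
      have := dist_triangle w z z0
      show dist w z0 < R
      linarith
    apply Complex.norm_deriv_le_of_forall_mem_sphere_norm_le (by linarith)
    · exact ((hd x).mono hsub).diffContOnCl_ball (le_refl _)
    · intro w hw
      exact hM w (hsub (Metric.sphere_subset_closedBall hw)) x hx'
  · exact Eventually.of_forall fun x hx z hz => hdz z (hbm hz) x

/-- Fourier coefficient on a horizontal line, period 2. -/
def FC (r : ℤ) (Y : ℝ) (f : ℂ → ℂ) : ℂ :=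
  (1 / 2) * ∫ x in (0:ℝ)..2, f (x + Y * I) * cexp (-(Real.pi * I * r * (x + Y * I)))

lemma exp_per (r : ℤ) (w : ℂ) : cexp (-(Real.pi * I * r * (w + 2))) = cexp (-(Real.pi * I * r * w)) := by
  have : -(Real.pi * I * r * (w + 2)) = -(Real.pi * I * r * w) + ((-r : ℤ) : ℂ) * (2 * Real.pi * I) := by
    push_cast; ring
  rw [this, Complex.exp_add, Complex.exp_int_mul_two_pi_mul_I, mul_one]

/-- periodic and holomorphic above `Y0` -/
def PH (Y0 : ℝ) (f : ℂ → ℂ) : Prop :=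
  DifferentiableOn ℂ f {w | Y0 < w.im} ∧ ∀ w : ℂ, Y0 < w.im → f (w + 2) = f w

lemma PH.cont {Y0 : ℝ} {f : ℂ → ℂ} (h : PH Y0 f) {Y : ℝ} (hY : Y0 < Y) : Continuous (fun x : ℝ => f (x + Y * I)) := by
  refine h.1.continuousOn.comp_continuous (by fun_prop) fun x => ?_
  simpa using hY

lemma FC_indep {Y0 : ℝ} {f : ℂ → ℂ} (h : PH Y0 f) (r : ℤ) {Y Y' : ℝ} (hY : Y0 < Y) (hY' : Y0 < Y') :
    FC r Y f = FC r Y' f := by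
  set g : ℂ → ℂ := fun w => f w * cexp (-(Real.pi * I * r * w)) with hg
  have hgd : DifferentiableOn ℂ g {w | Y0 < w.im} := h.1.mul (by fun_prop)
  have := Complex.integral_boundary_rect_eq_zero_of_differentiableOn g (Y * I) (2 + Y' * I) (hgd.mono (by
    intro w hw
    have h2 := hw.2
    simp only [mul_im, ofReal_re, I_im, mul_one, ofReal_im, I_re, mul_zero, add_zero, add_im, Set.mem_preimage] at h2
    rw [Set.mem_uIcc] at h2
    show Y0 < w.im
    norm_num at h2
    rcases h2 with h2 | h2 <;> linarith [h2.1]))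
  have hv : (∫ y in Y..Y', g (2 + y * I)) = ∫ y in Y..Y', g (0 + y * I) := by
    apply intervalIntegral.integral_congr
    intro y hy
    have hy' : Y0 < y := by
      rw [Set.mem_uIcc] at hy
      rcases hy with hy | hy <;> linarith [hy.1]
    simp only [hg]
    rw [show (2:ℂ) + y * I = (0 + y * I) + 2 by ring, h.2 _ (by simpa using hy'), exp_per]
  simp at this
  simp only [zero_add] at hv
  rw [hv] at this
  have h3 : (∫ x in (0:ℝ)..2, g (x + Y * I)) = ∫ x in (0:ℝ)..2, g (x + Y' * I) := by
    linear_combination this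
  rw [FC, FC]
  simp only [hg] at h3
  rw [h3]

lemma FC_shift {Y0 : ℝ} {f : ℂ → ℂ} (h : PH Y0 f) (r : ℤ) (c : ℂ) {Y : ℝ} (hY : Y0 < Y + c.im) :
    FC r Y (fun w => f (w + c)) = cexp (Real.pi * I * r * c) * FC r (Y + c.im) f := by
  set g : ℝ → ℂ := fun x => f (x + (Y + c.im : ℝ) * I) * cexp (-(Real.pi * I * r * (x + (Y + c.im : ℝ) * I))) with hg
  have hp : Function.Periodic g 2 := by
    intro x
    simp only [hg]
    rw [show ((x + 2 : ℝ) : ℂ) + (Y + c.im : ℝ) * I = (x + (Y + c.im : ℝ) * I) + 2 by push_cast; ring, h.2 _ (by simpa using hY), exp_per]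
  have h1 : ∀ x : ℝ, f ((x + Y * I) + c) * cexp (-(Real.pi * I * r * (x + Y * I))) = cexp (Real.pi * I * r * c) * g (x + c.re) := by
    intro x
    have e : ((x + c.re : ℝ) : ℂ) + (Y + c.im : ℝ) * I = (x + Y * I) + c := by
      push_cast
      linear_combination (Complex.re_add_im c)
    simp only [hg, e]
    rw [mul_left_comm, ← Complex.exp_add]
    congr 2; ring
  have h2 : (∫ x in (0:ℝ)..2, g (x + c.re)) = ∫ x in (0:ℝ)..2, g x := by
    rw [intervalIntegral.integral_comp_add_right (fun x => g x)]
    have := hp.intervalIntegral_add_eq (0 + c.re) 0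
    rw [zero_add (2:ℝ)] at this
    rw [← this]; congr 1; ring
  rw [FC, FC]
  simp only [h1]
  rw [intervalIntegral.integral_const_mul, h2]
  ring

lemma FC_norm {f : ℂ → ℂ} (r : ℤ) {Y M : ℝ} (hM : ∀ x ∈ Set.Icc (0:ℝ) 2, ‖f (x + Y * I)‖ ≤ M) :
    ‖FC r Y f‖ ≤ M * Real.exp (Real.pi * r * Y) := by
  have := intervalIntegral.norm_integral_le_of_norm_le_const (a := (0:ℝ)) (b := 2)
    (f := fun x : ℝ => f (x + Y * I) * cexp (-(Real.pi * I * r * (x + Y * I)))) (C := M * Real.exp (Real.pi * r * Y)) (by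
      intro x hx
      rw [Set.uIoc_of_le (by norm_num)] at hx
      rw [norm_mul, Complex.norm_exp]
      have e : (-(Real.pi * I * r * (x + Y * I))).re = Real.pi * r * Y := by
        simp
      rw [e]
      exact mul_le_mul_of_nonneg_right (hM x ⟨hx.1.le, hx.2⟩) (Real.exp_pos _).le)
  rw [FC, norm_mul]
  norm_num at this ⊢
  linarith

lemma FC_bound {Y0 : ℝ} {f : ℂ → ℂ} (h : PH Y0 f) {Y1 M : ℝ} (hY : Y0 < Y1)
    (hM : ∀ x ∈ Set.Icc (0:ℝ) 2, ‖f (x + Y1 * I)‖ ≤ M) (v : ℤ) (hv : ∀ r < v, FC r Y1 f = 0) :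
    ∀ τ : ℂ, Y1 + 1 ≤ τ.im → ‖f τ‖ ≤ 2 * M * Real.exp (-(Real.pi * v * (τ.im - Y1))) := by
  intro τ hτ
  haveI : Fact (0 < (2:ℝ)) := ⟨by norm_num⟩
  set Y := τ.im with hYd
  have hM0 : 0 ≤ M := (norm_nonneg _).trans (hM 0 (by simp))
  have hYY : Y0 < Y := by linarith
  have hper : Function.Periodic (fun x : ℝ => f (x + Y * I)) 2 := by
    intro x
    simp only
    rw [show ((x + 2 : ℝ) : ℂ) + Y * I = (x + Y * I) + 2 by push_cast; ring, h.2 _ (by simpa using hYY)]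
  have hc := h.cont hYY
  set F : C(AddCircle (2:ℝ), ℂ) := ⟨hper.lift, hc.quotient_lift _⟩ with hF
  have hFx : ∀ x : ℝ, F (x : AddCircle (2:ℝ)) = f (x + Y * I) := fun x => rfl
  have hcoef : ∀ n : ℤ, fourierCoeff F n = FC n Y f * cexp (-(Real.pi * n * Y)) := by
    intro n
    rw [fourierCoeff_eq_intervalIntegral _ n 0, FC, mul_assoc, ← intervalIntegral.integral_mul_const, zero_add]
    rw [Complex.real_smul]
    congr 1
    · norm_num
    · apply intervalIntegral.integral_congr
      intro x _
      simp only
      rw [hFx, fourier_coe_apply, smul_eq_mul, mul_comm, mul_assoc (f _), ← Complex.exp_add]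
      congr 2
      push_cast
      linear_combination ((Real.pi * n * Y) : ℂ) * I_sq
  set q := Real.exp (-(Real.pi * (Y - Y1))) with hq
  have hq0 : 0 < q := Real.exp_pos _
  have hq2 : q ≤ 1 / 2 := by
    have h1 : q ≤ Real.exp (-1) := Real.exp_le_exp.2 (by nlinarith [Real.pi_gt_three])
    have h2 : Real.exp (-1) < 1 / 2 := by
      rw [Real.exp_neg, inv_lt_comm₀ (Real.exp_pos _) (by norm_num)]
      have := Real.exp_one_gt_d9
      norm_num; linarith
    linarith
  have hcn : ∀ n : ℤ, ‖fourierCoeff F n‖ ≤ M * Real.exp (-(Real.pi * n * (Y - Y1))) := by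
    intro n
    rw [hcoef, norm_mul, FC_indep h n hYY hY, Complex.norm_exp]
    have e : (-(Real.pi * n * Y) : ℂ).re = -(Real.pi * n * Y) := by
      rw [show (-(Real.pi * n * Y) : ℂ) = ((-(Real.pi * n * Y) : ℝ) : ℂ) by push_cast; ring, Complex.ofReal_re]
    rw [e]
    calc _ ≤ (M * Real.exp (Real.pi * n * Y1)) * Real.exp (-(Real.pi * n * Y)) := by
            gcongr; exact FC_norm n hM
      _ = _ := by rw [mul_assoc, ← Real.exp_add]; congr 2; ring
  have hz : ∀ n : ℤ, n < v → fourierCoeff F n = 0 := by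
    intro n hn
    rw [hcoef, FC_indep h n hYY hY, hv n hn, zero_mul]
  set ι : ℕ → ℤ := fun m => v + m with hι
  have hinj : Function.Injective ι := fun a b hab => by simpa [hι] using hab
  have hoff : ∀ n ∉ Set.range ι, fourierCoeff F n = 0 := by
    intro n hn
    apply hz
    by_contra hlt
    exact hn ⟨(n - v).toNat, by simp [hι]; omega⟩
  have hle : ∀ m : ℕ, ‖fourierCoeff F (ι m)‖ ≤ M * Real.exp (-(Real.pi * v * (Y - Y1))) * q ^ m := by
    intro m
    refine (hcn _).trans (le_of_eq ?_)
    rw [hq, ← Real.exp_nat_mul, mul_assoc M, ← Real.exp_add]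
    congr 2
    simp only [hι]; push_cast; ring
  have hgeo : Summable fun m : ℕ => M * Real.exp (-(Real.pi * v * (Y - Y1))) * q ^ m :=
    (summable_geometric_of_lt_one hq0.le (by linarith)).mul_left _
  have hs1 : Summable fun m => fourierCoeff F (ι m) := Summable.of_norm_bounded hgeo hle
  have hs : Summable (fourierCoeff F) := (hinj.summable_iff hoff).1 hs1
  have hsum := has_pointwise_sum_fourier_series_of_summable hs (τ.re : AddCircle (2:ℝ))
  have hsum2 : HasSum (fun m => fourierCoeff F (ι m) • fourier (ι m) (τ.re : AddCircle (2:ℝ))) (F (τ.re : AddCircle (2:ℝ))) := by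
    refine (hinj.hasSum_iff ?_).2 hsum
    intro n hn
    rw [hoff n hn, zero_smul]
  have hb := hsum2.norm_le_of_bounded (hgeo.hasSum) (fun m => by
    rw [norm_smul]
    have h1 : ‖fourier (ι m) (τ.re : AddCircle (2:ℝ))‖ = 1 := Circle.norm_coe _
    rw [h1, mul_one]; exact hle m)
  rw [hFx, hYd, Complex.re_add_im, tsum_mul_left, tsum_geometric_of_lt_one hq0.le (by linarith)] at hb
  refine hb.trans ?_
  have h3 : (1 - q)⁻¹ ≤ 2 := by
    rw [inv_le_comm₀ (by linarith) (by norm_num)]; linarith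
  calc _ ≤ M * Real.exp (-(Real.pi * v * (Y - Y1))) * 2 := by gcongr
    _ = _ := by ring

end

section

def Om : Set (ℂ × ℂ × ℂ) := {p | 0 < p.1.im ∧ p.2.1.im ^ 2 < p.1.im * p.2.2.im}

/-- The abstract family of slash translates of a cusp form. -/
structure Fam (j : ℕ) (k : ℤ) {Γ : Type} (G : Γ → ℕ → ℂ → ℂ → ℂ → ℂ) (act : Γ → SLZ → Γ) : Prop where
  hol : ∀ γ i, DifferentiableOn ℂ (fun p : ℂ × ℂ × ℂ => G γ i p.1 p.2.1 p.2.2) Om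
  zero : ∀ γ i, j < i → ∀ τ1 z τ2, G γ i τ1 z τ2 = 0
  cusp : ∀ γ i, ∀ τ1 : ℂ, 0 < τ1.im → Tendsto (fun t : ℝ => G γ i τ1 0 (t * I)) atTop (𝓝 0)
  t2 : ∀ γ i τ1 z τ2, (τ1, z, τ2) ∈ Om → G γ i τ1 z (τ2 + 2) = G γ i τ1 z τ2
  z2 : ∀ γ i τ1 z τ2, (τ1, z, τ2) ∈ Om → (τ1, z + 2, τ2) ∈ Om → G γ i τ1 (z + 2) τ2 = G γ i τ1 z τ2
  z1 : ∀ γ, ∃ γ', ∀ i τ1 z τ2, (τ1, z, τ2) ∈ Om → G γ' i τ1 z τ2 = G γ i τ1 (z + 1) τ2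
  u1 : ∀ γ, ∃ γ', ∀ i τ1 z τ2, (τ1, z, τ2) ∈ Om → G γ' i τ1 z τ2 =
    ∑ l ∈ Finset.range (j + 1), (l.choose i : ℂ) * G γ l τ1 (z + τ1) (τ2 + (2 * z + τ1))
  u2 : ∀ γ i τ1 z τ2, (τ1, z, τ2) ∈ Om → G γ i τ1 z τ2 =
    ∑ l ∈ Finset.range (j + 1), ((l.choose i : ℂ) * 2 ^ (l - i)) * G γ l τ1 (z + 2 * τ1) (τ2 + (4 * z + 4 * τ1))
  swap : ∀ γ, ∃ γ', ∃ ε : ℂ, ε ≠ 0 ∧ ∀ i, i ≤ j → ∀ τ1 z τ2, (τ1, z, τ2) ∈ Om →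
    G γ' i τ1 z τ2 = ε * G γ (j - i) τ2 z τ1
  act_one : ∀ γ, act γ 1 = γ
  act_mul : ∀ γ ρ σ, act γ (ρ * σ) = act (act γ ρ) σ
  act_mod : ∀ γ ρ σ, redu ρ = redu σ → ∀ i τ1 z τ2, (τ1, z, τ2) ∈ Om → G (act γ ρ) i τ1 z τ2 = G (act γ σ) i τ1 z τ2
  sl : ∀ γ σ τ1 z τ2, (τ1, z, τ2) ∈ Om → ∀ x y : ℂ,
    ∑ i ∈ Finset.range (j + 1), G (act γ σ) i τ1 z τ2 * x ^ (j - i) * y ^ i =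
    JJ σ τ2 ^ (-k) * ∑ i ∈ Finset.range (j + 1),
      G γ i (τ1 - σ 1 0 * z ^ 2 / JJ σ τ2) (z / JJ σ τ2) (MM σ τ2) * (x - σ 1 0 * z / JJ σ τ2 * y) ^ (j - i) * (y / JJ σ τ2) ^ i

lemma Om_open : IsOpen Om := by
  have h1 : IsOpen {p : ℂ × ℂ × ℂ | 0 < p.1.im} :=
    isOpen_lt (f := fun _ : ℂ × ℂ × ℂ => (0:ℝ)) (g := fun p : ℂ × ℂ × ℂ => p.1.im) continuous_const (Complex.continuous_im.comp continuous_fst)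
  have h2 : IsOpen {p : ℂ × ℂ × ℂ | p.2.1.im ^ 2 < p.1.im * p.2.2.im} :=
    isOpen_lt ((Complex.continuous_im.comp (continuous_fst.comp continuous_snd)).pow 2)
      ((Complex.continuous_im.comp continuous_fst).mul (Complex.continuous_im.comp (continuous_snd.comp continuous_snd)))
  exact h1.inter h2

lemma Om_sh {τ1 z τ2 : ℂ} (h : (τ1, z, τ2) ∈ Om) : (τ1, z + τ1, τ2 + (2 * z + τ1)) ∈ Om := by
  obtain ⟨h1, h2⟩ := h
  refine ⟨h1, ?_⟩
  simp at h1 h2 ⊢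
  nlinarith

lemma Om_sh2 {τ1 z τ2 : ℂ} (h : (τ1, z, τ2) ∈ Om) : (τ1, z + 2 * τ1, τ2 + (4 * z + 4 * τ1)) ∈ Om := by
  obtain ⟨h1, h2⟩ := h
  refine ⟨h1, ?_⟩
  simp at h1 h2 ⊢
  nlinarith

lemma Om_swap {τ1 z τ2 : ℂ} (h : (τ1, z, τ2) ∈ Om) : (τ2, z, τ1) ∈ Om := by
  obtain ⟨h1, h2⟩ := h
  simp at h1 h2
  refine ⟨?_, ?_⟩
  · simp; by_contra hc; nlinarith [sq_nonneg z.im]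
  · simp; linarith

lemma Om_zero {τ1 τ2 : ℂ} (h1 : 0 < τ1.im) (h2 : 0 < τ2.im) : (τ1, 0, τ2) ∈ Om := ⟨h1, by simp; positivity⟩

lemma Om_re {τ1 z τ2 τ1' z' τ2' : ℂ} (h : (τ1, z, τ2) ∈ Om) (a : τ1'.im = τ1.im) (b : z'.im = z.im) (c : τ2'.im = τ2.im) :
    (τ1', z', τ2') ∈ Om := by
  obtain ⟨h1, h2⟩ := h
  refine ⟨?_, ?_⟩ <;> simp at h1 h2 ⊢ <;> rw [a] <;> try assumption
  rw [b, c]; assumption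

lemma Om_iff {τ1 z τ2 : ℂ} (h1 : 0 < τ1.im) : (τ1, z, τ2) ∈ Om ↔ z.im ^ 2 / τ1.im < τ2.im := by
  rw [div_lt_iff₀ h1]
  constructor
  · intro h; have := h.2; simp at this; linarith
  · intro h; exact ⟨h1, by simp; linarith⟩

/-- vanishing order at `z = 0` -/
def OrdV {Γ : Type} (G : Γ → ℕ → ℂ → ℂ → ℂ → ℂ) (γ : Γ) (i m : ℕ) : Prop :=
  ∀ τ1 τ2 : ℂ, 0 < τ1.im → 0 < τ2.im → (m : ℕ∞) ≤ analyticOrderAt (fun z => G γ i τ1 z τ2) 0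

/-- Schwarz lemma of higher order -/
lemma schw {f : ℂ → ℂ} {m : ℕ} {R M : ℝ} (hd : DifferentiableOn ℂ f (Metric.ball 0 R))
    (hM : ∀ z ∈ Metric.ball (0:ℂ) R, ‖f z‖ ≤ M) (ho : (m : ℕ∞) ≤ analyticOrderAt f 0) {z : ℂ} (hz : z ∈ Metric.ball (0:ℂ) R) :
    ‖f z‖ ≤ M * (‖z‖ / R) ^ m := by
  have hR : 0 < R := Metric.nonempty_ball.1 ⟨z, hz⟩
  rcases m with _ | n
  · simpa using hM z hz
  have han : AnalyticAt ℂ f 0 := hd.analyticAt (Metric.ball_mem_nhds _ hR)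
  obtain ⟨g, hg, hfg⟩ := (natCast_le_analyticOrderAt han).1 ho
  have h0 : f 0 = 0 := by
    have := hfg.self_of_nhds
    simpa using this
  have := Complex.dist_le_mul_div_pow_of_mapsTo_ball_of_isLittleO (f := f) (c := 0) (R₁ := R) (R₂ := M) (n := n) hd
    (fun w hw => by simpa [h0] using hM w hw) ?_ hz
  · simpa [h0] using this
  · simp only [h0, sub_zero]
    refine Asymptotics.IsLittleO.congr' (f₁ := fun z => z ^ (n + 1) * g z) (g₁ := fun w : ℂ => ‖w‖ ^ n) ?_ ?_ (EventuallyEq.refl _ _)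
    · have h1 : (fun z : ℂ => z ^ (n+1) * g z) =O[𝓝 0] fun z => z ^ (n + 1) * 1 :=
        (Asymptotics.isBigO_refl _ _).mul (hg.continuousAt.tendsto.isBigO_one ℂ)
      have h2 : (fun z : ℂ => z ^ (n + 1) * 1) =o[𝓝 0] fun z : ℂ => z ^ n := by
        simp only [mul_one]
        exact Asymptotics.isLittleO_pow_pow (Nat.lt_succ_self n)
      exact (h1.trans_isLittleO h2).trans_isBigO (Asymptotics.isBigO_of_le _ fun z => by simp)
    · filter_upwards [hfg] with z hz
      rw [hz]; simp

lemma compact_mem_Om {τ1 : ℂ} (h1 : 0 < τ1.im) {ρ Y : ℝ} (h : ρ ^ 2 / τ1.im < Y) (z : ℂ) (hz : ‖z‖ ≤ ρ) (x : ℝ) :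
    (τ1, z, (x:ℂ) + Y * I) ∈ Om := by
  rw [Om_iff h1]
  have : z.im ^ 2 ≤ ρ ^ 2 := by
    rw [← sq_abs]
    exact pow_le_pow_left₀ (abs_nonneg _) ((Complex.abs_im_le_norm z).trans hz) 2
  have h3 : z.im ^ 2 / τ1.im ≤ ρ ^ 2 / τ1.im := by gcongr
  simp
  linarith

section
variable {j : ℕ} {k : ℤ} {Γ : Type} {G : Γ → ℕ → ℂ → ℂ → ℂ → ℂ} {act : Γ → SLZ → Γ}

lemma Fam.dz (hG : Fam j k G act) (γ i) {τ1 z τ2 : ℂ} (h : (τ1, z, τ2) ∈ Om) :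
    DifferentiableAt ℂ (fun z => G γ i τ1 z τ2) z := by
  have h1 := (hG.hol γ i).differentiableAt (Om_open.mem_nhds h)
  have h2 : DifferentiableAt ℂ (fun w : ℂ => ((τ1, w, τ2) : ℂ × ℂ × ℂ)) z := by fun_prop
  exact DifferentiableAt.comp (g := fun p : ℂ × ℂ × ℂ => G γ i p.1 p.2.1 p.2.2) (f := fun w => (τ1,w,τ2)) z h1 h2

lemma Fam.dt2 (hG : Fam j k G act) (γ i) {τ1 z τ2 : ℂ} (h : (τ1, z, τ2) ∈ Om) :
    DifferentiableAt ℂ (fun w => G γ i τ1 z w) τ2 := by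
  have h1 := (hG.hol γ i).differentiableAt (Om_open.mem_nhds h)
  have h2 : DifferentiableAt ℂ (fun w : ℂ => ((τ1, z, w) : ℂ × ℂ × ℂ)) τ2 := by fun_prop
  exact DifferentiableAt.comp (g := fun p : ℂ × ℂ × ℂ => G γ i p.1 p.2.1 p.2.2) (f := fun w => (τ1,z,w)) τ2 h1 h2

lemma Fam.bdd (hG : Fam j k G act) (γ i) {τ1 : ℂ} (h1 : 0 < τ1.im) {ρ Y : ℝ} (h : ρ ^ 2 / τ1.im < Y) :
    ∃ M, ∀ z : ℂ, ‖z‖ ≤ ρ → ∀ x ∈ Set.Icc (0:ℝ) 2, ‖G γ i τ1 z (x + Y * I)‖ ≤ M := by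
  have hK : IsCompact (Metric.closedBall (0:ℂ) ρ ×ˢ Set.Icc (0:ℝ) 2) := (isCompact_closedBall _ _).prod isCompact_Icc
  have hc : ContinuousOn (fun p : ℂ × ℝ => G γ i τ1 p.1 (p.2 + Y * I)) (Metric.closedBall (0:ℂ) ρ ×ˢ Set.Icc (0:ℝ) 2) := by
    have : ContinuousOn (fun p : ℂ × ℝ => ((τ1, p.1, (p.2:ℂ) + Y * I) : ℂ × ℂ × ℂ)) (Metric.closedBall (0:ℂ) ρ ×ˢ Set.Icc (0:ℝ) 2) := by fun_prop
    exact (hG.hol γ i).continuousOn.comp this (fun p hp => compact_mem_Om h1 h _ (by simpa using hp.1) _)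
  obtain ⟨M, hM⟩ := hK.exists_bound_of_continuousOn hc
  exact ⟨M, fun z hz x hx => hM (z, x) ⟨by simpa using hz, hx⟩⟩

lemma Fam.ph (hG : Fam j k G act) (γ i) {τ1 : ℂ} (h1 : 0 < τ1.im) (z : ℂ) :
    PH (z.im ^ 2 / τ1.im) (fun w => G γ i τ1 z w) :=
  ⟨fun w hw => (hG.dt2 γ i ((Om_iff h1).2 hw)).differentiableWithinAt,
   fun w hw => hG.t2 γ i τ1 z w ((Om_iff h1).2 hw)⟩
end

end

section

lemma FC_lin {ι : Type} (s : Finset ι) (c : ι → ℂ) (f : ι → ℂ → ℂ) (r : ℤ) (Y : ℝ)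
    (hc : ∀ l ∈ s, Continuous (fun x : ℝ => f l (x + Y * I))) :
    FC r Y (fun w => ∑ l ∈ s, c l * f l w) = ∑ l ∈ s, c l * FC r Y (f l) := by
  unfold FC
  have h1 : ∀ x : ℝ, (∑ l ∈ s, c l * f l (x + Y * I)) * cexp (-(Real.pi * I * r * (x + Y * I))) =
      ∑ l ∈ s, c l * (f l (x + Y * I) * cexp (-(Real.pi * I * r * (x + Y * I)))) := by
    intro x
    rw [Finset.sum_mul]
    exact Finset.sum_congr rfl fun l _ => by ring
  simp only [h1]
  rw [intervalIntegral.integral_finset_sum]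
  · rw [Finset.mul_sum]
    refine Finset.sum_congr rfl fun l hl => ?_
    rw [intervalIntegral.integral_const_mul]; ring
  · intro l hl
    apply Continuous.intervalIntegrable
    exact continuous_const.mul ((hc l hl).mul (by fun_prop))

lemma FC_const_neg (a : ℂ) {r : ℤ} (hr : r < 0) (Y : ℝ) : FC r Y (fun _ => a) = 0 := by
  have hph : PH (Y - 1) (fun _ : ℂ => a) := ⟨by fun_prop, fun _ _ => rfl⟩
  have h1 : ∀ Y', Y - 1 < Y' → ‖FC r Y (fun _ => a)‖ ≤ ‖a‖ * Real.exp (Real.pi * r * Y') := by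
    intro Y' hY'
    rw [FC_indep hph r (by linarith : Y - 1 < Y) hY']
    exact FC_norm r (fun _ _ => le_refl _)
  have h2 : Tendsto (fun Y' : ℝ => ‖a‖ * Real.exp (Real.pi * r * Y')) atTop (𝓝 (‖a‖ * 0)) := by
    refine Tendsto.const_mul _ (Real.tendsto_exp_atBot.comp ?_)
    refine Tendsto.const_mul_atTop_of_neg ?_ tendsto_id
    have : (r:ℝ) < 0 := by exact_mod_cast hr
    nlinarith [Real.pi_pos]
  have := ge_of_tendsto h2 ((eventually_gt_atTop (Y-1)).mono h1)
  simpa using this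

lemma FC_const_zero (a : ℂ) (Y : ℝ) : FC 0 Y (fun _ => a) = a := by
  simp [FC]

lemma FC_sub_const {Y0 : ℝ} {f : ℂ → ℂ} (h : PH Y0 f) (r : ℤ) (a : ℂ) {Y : ℝ} (hY : Y0 < Y) :
    FC r Y (fun w => f w - a) = FC r Y f - FC r Y (fun _ => a) := by
  have hc := h.cont hY
  unfold FC
  simp only [sub_mul]
  rw [intervalIntegral.integral_sub, mul_sub]
  · exact Continuous.intervalIntegrable (hc.mul (by fun_prop)) _ _
  · exact Continuous.intervalIntegrable (by fun_prop) _ _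

section
variable {j : ℕ} {k : ℤ} {Γ : Type} {G : Γ → ℕ → ℂ → ℂ → ℂ → ℂ} {act : Γ → SLZ → Γ}

def PhiC (G : Γ → ℕ → ℂ → ℂ → ℂ → ℂ) (τ1 : ℂ) (r : ℤ) (i : ℕ) (γ : Γ) (z : ℂ) : ℂ :=
  FC r (z.im ^ 2 / τ1.im + 1) (fun w => G γ i τ1 z w)

lemma phi_Y (hG : Fam j k G act) {τ1 : ℂ} (h1 : 0 < τ1.im) (r : ℤ) (i : ℕ) (γ : Γ) (z : ℂ) {Y : ℝ}
    (hY : z.im ^ 2 / τ1.im < Y) : PhiC G τ1 r i γ z = FC r Y (fun w => G γ i τ1 z w) :=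
  FC_indep (hG.ph γ i h1 z) r (by linarith) hY

lemma phi_Y' (hG : Fam j k G act) {τ1 : ℂ} (h1 : 0 < τ1.im) (r : ℤ) (i : ℕ) (γ : Γ) (z : ℂ) {ρ Y : ℝ} (hz : ‖z‖ ≤ ρ)
    (hY : ρ ^ 2 / τ1.im < Y) : PhiC G τ1 r i γ z = FC r Y (fun w => G γ i τ1 z w) := by
  refine phi_Y hG h1 r i γ z ?_
  have := (Om_iff h1).1 (compact_mem_Om h1 hY z hz 0)
  simpa using this

lemma phi_diff (hG : Fam j k G act) {τ1 : ℂ} (h1 : 0 < τ1.im) (r : ℤ) (i : ℕ) (γ : Γ) :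
    Differentiable ℂ (PhiC G τ1 r i γ) := by
  intro z0
  set ρ := ‖z0‖ + 1 with hρ
  set Y := ρ ^ 2 / τ1.im + 1 with hYd
  have hY : ρ ^ 2 / τ1.im < Y := by linarith
  have hb : ∀ z ∈ Metric.ball z0 1, ‖z‖ ≤ ρ := by
    intro z hz
    have : ‖z - z0‖ < 1 := by simpa [dist_eq_norm] using hz
    have := norm_le_norm_add_norm_sub z0 z
    rw [norm_sub_rev] at this
    linarith
  obtain ⟨M, hM⟩ := hG.bdd γ i h1 hY
  have key := param_hol (fun z x => G γ i τ1 z (x + Y * I) * cexp (-(Real.pi * I * r * (x + Y * I)))) z0 (R := 1)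
    (M := M * Real.exp (Real.pi * r * Y)) one_pos ?_ ?_ ?_
  · have k2 : DifferentiableAt ℂ (fun z => FC r Y (fun w => G γ i τ1 z w)) z0 := key.const_mul (1/2)
    refine k2.congr_of_eventuallyEq ?_
    filter_upwards [Metric.ball_mem_nhds z0 one_pos] with z hz
    exact phi_Y' hG h1 r i γ z (hb z hz) hY
  · intro z hz
    have hz' : z.im ^ 2 / τ1.im < Y := by
      have := (Om_iff h1).1 (compact_mem_Om h1 hY z (hb z hz) 0)
      simpa using this
    exact ((hG.ph γ i h1 z).cont hz').mul (by fun_prop)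
  · intro x z hz
    refine DifferentiableAt.differentiableWithinAt ?_
    exact (hG.dz γ i (compact_mem_Om h1 hY z (hb z hz) x)).mul_const _
  · intro z hz x hx
    rw [norm_mul, Complex.norm_exp]
    have e : (-(Real.pi * I * r * (x + Y * I))).re = Real.pi * r * Y := by simp
    rw [e]
    gcongr
    exact hM z (hb z hz) x hx

lemma phi_zero (hG : Fam j k G act) {τ1 : ℂ} (r : ℤ) (i : ℕ) (hi : j < i) (γ : Γ) (z : ℂ) : PhiC G τ1 r i γ z = 0 := by
  simp [PhiC, FC, hG.zero γ i hi]

lemma FC_congr {f g : ℂ → ℂ} {r : ℤ} {Y : ℝ} (h : ∀ w : ℂ, w.im = Y → f w = g w) : FC r Y f = FC r Y g := by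
  unfold FC
  congr 1
  refine intervalIntegral.integral_congr fun x _ => ?_
  rw [h _ (by simp)]

lemma phi_z1 (hG : Fam j k G act) {τ1 : ℂ} (h1 : 0 < τ1.im) (r : ℤ) (γ : Γ) :
    ∃ γ', ∀ i z, PhiC G τ1 r i γ' z = PhiC G τ1 r i γ (z + 1) := by
  obtain ⟨γ', h⟩ := hG.z1 γ
  refine ⟨γ', fun i z => ?_⟩
  unfold PhiC
  rw [show (z + 1).im = z.im by simp]
  exact FC_congr fun w hw => h i τ1 z w ((Om_iff h1).2 (by linarith))

lemma phi_z2 (hG : Fam j k G act) {τ1 : ℂ} (h1 : 0 < τ1.im) (r : ℤ) (γ : Γ) (i z) :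
    PhiC G τ1 r i γ (z + 2) = PhiC G τ1 r i γ z := by
  unfold PhiC
  rw [show (z + 2).im = z.im by simp]
  exact FC_congr fun w hw => hG.z2 γ i τ1 z w ((Om_iff h1).2 (by linarith)) ((Om_iff h1).2 (by simp; linarith))

lemma phi_ulaw (hG : Fam j k G act) {τ1 : ℂ} (h1 : 0 < τ1.im) (r : ℤ) (γ γ' : Γ) (i : ℕ) (z s c : ℂ) (a : ℕ → ℂ)
    (hs : (z + s).im ^ 2 / τ1.im = z.im ^ 2 / τ1.im + c.im)
    (h : ∀ w, (τ1, z, w) ∈ Om → G γ' i τ1 z w = ∑ l ∈ Finset.range (j + 1), a l * G γ l τ1 (z + s) (w + c)) :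
    PhiC G τ1 r i γ' z = ∑ l ∈ Finset.range (j + 1), a l * (cexp (Real.pi * I * r * c) * PhiC G τ1 r l γ (z + s)) := by
  have e1 : PhiC G τ1 r i γ' z = FC r (z.im ^ 2 / τ1.im + 1) (fun w => ∑ l ∈ Finset.range (j + 1), a l * G γ l τ1 (z + s) (w + c)) :=
    FC_congr fun w hw => h w ((Om_iff h1).2 (by linarith))
  rw [e1, FC_lin (Finset.range (j + 1)) a (fun l w => G γ l τ1 (z + s) (w + c))]
  · refine Finset.sum_congr rfl fun l _ => ?_
    congr 1
    rw [FC_shift (hG.ph γ l h1 (z + s)) r c (by rw [hs]; linarith)]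
    unfold PhiC
    congr 2
    rw [hs]; ring
  · intro l _
    have := (hG.ph γ l h1 (z+s)).1.continuousOn
    refine this.comp_continuous (by fun_prop) fun x => ?_
    simp only [Set.mem_setOf_eq]
    rw [hs]; simp [-Complex.ofReal_pow, ← Complex.ofReal_pow]

lemma phi_ord (hG : Fam j k G act) {τ1 : ℂ} (h1 : 0 < τ1.im) (r : ℤ) (γ : Γ) (i m : ℕ) (ho : OrdV G γ i m) :
    ∃ C, ∀ᶠ u in 𝓝 (0:ℂ), ‖PhiC G τ1 r i γ u‖ ≤ C * ‖u‖ ^ m := by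
  have hY : (1:ℝ) ^ 2 / τ1.im < 1 / τ1.im + 1 := by simp
  set Y := 1 / τ1.im + 1 with hYd
  have hY0 : 0 < Y := by positivity
  obtain ⟨M, hM⟩ := hG.bdd γ i h1 hY
  refine ⟨M * Real.exp (Real.pi * r * Y), ?_⟩
  filter_upwards [Metric.ball_mem_nhds (0:ℂ) one_pos] with z hz
  have hz1 : ‖z‖ ≤ 1 := by simpa using (Metric.mem_ball.1 hz).le
  rw [phi_Y' hG h1 r i γ z hz1 hY]
  have := FC_norm (f := fun w => G γ i τ1 z w) r (Y := Y) (M := M * ‖z‖ ^ m) (by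
    intro x hx
    have := schw (f := fun z => G γ i τ1 z (x + Y * I)) (m := m) (R := 1) (M := M)
      (fun u hu => (hG.dz γ i (compact_mem_Om h1 hY u (by simpa using (Metric.mem_ball.1 hu).le) x)).differentiableWithinAt)
      (fun u hu => hM u (by simpa using (Metric.mem_ball.1 hu).le) x hx)
      (ho τ1 _ h1 (by simpa using hY0)) hz
    simpa using this)
  linarith

lemma phi_step (hG : Fam j k G act) {τ1 : ℂ} (h1 : 0 < τ1.im) (r : ℤ) (i m : ℕ)
    (hh : ∀ l, i < l → ∀ γ z, PhiC G τ1 r l γ z = 0) (ho : ∀ γ, OrdV G γ i m) :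
    (r < m → ∀ γ z, PhiC G τ1 r i γ z = 0) ∧ (r = 0 → ∀ γ z, PhiC G τ1 r i γ z = PhiC G τ1 r i γ 0) := by
  by_cases hi : j < i
  · exact ⟨fun _ γ z => phi_zero hG r i hi γ z, fun _ γ z => by rw [phi_zero hG r i hi γ z, phi_zero hG r i hi γ 0]⟩
  push Not at hi
  have hsum : ∀ (a : ℕ → ℂ) (e : ℂ) (γ : Γ) (z : ℂ), a i = 1 → (∀ l < i, a l = 0) →
      ∑ l ∈ Finset.range (j + 1), a l * (e * PhiC G τ1 r l γ z) = e * PhiC G τ1 r i γ z := by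
    intro a e γ z ha hl
    rw [Finset.sum_eq_single i]
    · rw [ha, one_mul]
    · intro l _ hne
      rcases lt_or_gt_of_ne hne with h | h
      · rw [hl l h, zero_mul]
      · rw [hh l h]; ring
    · intro h; simp at h; omega
  refine theta_main h1 r m (PhiC G τ1 r i) (fun γ z => ‖PhiC G τ1 r i γ z‖*Real.exp (-(Real.pi*r*z.im^2/τ1.im)))
    (fun _ _ => rfl) (phi_diff hG h1 r i) ?_ ?_ ?_ ?_ (fun γ => phi_ord hG h1 r γ i m (ho γ))
  · intro γ
    obtain ⟨γ', h⟩ := phi_z1 hG h1 r γ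
    exact ⟨γ', fun z => by simp [h]⟩
  · intro γ
    obtain ⟨γ', h⟩ := hG.u1 γ
    refine ⟨γ', fun z => ?_⟩
    have := phi_ulaw hG h1 r γ γ' i z τ1 (2 * z + τ1) (fun l => (l.choose i : ℂ)) (by simp; field_simp; ring)
      (fun w hw => h i τ1 z w hw)
    rw [hsum _ _ _ _ (by simp) (fun l hl => by simp [Nat.choose_eq_zero_of_lt hl])] at this
    rw [this, norm_mul, Complex.norm_exp, mul_comm (Real.exp _), mul_assoc, ← Real.exp_add]
    congr 2
    simp; field_simp; ring
  · intro γ z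
    rw [phi_z2 hG h1]; simp
  · intro γ z
    have := phi_ulaw hG h1 r γ γ i z (2 * τ1) (4 * z + 4 * τ1) (fun l => ((l.choose i : ℂ) * 2 ^ (l - i))) (by simp; field_simp; ring)
      (fun w hw => hG.u2 γ i τ1 z w hw)
    rw [hsum _ _ _ _ (by simp) (fun l hl => by simp [Nat.choose_eq_zero_of_lt hl])] at this
    rw [this, norm_mul, Complex.norm_exp, mul_comm (Real.exp _) ‖_‖, mul_assoc ‖_‖, ← Real.exp_add]
    congr 2
    simp; field_simp; ring

lemma ord_zero (γ : Γ) (i : ℕ) : OrdV G γ i 0 := fun _ _ _ _ => by simp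

lemma phi_neg (hG : Fam j k G act) {τ1 : ℂ} (h1 : 0 < τ1.im) {r : ℤ} (hr : r < 0) (i : ℕ) (γ : Γ) (z : ℂ) :
    PhiC G τ1 r i γ z = 0 := by
  have : ∀ n i, j < i + n → ∀ γ z, PhiC G τ1 r i γ z = 0 := by
    intro n
    induction n with
    | zero => intro i hi γ z; exact phi_zero hG r i hi γ z
    | succ n ih => exact fun i hi => (phi_step hG h1 r i 0 (fun l hl => ih l (by omega)) (fun γ => ord_zero γ i)).1 (by simpa using hr)
  exact this (j + 1) i (by omega) γ z

lemma phi_r0 (hG : Fam j k G act) {τ1 : ℂ} (h1 : 0 < τ1.im) (i : ℕ) (γ : Γ) (z : ℂ) :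
    PhiC G τ1 0 i γ z = 0 := by
  have hz : ∀ i γ, PhiC G τ1 0 i γ 0 = 0 := by
    intro i γ
    set a := PhiC G τ1 0 i γ 0 with ha
    have hph := hG.ph γ i h1 0
    simp only [zero_im, ne_eq, OfNat.ofNat_ne_zero, not_false_eq_true, zero_pow, zero_div] at hph
    have hph' : PH 0 (fun w => G γ i τ1 0 w - a) := ⟨hph.1.sub_const a, fun w hw => congrArg (· - a) (hph.2 w hw)⟩
    obtain ⟨M, hM⟩ := hG.bdd γ i h1 (ρ := 0) (Y := 1) (by simp)
    have hb := FC_bound hph' (Y1 := 1) (M := M + ‖a‖) one_pos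
      (fun x hx => (norm_sub_le _ _).trans (by have := hM 0 (by simp) x hx; gcongr)) 1 (by
      intro r hr
      rw [FC_sub_const hph r a one_pos, ← phi_Y hG h1 r i γ 0 (by simp)]
      rcases (show r < 0 ∨ r = 0 by omega) with h | h
      · rw [phi_neg hG h1 h, FC_const_neg a h, sub_zero]
      · subst h; rw [FC_const_zero, ← ha, sub_self])
    have hlim : Tendsto (fun t : ℝ => G γ i τ1 0 (t * I) - a) atTop (𝓝 0) := by
      have h2 : Tendsto (fun t : ℝ => 2 * (M + ‖a‖) * Real.exp (-(Real.pi * (1:ℤ) * (t - 1)))) atTop (𝓝 (2 * (M + ‖a‖) * 0)) := by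
        refine Tendsto.const_mul _ (Real.tendsto_exp_neg_atTop_nhds_zero.comp ?_)
        refine Tendsto.const_mul_atTop (by simp [Real.pi_pos]) ?_
        exact tendsto_atTop_add_const_right _ _ tendsto_id
      rw [mul_zero] at h2
      refine squeeze_zero_norm' ?_ h2
      filter_upwards [eventually_ge_atTop (2:ℝ)] with t ht
      have := hb (t * I) (by simp; linarith)
      simpa using this
    have h3 := (hG.cusp γ i τ1 h1).sub hlim
    simp only [sub_sub_cancel, sub_zero] at h3
    exact tendsto_nhds_unique tendsto_const_nhds h3
  have : ∀ n i, j < i + n → ∀ γ z, PhiC G τ1 0 i γ z = 0 := by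
    intro n
    induction n with
    | zero => intro i hi γ z; exact phi_zero hG 0 i hi γ z
    | succ n ih => 
      intro i hi γ z
      rw [(phi_step hG h1 0 i 0 (fun l hl => ih l (by omega)) (fun γ => ord_zero γ i)).2 rfl γ z, hz]
  exact this (j + 1) i (by omega) γ z

lemma phi_van (hG : Fam j k G act) {τ1 : ℂ} (h1 : 0 < τ1.im) {v : ℕ} (i0 : ℕ) 
    (h : ∀ l, i0 ≤ l → l ≤ j → v ≤ 1 ∨ ∀ γ, OrdV G γ l v) {r : ℤ} (hr : r < v) (γ : Γ) (z : ℂ) :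
    PhiC G τ1 r i0 γ z = 0 := by
  have : ∀ n i, i0 ≤ i → j < i + n → ∀ γ z, PhiC G τ1 r i γ z = 0 := by
    intro n
    induction n with
    | zero => intro i _ hi γ z; exact phi_zero hG r i hi γ z
    | succ n ih => 
      intro i hi0 hi
      by_cases hij : j < i
      · intro γ z; exact phi_zero hG r i hij γ z
      rcases h i hi0 (by omega) with h' | h'
      · intro γ z
        rcases (show r < 0 ∨ r = 0 by omega) with h'' | h''
        · exact phi_neg hG h1 h'' i γ z
        · subst h''; exact phi_r0 hG h1 i γ z
      · exact (phi_step hG h1 r i v (fun l hl => ih l (by omega) (by omega)) h').1 hr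
  exact this (j + 1) i0 le_rfl (by omega) γ z

/-- exponential decay -/
lemma Fam.decay (hG : Fam j k G act) {τ1 : ℂ} (h1 : 0 < τ1.im) {v : ℕ} (i : ℕ) 
    (h : ∀ l, i ≤ l → l ≤ j → v ≤ 1 ∨ ∀ γ, OrdV G γ l v) (γ : Γ) :
    ∃ C Y : ℝ, 0 ≤ C ∧ ∀ z τ2 : ℂ, ‖z‖ ≤ 1 → Y ≤ τ2.im → (τ1, z, τ2) ∈ Om ∧ ‖G γ i τ1 z τ2‖ ≤ C * Real.exp (-(Real.pi * v * τ2.im)) := by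
  have hY : (1:ℝ) ^ 2 / τ1.im < 1 / τ1.im + 1 := by simp
  set Y := 1 / τ1.im + 1 with hYd
  obtain ⟨M, hM⟩ := hG.bdd γ i h1 hY
  have hM0 : 0 ≤ M := (norm_nonneg _).trans (hM 0 (by simp) 0 (by simp))
  refine ⟨2 * M * Real.exp (Real.pi * v * Y), Y + 1, by positivity, fun z τ2 hz hτ => ?_⟩
  have hz' : z.im ^ 2 / τ1.im < Y := by
    have := (Om_iff h1).1 (compact_mem_Om h1 hY z hz 0)
    simpa using this
  refine ⟨(Om_iff h1).2 (by linarith), ?_⟩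
  have := FC_bound (hG.ph γ i h1 z) hz' (M := M) (fun x hx => hM z hz x hx) (v:ℤ) (fun r hr => by
    rw [← phi_Y hG h1 r i γ z hz']
    exact phi_van hG h1 i h hr γ z) τ2 hτ
  refine this.trans (le_of_eq ?_)
  rw [mul_assoc (2 * M), ← Real.exp_add]
  congr 2
  push_cast; ring
end

end

section

section
variable {j : ℕ} {k : ℤ} {Γ : Type} {G : Γ → ℕ → ℂ → ℂ → ℂ → ℂ} {act : Γ → SLZ → Γ}

/-- leading coefficient -/
def LC (G : Γ → ℕ → ℂ → ℂ → ℂ → ℂ) (γ : Γ) (i m : ℕ) (τ1 τ2 : ℂ) : ℂ :=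
  limUnder (𝓝[≠] (0:ℂ)) (fun z => G γ i τ1 z τ2 / z ^ m)

lemma lc_fac (hG : Fam j k G act) {γ : Γ} {i m : ℕ} (ho : OrdV G γ i m) {τ1 τ2 : ℂ} (h1 : 0 < τ1.im) (h2 : 0 < τ2.im) :
    ∃ g : ℂ → ℂ, AnalyticAt ℂ g 0 ∧ (∀ᶠ z in 𝓝 (0:ℂ), G γ i τ1 z τ2 = z ^ m * g z) ∧ g 0 = LC G γ i m τ1 τ2 := by
  have han : AnalyticAt ℂ (fun z => G γ i τ1 z τ2) 0 := by
    have : ∀ᶠ z in 𝓝 (0:ℂ), DifferentiableAt ℂ (fun z => G γ i τ1 z τ2) z := by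
      have hc : ContinuousAt (fun z : ℂ => ((τ1, z, τ2) : ℂ × ℂ × ℂ)) 0 := by fun_prop
      filter_upwards [hc (Om_open.mem_nhds (Om_zero h1 h2))] with z hz
      exact hG.dz γ i hz
    exact Complex.analyticAt_iff_eventually_differentiableAt.2 this
  obtain ⟨g, hg, hfg⟩ := (natCast_le_analyticOrderAt han).1 (ho τ1 τ2 h1 h2)
  simp only [sub_zero, smul_eq_mul] at hfg
  refine ⟨g, hg, hfg, ?_⟩
  symm
  apply Tendsto.limUnder_eq
  refine Tendsto.congr' ?_ (hg.continuousAt.tendsto.mono_left nhdsWithin_le_nhds)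
  filter_upwards [hfg.filter_mono nhdsWithin_le_nhds, self_mem_nhdsWithin] with z hz hz0
  rw [hz]
  have : z ≠ 0 := hz0
  field_simp

lemma lc_tendsto1 (hG : Fam j k G act) {γ : Γ} {i m : ℕ} (ho : OrdV G γ i m) {τ1 τ2 : ℂ} (h1 : 0 < τ1.im) (h2 : 0 < τ2.im) :
    Tendsto (fun z => G γ i τ1 z τ2 / z ^ m) (𝓝[≠] (0:ℂ)) (𝓝 (LC G γ i m τ1 τ2)) := by
  obtain ⟨g, hg, hfg, h0⟩ := lc_fac hG ho h1 h2
  rw [← h0]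
  refine Tendsto.congr' ?_ (hg.continuousAt.tendsto.mono_left nhdsWithin_le_nhds)
  filter_upwards [hfg.filter_mono nhdsWithin_le_nhds, self_mem_nhdsWithin] with z hz hz0
  rw [hz]
  have : z ≠ 0 := hz0
  field_simp

lemma lc_ord (hG : Fam j k G act) {γ : Γ} {i m : ℕ} (ho : OrdV G γ i m) 
    (h0 : ∀ τ1 τ2 : ℂ, 0 < τ1.im → 0 < τ2.im → LC G γ i m τ1 τ2 = 0) : OrdV G γ i (m + 1) := by
  intro τ1 τ2 h1 h2
  obtain ⟨g, hg, hfg, hg0⟩ := lc_fac hG ho h1 h2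
  rw [h0 τ1 τ2 h1 h2] at hg0
  have e : (fun z => G γ i τ1 z τ2) =ᶠ[𝓝 0] (fun z : ℂ => z ^ m) * g := hfg
  rw [analyticOrderAt_congr e]
  have hz : AnalyticAt ℂ (fun z : ℂ => z ^ m) 0 := by fun_prop
  rw [analyticOrderAt_mul hz hg]
  have a1 : (m:ℕ∞) ≤ analyticOrderAt (fun z : ℂ => z ^ m) 0 :=
    (natCast_le_analyticOrderAt hz).2 ⟨fun _ => 1, analyticAt_const, by simp⟩
  have a2 : (1:ℕ∞) ≤ analyticOrderAt g 0 := by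
    rw [ENat.one_le_iff_ne_zero]
    exact (hg.analyticOrderAt_ne_zero).2 hg0
  push_cast
  exact add_le_add a1 a2

/-- small polydisc -/
lemma poly_nhds {τ1 τ2 : ℂ} (h1 : 0 < τ1.im) (h2 : 0 < τ2.im) : ∃ R : ℝ, 0 < R ∧ 
    Metric.closedBall τ1 R ×ˢ Metric.closedBall (0:ℂ) R ×ˢ Metric.closedBall τ2 R ⊆ Om := by
  obtain ⟨R, hR, hs⟩ := Metric.nhds_basis_closedBall.mem_iff.1 (Om_open.mem_nhds (Om_zero h1 h2))
  exact ⟨R, hR, by rw [closedBall_prod_same, closedBall_prod_same]; exact hs⟩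

lemma lc_unif (hG : Fam j k G act) {γ : Γ} {i m : ℕ} (ho : OrdV G γ i m) {τ1 τ2 : ℂ} (h1 : 0 < τ1.im) (h2 : 0 < τ2.im) 
    {ε : ℝ} (hε : 0 < ε) : ∃ δ > 0, ∀ τ1' z τ2' : ℂ, dist τ1' τ1 < δ → dist τ2' τ2 < δ → ‖z‖ < δ →
      ‖G γ i τ1' z τ2' / z ^ m - G γ i τ1 z τ2 / z ^ m‖ ≤ ε := by
  obtain ⟨R, hR, hs⟩ := poly_nhds h1 h2
  have hK : IsCompact (Metric.closedBall τ1 R ×ˢ Metric.closedBall (0:ℂ) R ×ˢ Metric.closedBall τ2 R) :=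
    (isCompact_closedBall _ _).prod ((isCompact_closedBall _ _).prod (isCompact_closedBall _ _))
  have hu := hK.uniformContinuousOn_of_continuous ((hG.hol γ i).continuousOn.mono hs)
  obtain ⟨δ, hδ, hd⟩ := Metric.uniformContinuousOn_iff.1 hu (ε * R ^ m) (by positivity)
  refine ⟨min δ (min R (min τ1.im τ2.im)), by positivity, fun τ1' z τ2' a b c => ?_⟩
  have hz : ‖z‖ < R := lt_of_lt_of_le c (by simp)
  have ha : dist τ1' τ1 < R := lt_of_lt_of_le a (by simp)
  have hb : dist τ2' τ2 < R := lt_of_lt_of_le b (by simp)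
  have i1 : 0 < τ1'.im := by
    have : dist τ1' τ1 < τ1.im := lt_of_lt_of_le a (by simp)
    rw [dist_eq_norm] at this
    have h := (abs_le.1 (Complex.abs_im_le_norm (τ1' - τ1))).1
    simp at h
    linarith
  have i2 : 0 < τ2'.im := by
    have : dist τ2' τ2 < τ2.im := lt_of_lt_of_le b (by simp)
    rw [dist_eq_norm] at this
    have h := (abs_le.1 (Complex.abs_im_le_norm (τ2' - τ2))).1
    simp at h
    linarith
  have m1 : ∀ w ∈ Metric.ball (0:ℂ) R, (τ1', w, τ2') ∈ Metric.closedBall τ1 R ×ˢ Metric.closedBall (0:ℂ) R ×ˢ Metric.closedBall τ2 R :=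
    fun w hw => ⟨ha.le, (Metric.mem_ball.1 hw).le, hb.le⟩
  have m2 : ∀ w ∈ Metric.ball (0:ℂ) R, (τ1, w, τ2) ∈ Metric.closedBall τ1 R ×ˢ Metric.closedBall (0:ℂ) R ×ˢ Metric.closedBall τ2 R :=
    fun w hw => ⟨by simp [hR.le], (Metric.mem_ball.1 hw).le, by simp [hR.le]⟩
  have han : ∀ τ1 τ2, (∀ w ∈ Metric.ball (0:ℂ) R, (τ1, w, τ2) ∈ Om) → DifferentiableOn ℂ (fun z => G γ i τ1 z τ2) (Metric.ball 0 R) :=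
    fun _ _ h w hw => (hG.dz γ i (h w hw)).differentiableWithinAt
  have d1 := han τ1' τ2' (fun w hw => hs (m1 w hw))
  have d2 := han τ1 τ2 (fun w hw => hs (m2 w hw))
  have := schw (f := fun z => G γ i τ1' z τ2' - G γ i τ1 z τ2) (m := m) (R := R) (M := ε * R ^ m) (d1.sub d2) (fun w hw => by
      have := hd _ (m1 w hw) _ (m2 w hw) (by
        simp only [Prod.dist_eq, dist_self]
        have h3 : dist τ1' τ1 < δ := lt_of_lt_of_le a (by simp)
        have h4 : dist τ2' τ2 < δ := lt_of_lt_of_le b (by simp)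
        simp [h3, h4, hδ])
      rw [dist_eq_norm] at this
      exact this.le) (by
      have := le_analyticOrderAt_sub (f := fun z => G γ i τ1' z τ2') (g := fun z => G γ i τ1 z τ2) (z₀ := (0:ℂ))
      exact (le_min (ho τ1' τ2' i1 i2) (ho τ1 τ2 h1 h2)).trans this) (z := z) (by simpa using hz)
  rw [← sub_div, norm_div, norm_pow]
  by_cases hz0 : ‖z‖ ^ m = 0
  · rw [hz0]; simp [hε.le]
  · rw [div_le_iff₀ (lt_of_le_of_ne (by positivity) (Ne.symm hz0))]
    refine this.trans (le_of_eq ?_)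
    rw [div_pow]; field_simp

lemma lc_tendsto (hG : Fam j k G act) {γ : Γ} {i m : ℕ} (ho : OrdV G γ i m) {τ1 τ2 : ℂ} (h1 : 0 < τ1.im) (h2 : 0 < τ2.im) 
    {α : Type} {F : Filter α} {a b z : α → ℂ} (ha : Tendsto a F (𝓝 τ1)) (hb : Tendsto b F (𝓝 τ2)) (hz : Tendsto z F (𝓝[≠] 0)) :
    Tendsto (fun t => G γ i (a t) (z t) (b t) / (z t) ^ m) F (𝓝 (LC G γ i m τ1 τ2)) := by
  have t1 := (lc_tendsto1 hG ho h1 h2).comp hz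
  have t2 : Tendsto (fun t => G γ i (a t) (z t) (b t) / (z t) ^ m - G γ i τ1 (z t) τ2 / (z t) ^ m) F (𝓝 0) := by
    rw [Metric.tendsto_nhds]
    intro ε hε
    obtain ⟨δ, hδ, h⟩ := lc_unif hG ho h1 h2 (half_pos hε)
    filter_upwards [Metric.tendsto_nhds.1 ha δ hδ, Metric.tendsto_nhds.1 hb δ hδ,
      Metric.tendsto_nhds.1 (hz.mono_right nhdsWithin_le_nhds) δ hδ] with t A B C
    rw [dist_zero_right] at C ⊢
    linarith [h _ _ _ A B C]
  have := t2.add t1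
  simpa using this

lemma lc_hol (hG : Fam j k G act) {γ : Γ} {i m : ℕ} (ho : OrdV G γ i m) {τ1 : ℂ} (h1 : 0 < τ1.im) :
    DifferentiableOn ℂ (LC G γ i m τ1) {τ2 | 0 < τ2.im} := by
  intro τ2 h2
  have h2 : 0 < τ2.im := h2
  refine DifferentiableAt.differentiableWithinAt ?_
  obtain ⟨R, hR, hs⟩ := poly_nhds h1 h2
  have him : ∀ w ∈ Metric.ball τ2 R, 0 < w.im := fun w hw =>
    (Om_swap (hs (a := (τ1, 0, w)) ⟨by simp [hR.le], by simp [hR.le], (Metric.mem_ball.1 hw).le⟩)).1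
  have hlu : TendstoLocallyUniformlyOn (fun z τ2 => G γ i τ1 z τ2 / z ^ m) (LC G γ i m τ1) (𝓝[≠] (0:ℂ)) (Metric.ball τ2 R) := by
    rw [Metric.tendstoLocallyUniformlyOn_iff]
    intro ε hε w hw
    obtain ⟨δ, hδ, h⟩ := lc_unif hG ho h1 (him w hw) (ε := ε / 4) (by linarith)
    have hconv := Metric.tendsto_nhds.1 (lc_tendsto1 hG ho h1 (him w hw)) (ε / 4) (by linarith)
    have hsm : ∀ᶠ z in 𝓝[≠] (0:ℂ), ‖z‖ < δ := by
      filter_upwards [nhdsWithin_le_nhds (Metric.ball_mem_nhds (0:ℂ) hδ)] with z hz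
      simpa using hz
    refine ⟨Metric.ball w δ ∩ Metric.ball τ2 R, ?_, ?_⟩
    · refine inter_mem (nhdsWithin_le_nhds (Metric.ball_mem_nhds w hδ)) self_mem_nhdsWithin
    · filter_upwards [hsm, hconv] with z hz hcz y hy
      have b1 := h τ1 z y (by simpa using hδ) hy.1 hz
      have b2 : ‖LC G γ i m τ1 y - LC G γ i m τ1 w‖ ≤ ε / 4 := by
        refine le_of_tendsto (((lc_tendsto1 hG ho h1 (him y hy.2)).sub (lc_tendsto1 hG ho h1 (him w hw))).norm) ?_
        filter_upwards [hsm] with z hz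
        exact h τ1 z y (by simpa using hδ) hy.1 hz
      rw [dist_eq_norm] at hcz ⊢
      have e : LC G γ i m τ1 y - G γ i τ1 z y / z ^ m = (LC G γ i m τ1 y - LC G γ i m τ1 w)
        - (G γ i τ1 z w / z ^ m - LC G γ i m τ1 w) - (G γ i τ1 z y / z ^ m - G γ i τ1 z w / z ^ m) := by ring
      rw [e]
      have := norm_sub_le ((LC G γ i m τ1 y - LC G γ i m τ1 w) - (G γ i τ1 z w / z ^ m - LC G γ i m τ1 w)) (G γ i τ1 z y / z ^ m - G γ i τ1 z w / z ^ m)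
      have := norm_sub_le (LC G γ i m τ1 y - LC G γ i m τ1 w) (G γ i τ1 z w / z ^ m - LC G γ i m τ1 w)
      linarith
  have := hlu.differentiableOn (by
    filter_upwards [nhdsWithin_le_nhds (Metric.ball_mem_nhds (0:ℂ) hR)] with z hz w hw
    refine DifferentiableAt.differentiableWithinAt ?_
    refine (hG.dt2 γ i (hs ⟨by simp [hR.le], (Metric.mem_ball.1 hz).le, (Metric.mem_ball.1 hw).le⟩)).div_const _) Metric.isOpen_ball
  exact this.differentiableAt (Metric.ball_mem_nhds _ hR)

lemma lc_bound (hG : Fam j k G act) {γ : Γ} {i m : ℕ} (ho : OrdV G γ i m) {τ1 : ℂ} (h1 : 0 < τ1.im) {v : ℕ}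
    (h : ∀ l, i ≤ l → l ≤ j → v ≤ 1 ∨ ∀ γ, OrdV G γ l v) :
    ∃ C Y : ℝ, 0 ≤ C ∧ ∀ τ2 : ℂ, 0 < τ2.im → Y ≤ τ2.im → ‖LC G γ i m τ1 τ2‖ ≤ C * Real.exp (-(Real.pi * v * τ2.im)) := by
  obtain ⟨C, Y, hC, hb⟩ := hG.decay h1 i h γ
  refine ⟨C, Y, hC, fun τ2 h2 hY => ?_⟩
  refine le_of_tendsto (lc_tendsto1 hG ho h1 h2).norm ?_
  filter_upwards [nhdsWithin_le_nhds (Metric.ball_mem_nhds (0:ℂ) one_pos), self_mem_nhdsWithin] with z hz hz0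
  have hz0 : 0 < ‖z‖ := norm_pos_iff.2 hz0
  have := schw (f := fun z => G γ i τ1 z τ2) (m := m) (R := 1) (M := C * Real.exp (-(Real.pi * v * τ2.im)))
    (fun w hw => (hG.dz γ i (hb w τ2 (by simpa using (Metric.mem_ball.1 hw).le) hY).1).differentiableWithinAt)
    (fun w hw => (hb w τ2 (by simpa using (Metric.mem_ball.1 hw).le) hY).2) (ho τ1 τ2 h1 h2) hz
  rw [norm_div, norm_pow, div_le_iff₀ (by positivity)]
  simpa using this
end

end

section

section
variable {j : ℕ} {k : ℤ} {Γ : Type} {G : Γ → ℕ → ℂ → ℂ → ℂ → ℂ} {act : Γ → SLZ → Γ}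

lemma OrdV.mono {γ : Γ} {i m n : ℕ} (h : OrdV G γ i m) (hn : n ≤ m) : OrdV G γ i n :=
  fun τ1 τ2 h1 h2 => le_trans (by exact_mod_cast hn) (h τ1 τ2 h1 h2)

def mo (j a i : ℕ) : ℕ := a - min i (j - i)

def HV (j : ℕ) (G : Γ → ℕ → ℂ → ℂ → ℂ → ℂ) (a : ℕ) : Prop := ∀ γ i, i ≤ j → OrdV G γ i (mo j a i)

lemma ord_swap (hG : Fam j k G act) {i n : ℕ} (hi : i ≤ j) (h : ∀ γ, OrdV G γ i n) (γ : Γ) : OrdV G γ (j - i) n := by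
  intro τ1 τ2 h1 h2
  obtain ⟨γ', ε, hε, hs⟩ := hG.swap γ
  refine (h γ' τ2 τ1 h2 h1).trans ?_
  have e : (fun z => G γ' i τ2 z τ1) =ᶠ[𝓝 0] (fun z : ℂ => ε) * (fun z => G γ (j - i) τ1 z τ2) := by
    have hc : ContinuousAt (fun z : ℂ => ((τ2, z, τ1) : ℂ × ℂ × ℂ)) 0 := by fun_prop
    filter_upwards [hc (Om_open.mem_nhds (Om_zero h2 h1))] with z hz
    exact hs i hi τ2 z τ1 hz
  obtain ⟨g, hg, hfg, -⟩ := lc_fac hG (ord_zero γ (j - i)) h1 h2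
  have han : AnalyticAt ℂ (fun z => G γ (j - i) τ1 z τ2) 0 :=
    hg.congr (by filter_upwards [hfg] with z hz; simp [hz])
  rw [analyticOrderAt_congr e, analyticOrderAt_mul analyticAt_const han,
    (analyticAt_const.analyticOrderAt_eq_zero).2 hε, zero_add]

lemma lc_congr {γ γ' : Γ} {i m : ℕ} {τ1 τ2 : ℂ} (h1 : 0 < τ1.im) (h2 : 0 < τ2.im)
    (h : ∀ z, (τ1, z, τ2) ∈ Om → G γ i τ1 z τ2 = G γ' i τ1 z τ2) : LC G γ i m τ1 τ2 = LC G γ' i m τ1 τ2 := by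
  unfold LC limUnder
  congr 1
  apply Filter.map_congr
  have hc : ContinuousAt (fun z : ℂ => ((τ1, z, τ2) : ℂ × ℂ × ℂ)) 0 := by fun_prop
  have := hc (Om_open.mem_nhds (Om_zero h1 h2))
  filter_upwards [nhdsWithin_le_nhds this] with z hz
  rw [h z hz]

/-- leading part of the form for exponents `e` -/
def QQ (j : ℕ) (G : Γ → ℕ → ℂ → ℂ → ℂ → ℂ) (a : ℕ) (e : ℕ → ℕ) (γ : Γ) (τ1 τ2 : ℂ) (T : ℕ → ℂ) : ℂ :=
  ∑ i ∈ Finset.range (j + 1), if mo j a i + e i = a then LC G γ i (mo j a i) τ1 τ2 * T i else 0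

lemma lim_gen (hG : Fam j k G act) {a : ℕ} (hH : HV j G a) (e : ℕ → ℕ) (he : ∀ i ≤ j, a ≤ mo j a i + e i) (γ : Γ)
    {τ1 τ2 : ℂ} (h1 : 0 < τ1.im) (h2 : 0 < τ2.im) {F : Filter ℂ} {u b z : ℂ → ℂ} {T : ℂ → ℕ → ℂ} {T0 : ℕ → ℂ}
    (ha : Tendsto u F (𝓝 τ1)) (hb : Tendsto b F (𝓝 τ2)) (hz : Tendsto z F (𝓝[≠] 0))
    (hT : ∀ i ≤ j, Tendsto (fun t => T t i) F (𝓝 (T0 i))) :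
    Tendsto (fun t => (∑ i ∈ Finset.range (j + 1), G γ i (u t) (z t) (b t) * ((z t) ^ e i * T t i)) / z t ^ a) F
      (𝓝 (QQ j G a e γ τ1 τ2 T0)) := by
  simp only [Finset.sum_div]
  refine tendsto_finset_sum _ fun i hi => ?_
  have hi : i ≤ j := by simpa [Nat.lt_succ_iff] using hi
  have hz0 : ∀ᶠ t in F, z t ≠ 0 := (tendsto_nhdsWithin_iff.1 hz).2
  have hzz : Tendsto z F (𝓝 0) := hz.mono_right nhdsWithin_le_nhds
  have base := (lc_tendsto hG (hH γ i hi) h1 h2 ha hb hz).mul (hT i hi)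
  have b2 := base.mul (hzz.pow (mo j a i + e i - a))
  have heq : (if mo j a i + e i = a then LC G γ i (mo j a i) τ1 τ2 * T0 i else 0) =
      LC G γ i (mo j a i) τ1 τ2 * T0 i * 0 ^ (mo j a i + e i - a) := by
    split_ifs with h
    · simp [h]
    · have := he i hi
      rw [zero_pow (by omega), mul_zero]
  rw [heq]
  refine b2.congr' ?_
  filter_upwards [hz0] with t ht
  have hp : z t ^ (mo j a i + e i - a) * z t ^ a = z t ^ (mo j a i) * z t ^ e i := by
    rw [← pow_add, ← pow_add]
    congr 1
    have := he i hi
    omega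
  field_simp
  linear_combination (G γ i (u t) (z t) (b t) * T t i) * hp

lemma slash_lim (hG : Fam j k G act) {a : ℕ} (hH : HV j G a) (σ : SLZ) (γ : Γ)
    {τ1 τ2 : ℂ} (h1 : 0 < τ1.im) (h2 : 0 < τ2.im) (η : ℂ) :
    QQ j G a (fun i => i) (act γ σ) τ1 τ2 (fun i => η ^ i) =
      JJ σ τ2 ^ (-(k + a)) * QQ j G a (fun i => i) γ τ1 (MM σ τ2) (fun i => η ^ i) ∧
    QQ j G a (fun i => j - i) (act γ σ) τ1 τ2 (fun i => η ^ (j - i)) =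
      JJ σ τ2 ^ (-(k + j + a)) * QQ j G a (fun i => j - i) γ τ1 (MM σ τ2) (fun i => (JJ σ τ2 ^ 2 * η - σ 1 0 * JJ σ τ2) ^ (j - i)) := by
  have hJ := JJ_ne σ h2
  have hM := MM_im σ h2
  have he1 : ∀ i ≤ j, a ≤ mo j a i + i := fun i _ => by unfold mo; omega
  have he2 : ∀ i ≤ j, a ≤ mo j a i + (j - i) := fun i _ => by unfold mo; omega
  have tid : Tendsto (fun z : ℂ => z) (𝓝[≠] 0) (𝓝 0) := tendsto_id.mono_left nhdsWithin_le_nhds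
  have tz : Tendsto (fun z : ℂ => z / JJ σ τ2) (𝓝[≠] 0) (𝓝[≠] 0) := by
    refine tendsto_nhdsWithin_iff.2 ⟨?_, ?_⟩
    · simpa using tid.div_const (JJ σ τ2)
    · filter_upwards [self_mem_nhdsWithin] with z hz
      exact div_ne_zero hz hJ
  have tu : Tendsto (fun z : ℂ => τ1 - σ 1 0 * z ^ 2 / JJ σ τ2) (𝓝[≠] 0) (𝓝 τ1) := by
    have := ((tid.pow 2).const_mul (σ 1 0 : ℂ)).div_const (JJ σ τ2)
    simpa using this.const_sub τ1
  have hOm : ∀ᶠ z in 𝓝[≠] (0:ℂ), (τ1, z, τ2) ∈ Om := by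
    have hc : ContinuousAt (fun z : ℂ => ((τ1, z, τ2) : ℂ × ℂ × ℂ)) 0 := by fun_prop
    exact nhdsWithin_le_nhds (hc (Om_open.mem_nhds (Om_zero h1 h2)))
  constructor
  · have L := lim_gen hG hH (fun i => i) he1 (act γ σ) h1 h2 (F := 𝓝[≠] 0) (u := fun _ => τ1) (b := fun _ => τ2) (z := fun z => z)
      (T := fun _ i => η ^ i) (T0 := fun i => η ^ i) tendsto_const_nhds tendsto_const_nhds tendsto_id (fun _ _ => tendsto_const_nhds)
    have R := lim_gen hG hH (fun i => i) he1 γ h1 hM (F := 𝓝[≠] 0) (u := fun z => τ1 - σ 1 0 * z ^ 2 / JJ σ τ2) (b := fun _ => MM σ τ2)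
      (z := fun z => z / JJ σ τ2)
      (T := fun z i => (1 - σ 1 0 * z / JJ σ τ2 * (z * η)) ^ (j - i) * η ^ i) (T0 := fun i => η ^ i) tu tendsto_const_nhds tz 
      (fun i _ => by
        have : Tendsto (fun z : ℂ => 1 - σ 1 0 * z / JJ σ τ2 * (z * η)) (𝓝[≠] 0) (𝓝 (1 - σ 1 0 * 0 / JJ σ τ2 * (0 * η))) :=
          (((tid.const_mul _).div_const _).mul (tid.mul_const _)).const_sub 1
        have := (this.pow (j - i)).mul_const (η ^ i)
        simpa using this)
    refine tendsto_nhds_unique L ((R.const_mul (JJ σ τ2 ^ (-(k + a)))).congr' ?_)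
    filter_upwards [hOm, self_mem_nhdsWithin] with z hz hz0
    have hz0 : z ≠ 0 := hz0
    have := hG.sl γ σ τ1 z τ2 hz 1 (z * η)
    simp only [one_pow, mul_one] at this
    rw [show (∑ i ∈ Finset.range (j + 1), G (act γ σ) i τ1 z τ2 * (z ^ i * η ^ i)) = _ from
      (Finset.sum_congr rfl fun i _ => by rw [mul_pow]).trans this]
    rw [neg_add, zpow_add₀ hJ, _root_.zpow_neg _ (a:ℤ), zpow_natCast, div_pow]
    have e2 : ∑ i ∈ Finset.range (j + 1), G γ i (τ1 - σ 1 0 * z ^ 2 / JJ σ τ2) (z / JJ σ τ2) (MM σ τ2) *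
        ((z / JJ σ τ2) ^ i * ((1 - σ 1 0 * z / JJ σ τ2 * (z * η)) ^ (j - i) * η ^ i)) =
      ∑ i ∈ Finset.range (j + 1), G γ i (τ1 - σ 1 0 * z ^ 2 / JJ σ τ2) (z / JJ σ τ2) (MM σ τ2) *
        (1 - σ 1 0 * z / JJ σ τ2 * (z * η)) ^ (j - i) * (z * η / JJ σ τ2) ^ i :=
      Finset.sum_congr rfl fun i _ => by rw [show z * η / JJ σ τ2 = z / JJ σ τ2 * η by ring, mul_pow]; ring
    rw [e2]
    field_simp
  · have L := lim_gen hG hH (fun i => j - i) he2 (act γ σ) h1 h2 (F := 𝓝[≠] 0) (u := fun _ => τ1) (b := fun _ => τ2) (z := fun z => z)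
      (T := fun _ i => η ^ (j - i)) (T0 := fun i => η ^ (j - i)) tendsto_const_nhds tendsto_const_nhds tendsto_id (fun _ _ => tendsto_const_nhds)
    have R := lim_gen hG hH (fun i => j - i) he2 γ h1 hM (F := 𝓝[≠] 0) (u := fun z => τ1 - σ 1 0 * z ^ 2 / JJ σ τ2) (b := fun _ => MM σ τ2)
      (z := fun z => z / JJ σ τ2)
      (T := fun z i => (JJ σ τ2 ^ 2 * η - σ 1 0 * JJ σ τ2) ^ (j - i)) (T0 := fun i => (JJ σ τ2 ^ 2 * η - σ 1 0 * JJ σ τ2) ^ (j - i))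
      tu tendsto_const_nhds tz (fun i _ => tendsto_const_nhds)
    refine tendsto_nhds_unique L ((R.const_mul (JJ σ τ2 ^ (-(k + j + a)))).congr' ?_)
    filter_upwards [hOm, self_mem_nhdsWithin] with z hz hz0
    have hz0 : z ≠ 0 := hz0
    have := hG.sl γ σ τ1 z τ2 hz (z * η) 1
    simp only [one_pow, mul_one] at this
    rw [show (∑ i ∈ Finset.range (j + 1), G (act γ σ) i τ1 z τ2 * (z ^ (j - i) * η ^ (j - i))) = _ from
      (Finset.sum_congr rfl fun i _ => by rw [mul_pow]).trans this]
    rw [neg_add, neg_add, zpow_add₀ hJ, zpow_add₀ hJ, _root_.zpow_neg _ (a:ℤ), _root_.zpow_neg _ (j:ℤ), zpow_natCast, zpow_natCast, div_pow]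
    have e2 : ∑ i ∈ Finset.range (j + 1), G γ i (τ1 - σ 1 0 * z ^ 2 / JJ σ τ2) (z / JJ σ τ2) (MM σ τ2) *
        ((z / JJ σ τ2) ^ (j - i) * (JJ σ τ2 ^ 2 * η - σ 1 0 * JJ σ τ2) ^ (j - i)) =
      JJ σ τ2 ^ j * ∑ i ∈ Finset.range (j + 1), G γ i (τ1 - σ 1 0 * z ^ 2 / JJ σ τ2) (z / JJ σ τ2) (MM σ τ2) *
        (z * η - σ 1 0 * z / JJ σ τ2) ^ (j - i) * (1 / JJ σ τ2) ^ i := by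
      rw [Finset.mul_sum]
      refine Finset.sum_congr rfl fun i hi => ?_
      have hi : i ≤ j := by simpa [Nat.lt_succ_iff] using hi
      rw [← mul_pow, show z / JJ σ τ2 * (JJ σ τ2 ^ 2 * η - σ 1 0 * JJ σ τ2) = JJ σ τ2 * (z * η - σ 1 0 * z / JJ σ τ2) by field_simp,
        mul_pow]
      have hp : JJ σ τ2 ^ j = JJ σ τ2 ^ (j - i) * JJ σ τ2 ^ i := by rw [← pow_add]; congr 1; omega
      rw [hp, one_div, inv_pow]
      field_simp
    rw [e2]
    field_simp
end

end

section

section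
variable {j : ℕ} {k : ℤ} {Γ : Type} {G : Γ → ℕ → ℂ → ℂ → ℂ → ℂ} {act : Γ → SLZ → Γ}

/-- bounded exponential decay predicate -/
def EB (f : ℂ → ℂ) (v : ℕ) : Prop :=
  ∃ C Y : ℝ, 0 ≤ C ∧ ∀ τ : ℂ, 0 < τ.im → Y ≤ τ.im → ‖f τ‖ ≤ C * Real.exp (-(Real.pi * v * τ.im))

lemma EB.zero (v : ℕ) : EB (fun _ => 0) v := ⟨0, 0, le_rfl, fun τ _ _ => by simp⟩

lemma EB.add {f g : ℂ → ℂ} {v : ℕ} (hf : EB f v) (hg : EB g v) : EB (fun τ => f τ + g τ) v := by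
  obtain ⟨C, Y, hC, h⟩ := hf
  obtain ⟨C', Y', hC', h'⟩ := hg
  refine ⟨C + C', max Y Y', by positivity, fun τ h0 hY => (norm_add_le _ _).trans ?_⟩
  rw [add_mul]
  exact add_le_add (h τ h0 ((le_max_left _ _).trans hY)) (h' τ h0 ((le_max_right _ _).trans hY))

lemma EB.sum {ι : Type} (s : Finset ι) {f : ι → ℂ → ℂ} {v : ℕ} (hf : ∀ i ∈ s, EB (f i) v) : EB (fun τ => ∑ i ∈ s, f i τ) v := by
  classical
  induction s using Finset.induction_on with
  | empty => simpa using EB.zero v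
  | insert a s ha ih =>
    have := (hf a (by simp)).add (ih fun i hi => hf i (by simp [hi]))
    simpa [Finset.sum_insert ha] using this

lemma EB.mul {f g : ℂ → ℂ} {v w : ℕ} (hf : EB f v) (hg : EB g w) : EB (fun τ => f τ * g τ) (v + w) := by
  obtain ⟨C, Y, hC, h⟩ := hf
  obtain ⟨C', Y', hC', h'⟩ := hg
  refine ⟨C * C', max Y Y', by positivity, fun τ h0 hY => ?_⟩
  have a := h τ h0 ((le_max_left _ _).trans hY)
  have b := h' τ h0 ((le_max_right _ _).trans hY)
  rw [norm_mul]
  refine (mul_le_mul a b (norm_nonneg _) (by positivity)).trans (le_of_eq ?_)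
  rw [show C * Real.exp (-(Real.pi * v * τ.im)) * (C' * Real.exp (-(Real.pi * w * τ.im))) =
    C * C' * (Real.exp (-(Real.pi * v * τ.im)) * Real.exp (-(Real.pi * w * τ.im))) by ring, ← Real.exp_add]
  congr 2; push_cast; ring

lemma EB.const (c : ℂ) : EB (fun _ => c) 0 := ⟨‖c‖, 0, norm_nonneg _, fun τ _ _ => by simp⟩

lemma EB.pow {f : ℂ → ℂ} {v : ℕ} (hf : EB f v) (n : ℕ) : EB (fun τ => f τ ^ n) (n * v) := by
  induction n with
  | zero => simpa using EB.const 1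
  | succ n ih =>
    have := ih.mul hf
    rw [show (n + 1) * v = n * v + v by ring]
    simpa [pow_succ] using this

lemma EB.weaken {f : ℂ → ℂ} {v w : ℕ} (hf : EB f v) (h : w ≤ v) : EB f w := by
  obtain ⟨C, Y, hC, h'⟩ := hf
  refine ⟨C, Y, hC, fun τ h0 hY => (h' τ h0 hY).trans ?_⟩
  have : (w:ℝ) ≤ v := by exact_mod_cast h
  gcongr

lemma psi_EB (σ : SLZ) : EB (psi σ) 0 ∧ (¬ Even (σ 1 0) → EB (psi σ) 1) := by
  obtain ⟨C, hC, h⟩ := psi_bound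
  have h2 : ¬ Even (σ 1 0) → EB (psi σ) 1 := fun hne => ⟨C, 2, hC, fun τ h0 hY => by simpa using (h σ τ hY).2 hne⟩
  refine ⟨?_, h2⟩
  by_cases he : Even (σ 1 0)
  · have e1 : EB (fun τ => psi σ τ - 3 * LL0) 1 := ⟨C, 2, hC, fun τ h0 hY => by simpa using (h σ τ hY).1 he⟩
    have := (e1.weaken (Nat.zero_le 1)).add (EB.const (3 * LL0))
    simpa using this
  · exact (h2 he).weaken (Nat.zero_le _)

lemma lc_EB (hG : Fam j k G act) {γ : Γ} {i m : ℕ} (ho : OrdV G γ i m) {τ1 : ℂ} (h1 : 0 < τ1.im) {v : ℕ}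
    (h : ∀ l, i ≤ l → l ≤ j → v ≤ 1 ∨ ∀ γ, OrdV G γ l v) : EB (LC G γ i m τ1) v := lc_bound hG ho h1 h

lemma sum_one : ∑ c : SLF, ((1:ℕ) : ℤ) = 6 := by decide +kernel
lemma sum_v (x y : ℕ) : ∑ c : SLF, (((if c 1 0 = 0 then x else y : ℕ)) : ℤ) = 2 * x + 4 * y := by
  have h1 : (Finset.univ.filter (fun c : SLF => c 1 0 = 0)).card = 2 := by decide +kernel
  have h2 : (Finset.univ.filter (fun c : SLF => ¬ c 1 0 = 0)).card = 4 := by decide +kernel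
  simp only [Nat.cast_ite]
  rw [Finset.sum_ite, Finset.sum_const, Finset.sum_const, h1, h2]
  simp

lemma act_lc (hG : Fam j k G act) (γ : Γ) {ρ σ : SLZ} (h : redu ρ = redu σ) (i m : ℕ) {τ1 τ2 : ℂ} (h1 : 0 < τ1.im) (h2 : 0 < τ2.im) :
    LC G (act γ ρ) i m τ1 τ2 = LC G (act γ σ) i m τ1 τ2 :=
  lc_congr h1 h2 fun z hz => hG.act_mod γ ρ σ h i τ1 z τ2 hz

lemma poly_coeff_zero {n : ℕ} {c : ℕ → ℂ} (h : ∀ η : ℂ, ∑ i ∈ Finset.range n, c i * η ^ i = 0) : ∀ i < n, c i = 0 := by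
  intro i hi
  have : (∑ i ∈ Finset.range n, Polynomial.C (c i) * Polynomial.X ^ i : Polynomial ℂ) = 0 := by
    apply Polynomial.funext
    intro η
    simpa [Polynomial.eval_finset_sum] using h η
  have := congrArg (fun p => Polynomial.coeff p i) this
  simpa [Polynomial.finset_sum_coeff, Polynomial.coeff_C_mul, Polynomial.coeff_X_pow, hi] using this

lemma QQ_hol (hG : Fam j k G act) {a : ℕ} (hH : HV j G a) (e : ℕ → ℕ) (γ : Γ) {τ1 : ℂ} (h1 : 0 < τ1.im) (T : ℕ → ℂ → ℂ)
    (hT : ∀ i, DifferentiableOn ℂ (T i) {z | 0 < z.im}) :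
    DifferentiableOn ℂ (fun τ2 => QQ j G a e γ τ1 τ2 (fun i => T i τ2)) {z | 0 < z.im} := by
  unfold QQ
  refine DifferentiableOn.fun_sum fun i hi => ?_
  have hi : i ≤ j := by simpa [Nat.lt_succ_iff] using hi
  split_ifs
  · exact (lc_hol hG (hH γ i hi) h1).mul (hT i)
  · exact differentiableOn_const 0

lemma step1 (hG : Fam j k G act) {a : ℕ} (hH : HV j G a) (hka : k + a ≤ 5) (γ : Γ) {i : ℕ} (hi : 2 * i ≤ j) (hia : i ≤ a) 
    {τ1 τ2 : ℂ} (h1 : 0 < τ1.im) (h2 : 0 < τ2.im) : LC G γ i (mo j a i) τ1 τ2 = 0 := by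
  have key : ∀ η : ℂ, QQ j G a (fun i => i) γ τ1 τ2 (fun i => η ^ i) = 0 := by
    intro η
    have := lemV (k + a) (fun σ τ => QQ j G a (fun i => i) (act γ σ) τ1 τ (fun i => η ^ i)) (fun σ => ?_) ?_ ?_ (fun _ => 1) ?_ ?_ 1 τ2 h2
    · simpa only [hG.act_one] using this
    · exact QQ_hol hG hH _ _ h1 (fun i _ => η ^ i) (fun i => differentiableOn_const _)
    · intro ρ σ τ hτ
      rw [hG.act_mul]
      exact (slash_lim hG hH σ (act γ ρ) h1 hτ η).1
    · intro σ σ' h τ hτ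
      simp only [QQ, act_lc hG γ h _ _ h1 hτ]
    · intro σ
      have : EB (fun τ => QQ j G a (fun i => i) (act γ σ) τ1 τ (fun i => η ^ i)) 1 := by
        unfold QQ
        refine EB.sum _ fun i hi => ?_
        have hi : i ≤ j := by simpa [Nat.lt_succ_iff] using hi
        split_ifs
        · exact (lc_EB hG (hH _ i hi) h1 (v := 1) (fun _ _ _ => Or.inl le_rfl)).mul (EB.const (η ^ i))
        · exact EB.zero 1
      obtain ⟨C, Y, _, h⟩ := this
      exact ⟨C, Y, h⟩
    · rw [sum_one]; omega
  have := poly_coeff_zero (n := j + 1) (c := fun i => if mo j a i + i = a then LC G γ i (mo j a i) τ1 τ2 else 0) (fun η => by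
    have := key η
    unfold QQ at this
    simpa only [ite_mul, zero_mul] using this) i (by omega)
  simpa [show mo j a i + i = a by unfold mo; omega] using this

/-- polynomial version of the second leading form -/
def PPol (j : ℕ) (G : Γ → ℕ → ℂ → ℂ → ℂ → ℂ) (a : ℕ) (γ : Γ) (τ1 τ2 : ℂ) : Polynomial ℂ :=
  ∑ i ∈ Finset.range (j + 1), Polynomial.C (if mo j a i + (j - i) = a then LC G γ i (mo j a i) τ1 τ2 else 0) * Polynomial.X ^ (j - i)

lemma PPol_eval (a : ℕ) (γ : Γ) (τ1 τ2 η : ℂ) : 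
    (PPol j G a γ τ1 τ2).eval η = QQ j G a (fun i => j - i) γ τ1 τ2 (fun i => η ^ (j - i)) := by
  simp only [PPol, QQ, Polynomial.eval_finset_sum, Polynomial.eval_mul, Polynomial.eval_C, Polynomial.eval_pow, Polynomial.eval_X, ite_mul, zero_mul]

lemma PPol_deval (a : ℕ) (γ : Γ) (τ1 τ2 η : ℂ) : 
    (Polynomial.derivative (PPol j G a γ τ1 τ2)).eval η = QQ j G a (fun i => j - i) γ τ1 τ2 (fun i => ((j - i : ℕ) : ℂ) * η ^ (j - i - 1)) := by
  simp only [PPol, QQ, Polynomial.derivative_sum, Polynomial.derivative_C_mul, Polynomial.derivative_X_pow, Polynomial.eval_finset_sum, Polynomial.eval_mul, Polynomial.eval_C, Polynomial.eval_pow, Polynomial.eval_X, ite_mul, zero_mul]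

lemma PPol_coeff (a : ℕ) (γ : Γ) (τ1 τ2 : ℂ) (i : ℕ) (hi : i ≤ j) (h : mo j a i + (j - i) = a) :
    (PPol j G a γ τ1 τ2).coeff (j - i) = LC G γ i (mo j a i) τ1 τ2 := by
  unfold PPol
  rw [Polynomial.finset_sum_coeff, Finset.sum_eq_single i]
  · rw [if_pos h]; simp
  · intro b hb hne
    have hb : b ≤ j := by simpa [Nat.lt_succ_iff] using hb
    rw [Polynomial.coeff_C_mul, Polynomial.coeff_X_pow, if_neg (show ¬ (j - i = j - b) by omega), mul_zero]
  · intro h; simp at h; omega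

lemma PPol_deg (hj : j ≤ 8) (a : ℕ) (ha : 0 < a) (γ : Γ) (τ1 τ2 : ℂ) (hja : j ≤ 2 * a) : (PPol j G a γ τ1 τ2).natDegree ≤ 4 := by
  unfold PPol
  refine Polynomial.natDegree_sum_le_of_forall_le _ _ fun i hi => ?_
  have hi : i ≤ j := by simpa [Nat.lt_succ_iff] using hi
  split_ifs with h
  · refine (Polynomial.natDegree_C_mul_X_pow_le _ _).trans ?_
    unfold mo at h; omega
  · simp

lemma PPol_slash (hG : Fam j k G act) {a : ℕ} (hH : HV j G a) (σ : SLZ) (γ : Γ) {τ1 τ2 : ℂ} (h1 : 0 < τ1.im) (h2 : 0 < τ2.im) :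
    PPol j G a (act γ σ) τ1 τ2 = Polynomial.C (JJ σ τ2 ^ (-(k + j + a))) *
      (PPol j G a γ τ1 (MM σ τ2)).comp (Polynomial.C (JJ σ τ2 ^ 2) * Polynomial.X - Polynomial.C (σ 1 0 * JJ σ τ2)) := by
  apply Polynomial.funext
  intro η
  rw [PPol_eval, (slash_lim hG hH σ γ h1 h2 η).2]
  simp [PPol_eval]

lemma three_double {p : Polynomial ℂ} (hp : p.natDegree ≤ 4) {x y z : ℂ} (hxy : x ≠ y) (hxz : x ≠ z) (hyz : y ≠ z)
    (h : ∀ t ∈ ({x, y, z} : Set ℂ), p.eval t = 0 ∧ p.derivative.eval t = 0) : p = 0 := by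
  by_contra hne
  have hc : ∀ t ∈ ({x, y, z} : Set ℂ), 2 ≤ p.roots.count t := by
    intro t ht
    rw [Polynomial.count_roots]
    exact (Polynomial.one_lt_rootMultiplicity_iff_isRoot hne).2 (h t ht)
  have hle : ({x, x, y, y, z, z} : Multiset ℂ) ≤ p.roots := by
    rw [Multiset.le_iff_count]
    intro t
    have hx := hc x (by simp)
    have hy := hc y (by simp)
    have hz := hc z (by simp)
    simp only [Multiset.insert_eq_cons, Multiset.count_cons, Multiset.count_singleton]
    by_cases t1 : t = x
    · subst t1; simp [-Polynomial.count_roots, hxy, hxz]; omega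
    by_cases t2 : t = y
    · subst t2; simp [-Polynomial.count_roots, t1, hyz]; omega
    by_cases t3 : t = z
    · subst t3; simp [-Polynomial.count_roots, t1, t2]; omega
    · simp [t1, t2, t3]
  have := (Multiset.card_le_card hle).trans (p.card_roots')
  simp at this
  omega

lemma step2_gen (hG : Fam j k G act) (hj : j ≤ 8) (hk : k ≤ 2) {a : ℕ} (hH : HV j G a) (ha : 4 ≤ a) (γ : Γ) (σ : SLZ)
    {τ1 τ2 : ℂ} (h1 : 0 < τ1.im) (h2 : 0 < τ2.im) : 
    (PPol j G a (act γ σ) τ1 τ2).eval (psi σ τ2) = 0 ∧ (Polynomial.derivative (PPol j G a (act γ σ) τ1 τ2)).eval (psi σ τ2) = 0 := by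
  have hmod : ∀ σ σ' : SLZ, redu σ = redu σ' → ∀ τ : ℂ, 0 < τ.im → PPol j G a (act γ σ) τ1 τ = PPol j G a (act γ σ') τ1 τ := by
    intro σ σ' h τ hτ
    simp only [PPol, act_lc hG γ h _ _ h1 hτ]
  have hlc : ∀ (σ : SLZ) (i : ℕ), i ≤ j → mo j a i + (j - i) = a → EB (LC G (act γ σ) i (mo j a i) τ1) (mo j a i) := by
    intro σ i hi hm
    refine lc_EB hG (hH _ i hi) h1 fun l hl hlj => Or.inr fun γ => (hH γ l hlj).mono ?_
    unfold mo at hm ⊢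
    omega
  have hlc1 : ∀ (σ : SLZ) (i : ℕ), i ≤ j → EB (LC G (act γ σ) i (mo j a i) τ1) 1 := by
    intro σ i hi
    exact lc_EB hG (hH _ i hi) h1 fun l hl hlj => Or.inl le_rfl
  have hiff : ∀ σ : SLZ, redu σ 1 0 = 0 ↔ Even (σ 1 0) := fun σ => (even_iff_redu σ 1 0).symm
  constructor
  · refine lemV (k + j + a) (fun σ τ => (PPol j G a (act γ σ) τ1 τ).eval (psi σ τ)) (fun σ => ?_) ?_ ?_
      (fun c => if c 1 0 = 0 then 1 else a) ?_ ?_ σ τ2 h2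
    · simp only [PPol_eval]
      exact QQ_hol hG hH _ _ h1 (fun i τ => psi σ τ ^ (j - i)) (fun i => (psi_hol σ).pow _)
    · intro ρ σ τ hτ
      rw [hG.act_mul, PPol_slash hG hH σ _ h1 hτ, psi_cocycle ρ σ hτ]
      simp
    · intro σ σ' h τ hτ
      rw [hmod σ σ' h τ hτ, psi_mod σ σ' h hτ]
    · intro σ
      simp only [hiff, PPol_eval]
      have : EB (fun τ => QQ j G a (fun i => j - i) (act γ σ) τ1 τ fun i => psi σ τ ^ (j - i)) (if Even (σ 1 0) then 1 else a) := by
        unfold QQ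
        refine EB.sum _ fun i hi => ?_
        have hi : i ≤ j := by simpa [Nat.lt_succ_iff] using hi
        by_cases hm : mo j a i + (j - i) = a
        · simp only [if_pos hm]
          split_ifs with he
          · simpa using (hlc1 σ i hi).mul ((psi_EB σ).1.pow (j - i))
          · have := (hlc σ i hi hm).mul (((psi_EB σ).2 he).pow (j - i))
            rwa [mul_one, hm] at this
        · simp only [if_neg hm]; exact EB.zero _
      obtain ⟨C, Y, _, h⟩ := this
      exact ⟨C, Y, h⟩
    · rw [sum_v]; push_cast; omega
  · refine lemV (k + j + a - 2) (fun σ τ => (Polynomial.derivative (PPol j G a (act γ σ) τ1 τ)).eval (psi σ τ)) (fun σ => ?_) ?_ ?_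
      (fun c => if c 1 0 = 0 then 1 else a - 1) ?_ ?_ σ τ2 h2
    · simp only [PPol_deval]
      exact QQ_hol hG hH _ _ h1 (fun i τ => ((j - i : ℕ) : ℂ) * psi σ τ ^ (j - i - 1)) (fun i => ((psi_hol σ).pow _).const_mul _)
    · intro ρ σ τ hτ
      rw [hG.act_mul, PPol_slash hG hH σ _ h1 hτ, psi_cocycle ρ σ hτ]
      have hJ := JJ_ne σ hτ
      rw [Polynomial.derivative_C_mul, Polynomial.derivative_comp]
      simp only [Polynomial.eval_mul, Polynomial.eval_C, Polynomial.eval_comp, Polynomial.derivative_sub, Polynomial.derivative_C_mul,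
        Polynomial.derivative_X, Polynomial.derivative_C, Polynomial.eval_sub, Polynomial.eval_X, mul_one, sub_zero]
      rw [show -(k + j + a - 2) = -(k + j + a) + 2 by ring, zpow_add₀ hJ]
      norm_cast
      ring
    · intro σ σ' h τ hτ
      rw [hmod σ σ' h τ hτ, psi_mod σ σ' h hτ]
    · intro σ
      simp only [hiff, PPol_deval]
      have : EB (fun τ => QQ j G a (fun i => j - i) (act γ σ) τ1 τ fun i => ((j - i : ℕ) : ℂ) * psi σ τ ^ (j - i - 1)) (if Even (σ 1 0) then 1 else a - 1) := by
        unfold QQ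
        refine EB.sum _ fun i hi => ?_
        have hi : i ≤ j := by simpa [Nat.lt_succ_iff] using hi
        by_cases hm : mo j a i + (j - i) = a
        · simp only [if_pos hm]
          by_cases hji : j - i = 0
          · simp only [hji, Nat.cast_zero, zero_mul, mul_zero]; exact EB.zero _
          split_ifs with he
          · simpa using (hlc1 σ i hi).mul ((EB.const ((j - i : ℕ) : ℂ)).mul ((psi_EB σ).1.pow (j - i - 1)))
          · have := (hlc σ i hi hm).mul ((EB.const ((j - i : ℕ) : ℂ)).mul (((psi_EB σ).2 he).pow (j - i - 1)))
            rwa [mul_one, zero_add, show mo j a i + (j - i - 1) = a - 1 by omega] at this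
        · simp only [if_neg hm]; exact EB.zero _
      obtain ⟨C, Y, _, h⟩ := this
      exact ⟨C, Y, h⟩
    · rw [sum_v]; push_cast [Nat.cast_sub (show 1 ≤ a by omega)]; omega

lemma step2 (hG : Fam j k G act) (hj : j ≤ 8) (hk : k ≤ 2) {a : ℕ} (hH : HV j G a) (ha : 4 ≤ a) (γ : Γ) {i : ℕ} (hij : i ≤ j) (hi : j ≤ 2 * i)
    {τ1 τ2 : ℂ} (h1 : 0 < τ1.im) (h2 : 0 < τ2.im) : LC G γ i (mo j a i) τ1 τ2 = 0 := by
  refine psi_kill (LC G γ i (mo j a i) τ1) (lc_hol hG (hH γ i hij) h1) (fun τ hτ d1 d2 d3 => ?_) τ2 h2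
  have key : ∀ σ : SLZ, (PPol j G a γ τ1 τ).eval (psi σ τ) = 0 ∧ (Polynomial.derivative (PPol j G a γ τ1 τ)).eval (psi σ τ) = 0 := by
    intro σ
    have := step2_gen hG hj hk hH ha (act γ σ⁻¹) σ h1 hτ
    rwa [← hG.act_mul, inv_mul_cancel, hG.act_one] at this
  have h0 : PPol j G a γ τ1 τ = 0 := by
    refine three_double (PPol_deg hj a (by omega) γ τ1 τ (by omega)) d1 d2 d3 ?_
    rintro t (rfl | rfl | rfl) <;> exact key _
  rw [← PPol_coeff a γ τ1 τ i hij (by unfold mo; omega), h0, Polynomial.coeff_zero]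

lemma HV_all (hG : Fam j k G act) (hj : j ≤ 8) (hk : k ≤ 2) (a : ℕ) : HV j G a := by
  induction a with
  | zero => intro γ i _; simpa [mo] using ord_zero γ i
  | succ a ih =>
    by_cases hka : k + a ≤ 5
    · have A : ∀ i, 2 * i ≤ j → ∀ γ, OrdV G γ i (mo j (a + 1) i) := by
        intro i hi γ
        by_cases hia : i ≤ a
        · have := lc_ord hG (ih γ i (by omega)) (fun τ1 τ2 h1 h2 => step1 hG ih hka γ hi hia h1 h2)
          rwa [show mo j a i + 1 = mo j (a + 1) i by unfold mo; omega] at this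
        · rw [show mo j (a + 1) i = 0 by unfold mo; omega]; exact ord_zero γ i
      intro γ i hi
      by_cases h : 2 * i ≤ j
      · exact A i h γ
      · have := ord_swap hG (show j - i ≤ j by omega) (A (j - i) (by omega)) γ
        rwa [show j - (j - i) = i by omega, show mo j (a + 1) (j - i) = mo j (a + 1) i by unfold mo; omega] at this
    · have A : ∀ i, i ≤ j → j ≤ 2 * i → ∀ γ, OrdV G γ i (mo j (a + 1) i) := by
        intro i hij hi γ
        have := lc_ord hG (ih γ i (by omega)) (fun τ1 τ2 h1 h2 => step2 hG hj hk ih (by omega) γ hij hi h1 h2)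
        rwa [show mo j a i + 1 = mo j (a + 1) i by unfold mo; omega] at this
      intro γ i hi
      by_cases h : j ≤ 2 * i
      · exact A i hi h γ
      · have := ord_swap hG (show j - i ≤ j by omega) (A (j - i) (by omega) (by omega)) γ
        rwa [show j - (j - i) = i by omega, show mo j (a + 1) (j - i) = mo j (a + 1) i by unfold mo; omega] at this

theorem Fam.vanish (hG : Fam j k G act) (hj : j ≤ 8) (hk : k ≤ 2) (γ : Γ) (i : ℕ) {τ1 z τ2 : ℂ} (h : (τ1, z, τ2) ∈ Om) :
    G γ i τ1 z τ2 = 0 := by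
  by_cases hi : j < i
  · exact hG.zero γ i hi τ1 z τ2
  have h1 : 0 < τ1.im := h.1
  have h2 : 0 < τ2.im := (Om_swap h).1
  have htop : analyticOrderAt (fun z => G γ i τ1 z τ2) 0 = ⊤ := by
    rw [ENat.eq_top_iff_forall_ge]
    intro m
    refine le_trans ?_ (HV_all hG hj hk (m + j) γ i (by omega) τ1 τ2 h1 h2)
    unfold mo
    exact_mod_cast (by omega)
  rw [analyticOrderAt_eq_top] at htop
  set U : Set ℂ := {z | z.im ^ 2 < τ1.im * τ2.im} with hU
  have hUo : IsOpen U := isOpen_lt (Complex.continuous_im.pow 2) continuous_const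
  have hUc : Convex ℝ U := by
    have : Convex ℝ ({x : ℝ | x ^ 2 < τ1.im * τ2.im}) := by
      have := (even_two.convexOn_pow (𝕜 := ℝ)).convex_lt (τ1.im * τ2.im)
      simpa using this
    exact this.linear_preimage Complex.imLm
  have han : AnalyticOnNhd ℂ (fun z => G γ i τ1 z τ2) U := by
    refine DifferentiableOn.analyticOnNhd (fun w hw => (hG.dz γ i ⟨h1, hw⟩).differentiableWithinAt) hUo
  exact han.eqOn_zero_of_preconnected_of_eventuallyEq_zero hUc.isPreconnected (x := z) (z₀ := 0) (by simp [hU]; positivity) htop h.2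
end

end

section

/-! block identities -/
lemma blk_mul (γ δ : Matrix (Fin 4) (Fin 4) ℤ) (r s : Fin 2) :
    blk (γ * δ) r s = blk γ r 0 * blk δ 0 s + blk γ r 1 * blk δ 1 s := by
  ext i j
  fin_cases r <;> fin_cases s <;> fin_cases i <;> fin_cases j <;>
    simp [blk, Matrix.mul_apply, Fin.sum_univ_four, Fin.sum_univ_two] <;> ring

lemma blk_tr (γ : Matrix (Fin 4) (Fin 4) ℤ) (r s : Fin 2) : blk γᵀ r s = (blk γ s r)ᵀ := by
  ext i j; simp [blk]

lemma blk_ct (γ : Matrix (Fin 4) (Fin 4) ℤ) (r s : Fin 2) : (blk γ s r)ᴴ = (blk γ s r)ᵀ := by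
  ext i j; simp [blk]

lemma blk_J : blk J4 0 0 = 0 ∧ blk J4 0 1 = 1 ∧ blk J4 1 0 = -1 ∧ blk J4 1 1 = 0 := by
  refine ⟨?_, ?_, ?_, ?_⟩ <;> ext i j <;> fin_cases i <;> fin_cases j <;> simp [blk, J4]

lemma blk_rel {γ : Matrix (Fin 4) (Fin 4) ℤ} (h : γ ∈ Sp4Z) :
    (blk γ 0 0)ᵀ * blk γ 1 0 = (blk γ 1 0)ᵀ * blk γ 0 0 ∧ (blk γ 0 1)ᵀ * blk γ 1 1 = (blk γ 1 1)ᵀ * blk γ 0 1 ∧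
    (blk γ 0 0)ᵀ * blk γ 1 1 = 1 + (blk γ 1 0)ᵀ * blk γ 0 1 ∧ (blk γ 1 1)ᵀ * blk γ 0 0 = 1 + (blk γ 0 1)ᵀ * blk γ 1 0 := by
  have h : γᵀ * J4 * γ = J4 := h
  obtain ⟨j1, j2, j3, j4⟩ := blk_J
  have key := fun r s => congrArg (fun M => blk M r s) h
  simp only [blk_mul, blk_tr] at key
  have k1 := key 0 0
  have k2 := key 1 1
  have k3 := key 0 1
  have k4 := key 1 0
  simp only [j1, j2, j3, j4, mul_zero, mul_one, zero_add, add_zero, mul_neg, neg_mul] at k1 k2 k3 k4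
  refine ⟨?_, ?_, ?_, ?_⟩
  · exact (neg_add_eq_zero.1 k1).symm
  · exact (neg_add_eq_zero.1 k2).symm
  · rw [neg_add_eq_iff_eq_add] at k3; rw [k3]; exact add_comm _ _
  · have : (blk γ 1 1)ᵀ * blk γ 0 0 = 1 + (blk γ 0 1)ᵀ * blk γ 1 0 := by
      rw [neg_add_eq_iff_eq_add] at k4; rw [k4]; abel
    exact this

def num (γ : Matrix (Fin 4) (Fin 4) ℤ) (τ : Fin 2 → Fin 2 → ℂ) : Matrix (Fin 2) (Fin 2) ℂ :=
  blk γ 0 0 * Matrix.of τ + blk γ 0 1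

lemma moeb_eq (γ : Matrix (Fin 4) (Fin 4) ℤ) (τ : Fin 2 → Fin 2 → ℂ) : Matrix.of (moeb γ τ) = num γ τ * (den γ τ)⁻¹ := rfl

lemma H2_iff (τ : Fin 2 → Fin 2 → ℂ) : τ ∈ H2 ↔ (Matrix.of τ).IsSymm ∧ ∀ v : Fin 2 → ℂ, v ≠ 0 → 0 < (star v ⬝ᵥ (Matrix.of τ *ᵥ v)).im := by
  unfold H2
  simp only [Set.mem_setOf_eq]
  refine and_congr_right fun hs => ?_
  have h01 : τ 1 0 = τ 0 1 := by have := congrFun (congrFun hs 0) 1; simpa using this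
  rw [Matrix.posDef_iff_dotProduct_mulVec]
  constructor
  · rintro ⟨_, h⟩ v hv
    have e : (star v ⬝ᵥ (Matrix.of τ *ᵥ v)).im = 
      (star (fun i => (v i).re) ⬝ᵥ ((Matrix.of fun i j => (τ i j).im) *ᵥ (fun i => (v i).re))) +
      (star (fun i => (v i).im) ⬝ᵥ ((Matrix.of fun i j => (τ i j).im) *ᵥ (fun i => (v i).im))) := by
      simp [Matrix.mulVec, dotProduct, Fin.sum_univ_two, h01]
      ring
    rw [e]
    by_cases hr : (fun i => (v i).re) = 0
    · have hi : (fun i => (v i).im) ≠ 0 := by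
        intro hi
        exact hv (funext fun i => Complex.ext (congrFun hr i) (congrFun hi i))
      rw [hr]
      have := h hi
      simpa using this
    · have h1 := h hr
      by_cases hi : (fun i => (v i).im) = 0
      · rw [hi]; simpa using h1
      · have := h hi
        linarith
  · intro h
    refine ⟨?_, ?_⟩
    · ext i j
      fin_cases i <;> fin_cases j <;> simp [h01]
    · intro x hx
      have := h (fun i => (x i : ℂ)) (by
        intro h0; apply hx; funext i
        have := congrFun h0 i; simpa using this)
      simpa [Matrix.mulVec, dotProduct, Fin.sum_univ_two, h01] using this

section
variable {γ : Matrix (Fin 4) (Fin 4) ℤ} {τ : Fin 2 → Fin 2 → ℂ}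

lemma key_herm (h : γ ∈ Sp4Z) (τ : Fin 2 → Fin 2 → ℂ) : (den γ τ)ᴴ * num γ τ - (num γ τ)ᴴ * den γ τ = Matrix.of τ - (Matrix.of τ)ᴴ := by
  obtain ⟨r1, r2, r3, r4⟩ := blk_rel h
  unfold den num
  simp only [Matrix.conjTranspose_add, Matrix.conjTranspose_mul, blk_ct]
  have e : ((of τ)ᴴ * (blk γ 1 0)ᵀ + (blk γ 1 1)ᵀ) * (blk γ 0 0 * of τ + blk γ 0 1) - ((of τ)ᴴ * (blk γ 0 0)ᵀ + (blk γ 0 1)ᵀ) * (blk γ 1 0 * of τ + blk γ 1 1)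
    = (of τ)ᴴ * ((blk γ 1 0)ᵀ * blk γ 0 0 - (blk γ 0 0)ᵀ * blk γ 1 0) * of τ + (of τ)ᴴ * ((blk γ 1 0)ᵀ * blk γ 0 1 - (blk γ 0 0)ᵀ * blk γ 1 1)
     + ((blk γ 1 1)ᵀ * blk γ 0 0 - (blk γ 0 1)ᵀ * blk γ 1 0) * of τ + ((blk γ 1 1)ᵀ * blk γ 0 1 - (blk γ 0 1)ᵀ * blk γ 1 1) := by
    noncomm_ring
  rw [e, r1, r2, r3, r4]
  noncomm_ring

lemma key_symm (h : γ ∈ Sp4Z) (hs : (Matrix.of τ).IsSymm) : (den γ τ)ᵀ * num γ τ = (num γ τ)ᵀ * den γ τ := by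
  obtain ⟨r1, r2, r3, r4⟩ := blk_rel h
  unfold den num
  rw [← sub_eq_zero]
  simp only [Matrix.transpose_add, Matrix.transpose_mul, hs.eq]
  have e : (of τ * (blk γ 1 0)ᵀ + (blk γ 1 1)ᵀ) * (blk γ 0 0 * of τ + blk γ 0 1) - (of τ * (blk γ 0 0)ᵀ + (blk γ 0 1)ᵀ) * (blk γ 1 0 * of τ + blk γ 1 1)
    = of τ * ((blk γ 1 0)ᵀ * blk γ 0 0 - (blk γ 0 0)ᵀ * blk γ 1 0) * of τ + of τ * ((blk γ 1 0)ᵀ * blk γ 0 1 - (blk γ 0 0)ᵀ * blk γ 1 1)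
     + ((blk γ 1 1)ᵀ * blk γ 0 0 - (blk γ 0 1)ᵀ * blk γ 1 0) * of τ + ((blk γ 1 1)ᵀ * blk γ 0 1 - (blk γ 0 1)ᵀ * blk γ 1 1) := by
    noncomm_ring
  rw [e, r1, r2, r3, r4]
  noncomm_ring

lemma dp_herm (A : Matrix (Fin 2) (Fin 2) ℂ) (v : Fin 2 → ℂ) : star (star v ⬝ᵥ (A *ᵥ v)) = star v ⬝ᵥ (Aᴴ *ᵥ v) := by
  simp [Matrix.mulVec, dotProduct, Fin.sum_univ_two, Matrix.conjTranspose_apply]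
  ring

lemma key_im (h : γ ∈ Sp4Z) (u : Fin 2 → ℂ) :
    (star (den γ τ *ᵥ u) ⬝ᵥ (num γ τ *ᵥ u)).im = (star u ⬝ᵥ (Matrix.of τ *ᵥ u)).im := by
  have e1 : star (den γ τ *ᵥ u) ⬝ᵥ (num γ τ *ᵥ u) = star u ⬝ᵥ (((den γ τ)ᴴ * num γ τ) *ᵥ u) := by
    rw [Matrix.star_mulVec, ← Matrix.mulVec_mulVec, Matrix.dotProduct_mulVec, Matrix.dotProduct_mulVec, Matrix.dotProduct_mulVec]
  have aux : ∀ A : Matrix (Fin 2) (Fin 2) ℂ, ((star u ⬝ᵥ (A *ᵥ u)).im : ℂ) * (2 * I) = star u ⬝ᵥ ((A - Aᴴ) *ᵥ u) := by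
    intro A
    rw [Matrix.sub_mulVec, dotProduct_sub, ← dp_herm]
    have := Complex.sub_conj (star u ⬝ᵥ (A *ᵥ u))
    rw [show star (star u ⬝ᵥ (A *ᵥ u)) = (starRingEnd ℂ) (star u ⬝ᵥ (A *ᵥ u)) from rfl, this]
    push_cast; ring
  have a1 := aux ((den γ τ)ᴴ * num γ τ)
  have a2 := aux (Matrix.of τ)
  rw [Matrix.conjTranspose_mul, Matrix.conjTranspose_conjTranspose, key_herm h τ, ← a2] at a1
  rw [e1]
  have : (2 * I) ≠ 0 := by simp
  exact_mod_cast mul_right_cancel₀ this a1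

lemma den_det (h : γ ∈ Sp4Z) (hτ : τ ∈ H2) : (den γ τ).det ≠ 0 := by
  intro h0
  obtain ⟨u, hu, hq⟩ := Matrix.exists_mulVec_eq_zero_iff.2 h0
  have := ((H2_iff τ).1 hτ).2 u hu
  rw [← key_im h, hq] at this
  simp at this

lemma moeb_mem (h : γ ∈ Sp4Z) (hτ : τ ∈ H2) : moeb γ τ ∈ H2 := by
  have hd := den_det h hτ
  have hU : IsUnit (den γ τ).det := isUnit_iff_ne_zero.2 hd
  obtain ⟨hs, hp⟩ := (H2_iff τ).1 hτ
  refine (H2_iff _).2 ⟨?_, ?_⟩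
  · rw [moeb_eq]
    unfold Matrix.IsSymm
    rw [Matrix.transpose_mul, Matrix.transpose_nonsing_inv]
    have k := key_symm h hs
    have hUt : IsUnit ((den γ τ)ᵀ).det := by rwa [Matrix.det_transpose]
    calc ((den γ τ)ᵀ)⁻¹ * (num γ τ)ᵀ = ((den γ τ)ᵀ)⁻¹ * ((num γ τ)ᵀ * den γ τ) * (den γ τ)⁻¹ := by
          rw [← Matrix.mul_assoc, Matrix.mul_nonsing_inv_cancel_right _ _ hU]
      _ = ((den γ τ)ᵀ)⁻¹ * ((den γ τ)ᵀ * num γ τ) * (den γ τ)⁻¹ := by rw [k]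
      _ = _ := by rw [Matrix.nonsing_inv_mul_cancel_left _ _ hUt]
  · intro v hv
    rw [moeb_eq]
    set u := (den γ τ)⁻¹ *ᵥ v with hu
    have hvu : v = den γ τ *ᵥ u := by
      rw [hu, Matrix.mulVec_mulVec, Matrix.mul_nonsing_inv _ hU, Matrix.one_mulVec]
    have hu0 : u ≠ 0 := by
      intro h0; rw [h0, Matrix.mulVec_zero] at hvu; exact hv hvu
    rw [← Matrix.mulVec_mulVec, ← hu, hvu, key_im h]
    exact hp u hu0

lemma den_mul {δ : Matrix (Fin 4) (Fin 4) ℤ} (γ) (h : δ ∈ Sp4Z) (hτ : τ ∈ H2) :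
    den (γ * δ) τ = den γ (moeb δ τ) * den δ τ ∧ num (γ * δ) τ = num γ (moeb δ τ) * den δ τ := by
  have hU : IsUnit (den δ τ).det := isUnit_iff_ne_zero.2 (den_det h hτ)
  have hM : Matrix.of (moeb δ τ) * den δ τ = num δ τ := by
    rw [moeb_eq, Matrix.nonsing_inv_mul_cancel_right _ _ hU]
  constructor
  · rw [show den γ (moeb δ τ) = blk γ 1 0 * Matrix.of (moeb δ τ) + blk γ 1 1 from rfl, Matrix.add_mul, Matrix.mul_assoc, hM]
    unfold den num
    rw [blk_mul, blk_mul]; noncomm_ring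
  · rw [show num γ (moeb δ τ) = blk γ 0 0 * Matrix.of (moeb δ τ) + blk γ 0 1 from rfl, Matrix.add_mul, Matrix.mul_assoc, hM]
    unfold den num
    rw [blk_mul, blk_mul]; noncomm_ring

lemma moeb_mul {δ : Matrix (Fin 4) (Fin 4) ℤ} (hγ : γ ∈ Sp4Z) (h : δ ∈ Sp4Z) (hτ : τ ∈ H2) :
    moeb (γ * δ) τ = moeb γ (moeb δ τ) := by
  have hU : IsUnit (den δ τ).det := isUnit_iff_ne_zero.2 (den_det h hτ)
  apply Matrix.of.injective
  rw [moeb_eq, moeb_eq, (den_mul γ h hτ).1, (den_mul γ h hτ).2, Matrix.mul_inv_rev, Matrix.mul_assoc,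
    Matrix.mul_nonsing_inv_cancel_left _ _ hU]

lemma Sp4Z_mul {δ : Matrix (Fin 4) (Fin 4) ℤ} (hγ : γ ∈ Sp4Z) (h : δ ∈ Sp4Z) : γ * δ ∈ Sp4Z := by
  have h1 : γᵀ * J4 * γ = J4 := hγ
  have h2 : δᵀ * J4 * δ = J4 := h
  show (γ * δ)ᵀ * J4 * (γ * δ) = J4
  rw [Matrix.transpose_mul, show δᵀ * γᵀ * J4 * (γ * δ) = δᵀ * (γᵀ * J4 * γ) * δ by noncomm_ring, h1, h2]

def sinv (γ : Matrix (Fin 4) (Fin 4) ℤ) : Matrix (Fin 4) (Fin 4) ℤ := -(J4 * γᵀ * J4)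

lemma JJ4 : J4 * J4 = -1 := by decide +kernel
lemma J4t : J4ᵀ = -J4 := by decide +kernel

lemma sinv_mul (h : γ ∈ Sp4Z) : sinv γ * γ = 1 := by
  have h1 : γᵀ * J4 * γ = J4 := h
  unfold sinv
  rw [show -(J4 * γᵀ * J4) * γ = -(J4 * (γᵀ * J4 * γ)) by noncomm_ring, h1, JJ4, neg_neg]

lemma mul_sinv (h : γ ∈ Sp4Z) : γ * sinv γ = 1 := mul_eq_one_comm.1 (sinv_mul h)

lemma sinv_mem (h : γ ∈ Sp4Z) : sinv γ ∈ Sp4Z := by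
  have h1 : γᵀ * J4 * γ = J4 := h
  have h2 := mul_sinv h
  have h3 : (sinv γ)ᵀ * γᵀ = 1 := by rw [← Matrix.transpose_mul, h2, Matrix.transpose_one]
  show (sinv γ)ᵀ * J4 * sinv γ = J4
  calc (sinv γ)ᵀ * J4 * sinv γ = (sinv γ)ᵀ * (γᵀ * J4 * γ) * sinv γ := by rw [h1]
    _ = ((sinv γ)ᵀ * γᵀ) * J4 * (γ * sinv γ) := by noncomm_ring
    _ = J4 := by rw [h2, h3, one_mul, mul_one]
end

end

section

def evv (j : ℕ) (v : Fin (j+1) → ℂ) (x y : ℂ) : ℂ := ∑ l : Fin (j+1), v l * x ^ (j - (l:ℕ)) * y ^ (l:ℕ)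

def symP (j : ℕ) (m : Matrix (Fin 2) (Fin 2) ℂ) (l : ℕ) : Polynomial ℂ :=
  (Polynomial.C (m 0 0) + Polynomial.C (m 1 0) * Polynomial.X) ^ (j - l) *
    (Polynomial.C (m 0 1) + Polynomial.C (m 1 1) * Polynomial.X) ^ l

lemma symP_deg (j : ℕ) (m) (l : ℕ) (hl : l ≤ j) : (symP j m l).natDegree < j + 1 := by
  have h1 : ∀ a b : ℂ, (Polynomial.C a + Polynomial.C b * Polynomial.X).natDegree ≤ 1 := by
    intro a b
    rw [add_comm]; exact Polynomial.natDegree_linear_le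
  have h2 := Polynomial.natDegree_pow_le_of_le (j - l) (h1 (m 0 0) (m 1 0))
  have h3 := Polynomial.natDegree_pow_le_of_le l (h1 (m 0 1) (m 1 1))
  have := Polynomial.natDegree_mul_le_of_le h2 h3
  unfold symP; omega

lemma evv_one (j : ℕ) (m v) (y : ℂ) :
    evv j (symAct j m v) 1 y = ∑ l : Fin (j+1), v l * (m 0 0 + m 1 0 * y) ^ (j - (l:ℕ)) * (m 0 1 + m 1 1 * y) ^ (l:ℕ) := by
  unfold evv symAct
  simp only [one_pow, mul_one, Finset.sum_mul]
  rw [Finset.sum_comm]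
  refine Finset.sum_congr rfl fun l _ => ?_
  have : (symP j m l).eval y = ∑ i : Fin (j+1), symCoeff j m l i * y ^ (i:ℕ) := by
    rw [Polynomial.eval_eq_sum_range' (symP_deg j m l (by omega)), Finset.sum_range]
    rfl
  have e : (symP j m l).eval y = (m 0 0 + m 1 0 * y) ^ (j - (l:ℕ)) * (m 0 1 + m 1 1 * y) ^ (l:ℕ) := by
    simp [symP]
  rw [mul_assoc, ← e, this, Finset.mul_sum]
  refine Finset.sum_congr rfl fun i _ => by ring

lemma evv_sym (j : ℕ) (m v) (x y : ℂ) :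
    evv j (symAct j m v) x y = evv j v (m 0 0 * x + m 1 0 * y) (m 0 1 * x + m 1 1 * y) := by
  have hne : ∀ x : ℂ, x ≠ 0 → evv j (symAct j m v) x y = evv j v (m 0 0 * x + m 1 0 * y) (m 0 1 * x + m 1 1 * y) := by
    intro x hx
    have h1 : ∀ w : Fin (j+1) → ℂ, ∀ a b : ℂ, evv j w (x * a) (x * b) = x ^ j * evv j w a b := by
      intro w a b
      unfold evv
      rw [Finset.mul_sum]
      refine Finset.sum_congr rfl fun l _ => ?_
      have : x ^ j = x ^ (j - (l:ℕ)) * x ^ (l:ℕ) := by rw [← pow_add]; congr 1; omega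
      rw [this]; ring
    have h2 := h1 (symAct j m v) 1 (y / x)
    rw [mul_one, mul_div_cancel₀ _ hx] at h2
    rw [h2, evv_one]
    have h3 := h1 v (m 0 0 + m 1 0 * (y / x)) (m 0 1 + m 1 1 * (y / x))
    have e1 : x * (m 0 0 + m 1 0 * (y / x)) = m 0 0 * x + m 1 0 * y := by field_simp
    have e2 : x * (m 0 1 + m 1 1 * (y / x)) = m 0 1 * x + m 1 1 * y := by field_simp
    rw [e1, e2] at h3
    rw [h3]; rfl
  have c1 : Continuous fun x : ℂ => evv j (symAct j m v) x y := by unfold evv; fun_prop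
  have c2 : Continuous fun x : ℂ => evv j v (m 0 0 * x + m 1 0 * y) (m 0 1 * x + m 1 1 * y) := by unfold evv; fun_prop
  exact congrFun (Continuous.ext_on (dense_compl_singleton (0:ℂ)) c1 c2 fun x hx => hne x hx) x

lemma evv_inj (j : ℕ) {v w : Fin (j+1) → ℂ} (h : ∀ x y, evv j v x y = evv j w x y) : v = w := by
  funext i
  have := poly_coeff_zero (n := j+1) (c := fun i => if h : i < j+1 then v ⟨i,h⟩ - w ⟨i,h⟩ else 0) (fun η => by
    have := h 1 η
    unfold evv at this
    simp only [one_pow, mul_one] at this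
    rw [Finset.sum_range]
    simp only [Fin.is_lt, dite_true, Fin.eta, sub_mul, Finset.sum_sub_distrib]
    rw [this, sub_self]) i i.2
  simp only [Fin.is_lt, dite_true, Fin.eta] at this
  exact sub_eq_zero.1 this

lemma symAct_mul (j : ℕ) (m n v) : symAct j (m * n) v = symAct j m (symAct j n v) := by
  apply evv_inj; intro x y
  rw [evv_sym, evv_sym, evv_sym]
  simp only [Matrix.mul_apply, Fin.sum_univ_two]
  congr 1 <;> ring

lemma symAct_one (j : ℕ) (v) : symAct j 1 v = v := by
  apply evv_inj; intro x y
  rw [evv_sym]; simp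

variable {γ δ : Matrix (Fin 4) (Fin 4) ℤ} {τ : Fin 2 → Fin 2 → ℂ} {j : ℕ} {k : ℤ} {F : (Fin 2 → Fin 2 → ℂ) → (Fin (j + 1) → ℂ)}

lemma slash_mul (hγ : γ ∈ Sp4Z) (hδ : δ ∈ Sp4Z) (hτ : τ ∈ H2) :
    slashS j k (γ * δ) F τ = ((den δ τ).det ^ (-k)) • symAct j (den δ τ)⁻¹ (slashS j k γ F (moeb δ τ)) := by
  unfold slashS
  rw [moeb_mul hγ hδ hτ, (den_mul γ hδ hτ).1, Matrix.mul_inv_rev, symAct_mul, symAct_smul, smul_smul, Matrix.det_mul, mul_zpow, mul_comm]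

lemma slash_lev (hF : IsSiegelCuspForm j k Sp4Z2 (fun _ => 1) F) (h : δ ∈ Sp4Z2) (hτ : τ ∈ H2) : slashS j k δ F τ = F τ := by
  unfold slashS
  have hd := den_det h.1 hτ
  rw [hF.2.1 δ h τ hτ, one_smul, wt, symAct_smul, smul_smul, ← zpow_add₀ hd, neg_add_cancel, _root_.zpow_zero, one_smul,
    ← symAct_mul, Matrix.nonsing_inv_mul _ (isUnit_iff_ne_zero.2 hd), symAct_one]

lemma slash_congr (hF : IsSiegelCuspForm j k Sp4Z2 (fun _ => 1) F) (hγ : γ ∈ Sp4Z) (hδ : δ ∈ Sp4Z)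
    (h : ∀ i j, (γ i j : ZMod 2) = δ i j) (hτ : τ ∈ H2) : slashS j k γ F τ = slashS j k δ F τ := by
  have e : γ = (γ * sinv δ) * δ := by rw [Matrix.mul_assoc, sinv_mul hδ, Matrix.mul_one]
  have hm : γ * sinv δ ∈ Sp4Z2 := by
    refine ⟨Sp4Z_mul hγ (sinv_mem hδ), ?_⟩
    have h1 : γ.map (Int.castRingHom (ZMod 2)) = δ.map (Int.castRingHom (ZMod 2)) := by ext a b; exact h a b
    have h2 : (γ * sinv δ).map (Int.castRingHom (ZMod 2)) = (1 : Matrix (Fin 4) (Fin 4) ℤ).map (Int.castRingHom (ZMod 2)) := by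
      rw [Matrix.map_mul, h1, ← Matrix.map_mul, mul_sinv hδ]
    intro a b
    have := congrFun (congrFun h2 a) b
    simp only [Matrix.map_apply, Matrix.one_apply] at this
    rw [show (((γ * sinv δ) a b : ℤ) : ZMod 2) = Int.castRingHom (ZMod 2) ((γ * sinv δ) a b) from rfl, this]
    split_ifs <;> simp
  conv_lhs => rw [e]
  rw [slash_mul hm.1 hδ hτ, slash_lev hF hm (moeb_mem hδ hτ)]
  rfl

def mk2 (τ1 z τ2 : ℂ) : Fin 2 → Fin 2 → ℂ := ![![τ1, z], ![z, τ2]]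

lemma mk2_mem {τ1 z τ2 : ℂ} (h : (τ1, z, τ2) ∈ Om) : mk2 τ1 z τ2 ∈ H2 := by
  obtain ⟨h1, h2⟩ := h
  simp only at h1 h2
  refine ⟨?_, ?_⟩
  · ext a b; fin_cases a <;> fin_cases b <;> simp [mk2]
  · rw [Matrix.posDef_iff_dotProduct_mulVec]
    refine ⟨?_, ?_⟩
    · ext a b; fin_cases a <;> fin_cases b <;> simp [mk2]
    · intro v hv
      simp [mk2, Matrix.mulVec, dotProduct, Fin.sum_univ_two]
      by_cases h0 : v 1 = 0
      · have : v 0 ≠ 0 := by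
          intro h; apply hv; ext a; fin_cases a <;> simp [h, h0]
        rw [h0]; simp; 
        nlinarith [mul_pos h1 (mul_self_pos.2 this)]
      · have := mul_self_pos.2 h0
        have h3 : 0 < τ1.im * (v 0 * (τ1.im * v 0 + z.im * v 1) + v 1 * (z.im * v 0 + τ2.im * v 1)) := by
          nlinarith [sq_nonneg (τ1.im * v 0 + z.im * v 1), mul_pos (sub_pos.2 h2) this]
        exact pos_of_mul_pos_right h3 h1.le

lemma H2_mk2 (h : τ ∈ H2) : τ = mk2 (τ 0 0) (τ 0 1) (τ 1 1) ∧ (τ 0 0, τ 0 1, τ 1 1) ∈ Om := by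
  obtain ⟨hs, hp⟩ := h
  have h01 : τ 1 0 = τ 0 1 := by have := congrFun (congrFun hs 0) 1; simpa using this
  refine ⟨?_, ?_, ?_⟩
  · funext a b; fin_cases a <;> fin_cases b <;> simp [mk2, h01]
  · have := hp.diag_pos (i := 0); simpa using this
  · have := hp.det_pos; rw [Matrix.det_fin_two] at this; simp [h01] at this ⊢; nlinarith

end

section

variable {γ δ : Matrix (Fin 4) (Fin 4) ℤ} {τ : Fin 2 → Fin 2 → ℂ} {j : ℕ} {k : ℤ} {F : (Fin 2 → Fin 2 → ℂ) → (Fin (j + 1) → ℂ)}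

def trS (s b : ℤ) : Matrix (Fin 4) (Fin 4) ℤ := !![1,0,0,s; 0,1,s,b; 0,0,1,0; 0,0,0,1]
def uS (l : ℤ) : Matrix (Fin 4) (Fin 4) ℤ := !![1,0,0,0; l,1,0,0; 0,0,1,-l; 0,0,0,1]
def swS : Matrix (Fin 4) (Fin 4) ℤ := !![0,1,0,0; 1,0,0,0; 0,0,0,1; 0,0,1,0]
def ioS (σ : SLZ) : Matrix (Fin 4) (Fin 4) ℤ := !![1,0,0,0; 0,σ 0 0,0,σ 0 1; 0,0,1,0; 0,σ 1 0,0,σ 1 1]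

lemma trS_mem (s b) : trS s b ∈ Sp4Z := by
  show _ = _
  ext a c; fin_cases a <;> fin_cases c <;> simp [trS, J4, Matrix.mul_apply, Fin.sum_univ_four]
lemma uS_mem (l) : uS l ∈ Sp4Z := by
  show _ = _
  ext a c; fin_cases a <;> fin_cases c <;> simp [uS, J4, Matrix.mul_apply, Fin.sum_univ_four]
lemma swS_mem : swS ∈ Sp4Z := by
  show _ = _
  ext a c; fin_cases a <;> fin_cases c <;> simp [swS, J4, Matrix.mul_apply, Fin.sum_univ_four]
lemma SL_det (σ : SLZ) : σ 0 0 * σ 1 1 - σ 0 1 * σ 1 0 = 1 := by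
  have := σ.2; rwa [Matrix.det_fin_two] at this
lemma ioS_mem (σ) : ioS σ ∈ Sp4Z := by
  show _ = _
  have := SL_det σ
  ext a c; fin_cases a <;> fin_cases c <;> simp [ioS, J4, Matrix.mul_apply, Fin.sum_univ_four] <;> linarith
lemma ioS_mul (ρ σ) : ioS (ρ * σ) = ioS ρ * ioS σ := by
  ext a c; fin_cases a <;> fin_cases c <;> simp [ioS, Matrix.mul_apply, Fin.sum_univ_four, Fin.sum_univ_two]
lemma ioS_one : ioS 1 = 1 := by
  ext a c; fin_cases a <;> fin_cases c <;> simp [ioS]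

lemma trS_den (s b τ) : den (trS s b) τ = 1 := by
  ext a c; fin_cases a <;> fin_cases c <;> simp [den, blk, trS, Matrix.mul_apply, Fin.sum_univ_two]
lemma trS_moeb (s b) (τ1 z τ2 : ℂ) : moeb (trS s b) (mk2 τ1 z τ2) = mk2 τ1 (z + s) (τ2 + b) := by
  funext a c
  unfold moeb
  rw [trS_den]
  fin_cases a <;> fin_cases c <;> simp [blk, trS, mk2, Matrix.mul_apply, Fin.sum_univ_two]

lemma uS_den (l τ) : den (uS l) τ = !![1, -(l:ℂ); 0, 1] := by
  ext a c; fin_cases a <;> fin_cases c <;> simp [den, blk, uS, Matrix.mul_apply, Fin.sum_univ_two]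
lemma uS_inv (l : ℂ) : (!![1, -l; 0, 1] : Matrix (Fin 2) (Fin 2) ℂ)⁻¹ = !![1, l; 0, 1] := by
  apply Matrix.inv_eq_left_inv
  ext a c; fin_cases a <;> fin_cases c <;> simp
lemma uS_moeb (l) (τ1 z τ2 : ℂ) : moeb (uS l) (mk2 τ1 z τ2) = mk2 τ1 (z + l * τ1) (τ2 + (2 * l * z + l ^ 2 * τ1)) := by
  funext a c
  unfold moeb
  rw [uS_den, uS_inv]
  fin_cases a <;> fin_cases c <;> simp [blk, uS, mk2, Matrix.mul_apply, Fin.sum_univ_two] <;> ring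

lemma swS_den (τ) : den swS τ = !![0, 1; 1, 0] := by
  ext a c; fin_cases a <;> fin_cases c <;> simp [den, blk, swS, Matrix.mul_apply, Fin.sum_univ_two]
lemma swS_inv : (!![0, 1; 1, 0] : Matrix (Fin 2) (Fin 2) ℂ)⁻¹ = !![0, 1; 1, 0] := by
  apply Matrix.inv_eq_left_inv
  ext a c; fin_cases a <;> fin_cases c <;> simp
lemma swS_moeb (τ1 z τ2 : ℂ) : moeb swS (mk2 τ1 z τ2) = mk2 τ2 z τ1 := by
  funext a c
  unfold moeb
  rw [swS_den, swS_inv]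
  fin_cases a <;> fin_cases c <;> simp [blk, swS, mk2, Matrix.mul_apply, Fin.sum_univ_two]

lemma ioS_den (σ : SLZ) (τ1 z τ2 : ℂ) : den (ioS σ) (mk2 τ1 z τ2) = !![1, 0; (σ 1 0 : ℂ) * z, JJ σ τ2] := by
  ext a c; fin_cases a <;> fin_cases c <;> simp [den, blk, ioS, mk2, JJ, Matrix.mul_apply, Fin.sum_univ_two]
lemma ioS_inv {c J : ℂ} (h : J ≠ 0) : (!![1, 0; c, J] : Matrix (Fin 2) (Fin 2) ℂ)⁻¹ = !![1, 0; -(c / J), 1 / J] := by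
  apply Matrix.inv_eq_left_inv
  ext a c; fin_cases a <;> fin_cases c <;> simp [h]
  field_simp; ring
lemma ioS_moeb (σ : SLZ) (τ1 z τ2 : ℂ) (h : JJ σ τ2 ≠ 0) : moeb (ioS σ) (mk2 τ1 z τ2) =
    mk2 (τ1 - σ 1 0 * z ^ 2 / JJ σ τ2) (z / JJ σ τ2) (MM σ τ2) := by
  have hd : (σ 0 0 : ℂ) * σ 1 1 - σ 0 1 * σ 1 0 = 1 := by exact_mod_cast SL_det σ
  funext a c
  unfold moeb
  rw [ioS_den, ioS_inv h]
  fin_cases a <;> fin_cases c <;> simp [blk, ioS, mk2, Matrix.mul_apply, Fin.sum_univ_two]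
  · field_simp; ring
  · field_simp
  · field_simp; unfold JJ; linear_combination z * hd
  · unfold MM; field_simp

def GG (j : ℕ) (k : ℤ) (F : (Fin 2 → Fin 2 → ℂ) → (Fin (j + 1) → ℂ)) (γ : {γ // γ ∈ Sp4Z}) (i : ℕ) (τ1 z τ2 : ℂ) : ℂ :=
  if h : i < j + 1 then slashS j k γ.1 F (mk2 τ1 z τ2) ⟨i, h⟩ else 0

lemma GG_fin (γ : {γ // γ ∈ Sp4Z}) (i : Fin (j+1)) (τ1 z τ2 : ℂ) : GG j k F γ i τ1 z τ2 = slashS j k γ.1 F (mk2 τ1 z τ2) i := by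
  rw [GG, dif_pos i.2]

def actS (γ : {γ // γ ∈ Sp4Z}) (σ : SLZ) : {γ // γ ∈ Sp4Z} := ⟨γ.1 * ioS σ, Sp4Z_mul γ.2 (ioS_mem σ)⟩

lemma GG_congr (hF : IsSiegelCuspForm j k Sp4Z2 (fun _ => 1) F) (γ δ : {γ // γ ∈ Sp4Z})
    (h : ∀ i j, (γ.1 i j : ZMod 2) = δ.1 i j) (i) {τ1 z τ2 : ℂ} (hO : (τ1, z, τ2) ∈ Om) :
    GG j k F γ i τ1 z τ2 = GG j k F δ i τ1 z τ2 := by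
  unfold GG
  split_ifs with hi
  · rw [slash_congr hF γ.2 δ.2 h (mk2_mem hO)]
  · rfl

lemma mod_mul (γ : Matrix (Fin 4) (Fin 4) ℤ) {δ δ' : Matrix (Fin 4) (Fin 4) ℤ} (h : ∀ i j, (δ i j : ZMod 2) = δ' i j) :
    ∀ i j, ((γ * δ) i j : ZMod 2) = ((γ * δ') i j : ℤ) := by
  intro a b
  simp only [Matrix.mul_apply]
  push_cast
  exact Finset.sum_congr rfl fun c _ => by rw [h]

lemma GG_tr (γ : {γ // γ ∈ Sp4Z}) (s b : ℤ) (i : ℕ) {τ1 z τ2 : ℂ} (hO : (τ1, z, τ2) ∈ Om) :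
    GG j k F ⟨γ.1 * trS s b, Sp4Z_mul γ.2 (trS_mem s b)⟩ i τ1 z τ2 = GG j k F γ i τ1 (z + s) (τ2 + b) := by
  unfold GG
  split_ifs with hi
  · simp only
    rw [slash_mul γ.2 (trS_mem s b) (mk2_mem hO), trS_den, trS_moeb, inv_one, symAct_one]; simp
  · rfl

lemma GG_u (γ : {γ // γ ∈ Sp4Z}) (m : ℕ) (i : ℕ) {τ1 z τ2 : ℂ} (hO : (τ1, z, τ2) ∈ Om) :
    GG j k F ⟨γ.1 * uS m, Sp4Z_mul γ.2 (uS_mem m)⟩ i τ1 z τ2 =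
    ∑ l ∈ Finset.range (j+1), ((l.choose i : ℂ) * m ^ (l - i)) * GG j k F γ l τ1 (z + m * τ1) (τ2 + (2 * m * z + m ^ 2 * τ1)) := by
  by_cases hi : i < j + 1
  · rw [Finset.sum_range]
    simp only [GG_fin]
    rw [GG, dif_pos hi]
    simp only
    rw [slash_mul γ.2 (uS_mem m) (mk2_mem hO), uS_den, uS_moeb, uS_inv]
    simp only [Matrix.det_fin_two_of, mul_one, mul_zero, sub_zero, _root_.one_zpow, one_smul, symAct, Int.cast_natCast]
    refine Finset.sum_congr rfl fun l _ => ?_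
    congr 1
    unfold symCoeff
    simp
    rw [add_comm, ← Polynomial.C_eq_natCast, Polynomial.coeff_X_add_C_pow]; ring
  · rw [GG, dif_neg hi]
    symm
    refine Finset.sum_eq_zero fun l hl => ?_
    rw [Nat.choose_eq_zero_of_lt (by have := Finset.mem_range.1 hl; omega)]; simp

lemma GG_sw (γ : {γ // γ ∈ Sp4Z}) (i : ℕ) (hi : i ≤ j) {τ1 z τ2 : ℂ} (hO : (τ1, z, τ2) ∈ Om) :
    GG j k F ⟨γ.1 * swS, Sp4Z_mul γ.2 swS_mem⟩ i τ1 z τ2 = (-1) ^ (-k) * GG j k F γ (j - i) τ2 z τ1 := by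
  have hi' : i < j + 1 := by omega
  rw [GG, dif_pos hi', GG, dif_pos (by omega)]
  simp only
  rw [slash_mul γ.2 swS_mem (mk2_mem hO), swS_den, swS_moeb, swS_inv]
  set w := slashS j k γ.1 F (mk2 τ2 z τ1)
  have : symAct j !![0, 1; 1, 0] w = fun i => w (Fin.rev i) := by
    apply evv_inj; intro x y
    rw [evv_sym]; unfold evv
    rw [← Equiv.sum_comp Fin.revPerm]
    refine Finset.sum_congr rfl fun l _ => ?_
    simp
    have e : j - (j - (l:ℕ)) = l := by omega
    rw [e]; ring
  rw [this]
  simp only [Matrix.det_fin_two_of, Pi.smul_apply, smul_eq_mul]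
  norm_num
  left
  congr 1
  ext; simp [Fin.rev]

lemma GG_sl (γ : {γ // γ ∈ Sp4Z}) (σ : SLZ) {τ1 z τ2 : ℂ} (hO : (τ1, z, τ2) ∈ Om) (x y : ℂ) :
    ∑ i ∈ Finset.range (j + 1), GG j k F (actS γ σ) i τ1 z τ2 * x ^ (j - i) * y ^ i =
    JJ σ τ2 ^ (-k) * ∑ i ∈ Finset.range (j + 1),
      GG j k F γ i (τ1 - σ 1 0 * z ^ 2 / JJ σ τ2) (z / JJ σ τ2) (MM σ τ2) * (x - σ 1 0 * z / JJ σ τ2 * y) ^ (j - i) * (y / JJ σ τ2) ^ i := by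
  have h2 : 0 < τ2.im := (Om_swap hO).1
  have hJ := JJ_ne σ h2
  rw [Finset.sum_range, Finset.sum_range]
  simp only [GG_fin]
  change evv j (slashS j k (γ.1 * ioS σ) F (mk2 τ1 z τ2)) x y = JJ σ τ2 ^ (-k) * evv j (slashS j k γ.1 F (mk2 (τ1 - σ 1 0 * z ^ 2 / JJ σ τ2) (z / JJ σ τ2) (MM σ τ2))) (x - σ 1 0 * z / JJ σ τ2 * y) (y / JJ σ τ2)
  rw [slash_mul γ.2 (ioS_mem σ) (mk2_mem hO), ioS_den, ioS_moeb _ _ _ _ hJ, ioS_inv hJ, ← symAct_smul, evv_sym]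
  have e1 : (!![1, 0; -((σ 1 0 : ℂ) * z / JJ σ τ2), 1 / JJ σ τ2] : Matrix (Fin 2) (Fin 2) ℂ) 0 0 * x + (!![1, 0; -((σ 1 0 : ℂ) * z / JJ σ τ2), 1 / JJ σ τ2] : Matrix (Fin 2) (Fin 2) ℂ) 1 0 * y = x - σ 1 0 * z / JJ σ τ2 * y := by
    simp; ring
  have e2 : (!![1, 0; -((σ 1 0 : ℂ) * z / JJ σ τ2), 1 / JJ σ τ2] : Matrix (Fin 2) (Fin 2) ℂ) 0 1 * x + (!![1, 0; -((σ 1 0 : ℂ) * z / JJ σ τ2), 1 / JJ σ τ2] : Matrix (Fin 2) (Fin 2) ℂ) 1 1 * y = y / JJ σ τ2 := by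
    simp; ring
  rw [e1, e2, Matrix.det_fin_two_of]
  unfold evv
  rw [Finset.mul_sum]
  refine Finset.sum_congr rfl fun l _ => ?_
  simp only [Pi.smul_apply, smul_eq_mul, one_mul, zero_mul, sub_zero]
  ring

end

section

variable {γ δ : Matrix (Fin 4) (Fin 4) ℤ} {τ : Fin 2 → Fin 2 → ℂ} {j : ℕ} {k : ℤ} {F : (Fin 2 → Fin 2 → ℂ) → (Fin (j + 1) → ℂ)}

lemma pol_mul {s : Set (ℂ × ℂ × ℂ)} {P Q : ℂ × ℂ × ℂ → Polynomial ℂ} (hP : ∀ i, DifferentiableOn ℂ (fun p => (P p).coeff i) s)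
    (hQ : ∀ i, DifferentiableOn ℂ (fun p => (Q p).coeff i) s) : ∀ i, DifferentiableOn ℂ (fun p => (P p * Q p).coeff i) s := by
  intro i
  simp only [Polynomial.coeff_mul]
  exact DifferentiableOn.fun_sum fun a _ => (hP _).mul (hQ _)

lemma pol_pow {s : Set (ℂ × ℂ × ℂ)} {P : ℂ × ℂ × ℂ → Polynomial ℂ} (hP : ∀ i, DifferentiableOn ℂ (fun p => (P p).coeff i) s)
    (n : ℕ) : ∀ i, DifferentiableOn ℂ (fun p => (P p ^ n).coeff i) s := by
  induction n with
  | zero => intro i; simp only [_root_.pow_zero]; exact differentiableOn_const _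
  | succ n ih => simp only [_root_.pow_succ]; exact pol_mul ih hP

lemma pol_lin {s : Set (ℂ × ℂ × ℂ)} {a b : ℂ × ℂ × ℂ → ℂ} (ha : DifferentiableOn ℂ a s) (hb : DifferentiableOn ℂ b s) :
    ∀ i, DifferentiableOn ℂ (fun p => (Polynomial.C (a p) + Polynomial.C (b p) * Polynomial.X).coeff i) s := by
  intro i
  simp only [Polynomial.coeff_add, Polynomial.coeff_C, Polynomial.coeff_C_mul, Polynomial.coeff_X]
  refine DifferentiableOn.add ?_ (hb.mul (differentiableOn_const _))
  split_ifs
  · exact ha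
  · exact differentiableOn_const _

lemma sym_diff {s : Set (ℂ × ℂ × ℂ)} {m : ℂ × ℂ × ℂ → Matrix (Fin 2) (Fin 2) ℂ} (hm : ∀ a b, DifferentiableOn ℂ (fun p => m p a b) s)
    (l i : Fin (j+1)) : DifferentiableOn ℂ (fun p => symCoeff j (m p) l i) s := by
  unfold symCoeff
  exact pol_mul (pol_pow (pol_lin (hm _ _) (hm _ _)) _) (pol_pow (pol_lin (hm _ _) (hm _ _)) _) _

lemma mk2_diff (a b : Fin 2) : Differentiable ℂ (fun p : ℂ × ℂ × ℂ => mk2 p.1 p.2.1 p.2.2 a b) := by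
  fin_cases a <;> fin_cases b <;> simp [mk2] <;> fun_prop

lemma lin_diff (A B : Matrix (Fin 2) (Fin 2) ℂ) (a b : Fin 2) :
    Differentiable ℂ (fun p : ℂ × ℂ × ℂ => (A * Matrix.of (mk2 p.1 p.2.1 p.2.2) + B) a b) := by
  simp only [Matrix.add_apply, Matrix.mul_apply, Fin.sum_univ_two, Matrix.of_apply]
  have h0 := mk2_diff 0 b
  have h1 := mk2_diff 1 b
  exact ((h0.const_mul _).add (h1.const_mul _)).add_const _

lemma inv_diff (h : γ ∈ Sp4Z) : DifferentiableOn ℂ (fun p : ℂ × ℂ × ℂ => (den γ (mk2 p.1 p.2.1 p.2.2)).det) Om ∧ 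
    ∀ a b, DifferentiableOn ℂ (fun p : ℂ × ℂ × ℂ => (den γ (mk2 p.1 p.2.1 p.2.2))⁻¹ a b) Om := by
  have hd : ∀ a b, DifferentiableOn ℂ (fun p : ℂ × ℂ × ℂ => den γ (mk2 p.1 p.2.1 p.2.2) a b) Om := fun a b =>
    (lin_diff _ _ a b).differentiableOn
  have hdet : DifferentiableOn ℂ (fun p : ℂ × ℂ × ℂ => (den γ (mk2 p.1 p.2.1 p.2.2)).det) Om := by
    simp only [Matrix.det_fin_two]
    exact ((hd 0 0).mul (hd 1 1)).sub ((hd 0 1).mul (hd 1 0))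
  refine ⟨hdet, fun a b => ?_⟩
  simp only [Matrix.inv_def, Matrix.smul_apply, Ring.inverse_eq_inv', smul_eq_mul, Matrix.adjugate_fin_two]
  refine (hdet.inv fun p hp => den_det h (mk2_mem hp)).mul ?_
  fin_cases a <;> fin_cases b <;> simp
  · exact hd 1 1
  · exact hd 0 1
  · exact hd 1 0
  · exact hd 0 0

lemma GG_hol (hF : DifferentiableOn ℂ F H2) (γ : {γ // γ ∈ Sp4Z}) (i : ℕ) :
    DifferentiableOn ℂ (fun p : ℂ × ℂ × ℂ => GG j k F γ i p.1 p.2.1 p.2.2) Om := by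
  unfold GG
  split_ifs with hi
  · obtain ⟨h1, h2⟩ := inv_diff γ.2
    simp only [slashS, Pi.smul_apply, smul_eq_mul, symAct]
    have hm : DifferentiableOn ℂ (fun p : ℂ × ℂ × ℂ => moeb γ.1 (mk2 p.1 p.2.1 p.2.2)) Om := by
      rw [differentiableOn_pi]; intro a
      rw [differentiableOn_pi]; intro b
      have hg : ∀ p : ℂ × ℂ × ℂ, moeb γ.1 (mk2 p.1 p.2.1 p.2.2) a b =
          (blk γ.1 0 0 * Matrix.of (mk2 p.1 p.2.1 p.2.2) + blk γ.1 0 1) a 0 * (den γ.1 (mk2 p.1 p.2.1 p.2.2))⁻¹ 0 b +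
          (blk γ.1 0 0 * Matrix.of (mk2 p.1 p.2.1 p.2.2) + blk γ.1 0 1) a 1 * (den γ.1 (mk2 p.1 p.2.1 p.2.2))⁻¹ 1 b := by
        intro p
        exact (Matrix.mul_apply (M := blk γ.1 0 0 * Matrix.of (mk2 p.1 p.2.1 p.2.2) + blk γ.1 0 1)).trans (Fin.sum_univ_two _)
      simp only [hg]
      exact (((lin_diff _ _ _ _).differentiableOn).mul (h2 _ _)).add (((lin_diff _ _ _ _).differentiableOn).mul (h2 _ _))
    have hFm : DifferentiableOn ℂ (fun p : ℂ × ℂ × ℂ => F (moeb γ.1 (mk2 p.1 p.2.1 p.2.2))) Om :=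
      hF.comp hm fun p hp => moeb_mem γ.2 (mk2_mem hp)
    rw [differentiableOn_pi] at hFm
    refine DifferentiableOn.mul ?_ (DifferentiableOn.fun_sum fun l _ => (sym_diff h2 _ _).mul (hFm l))
    exact DifferentiableOn.zpow h1 (Or.inl fun p hp => den_det γ.2 (mk2_mem hp))
  · exact differentiableOn_const _

lemma GG_Fam (hF : IsSiegelCuspForm j k Sp4Z2 (fun _ => 1) F) : Fam j k (GG j k F) actS where
  hol := GG_hol hF.1
  zero := fun γ i hi τ1 z τ2 => by rw [GG, dif_neg (by omega)]
  cusp := fun γ i τ1 h1 => by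
    unfold GG
    split_ifs with hi
    · have := hF.2.2.1 γ.1 γ.2 τ1 h1
      rw [tendsto_pi_nhds] at this
      refine (this ⟨i, hi⟩).congr fun t => ?_
      congr 2
      funext a b; fin_cases a <;> fin_cases b <;> simp [diagH, mk2]
    · exact tendsto_const_nhds
  t2 := fun γ i τ1 z τ2 hO => by
    have h := GG_tr (j := j) (k := k) (F := F) γ 0 2 i hO
    push_cast at h; rw [add_zero] at h
    rw [← h]
    refine GG_congr hF _ _ ?_ i hO
    have := mod_mul γ.1 (δ := trS 0 2) (δ' := 1) (by decide +kernel)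
    simpa using this
  z2 := fun γ i τ1 z τ2 hO _ => by
    have h := GG_tr (j := j) (k := k) (F := F) γ 2 0 i hO
    push_cast at h; rw [add_zero] at h
    rw [← h]
    refine GG_congr hF _ _ ?_ i hO
    have := mod_mul γ.1 (δ := trS 2 0) (δ' := 1) (by decide +kernel)
    simpa using this
  z1 := fun γ => ⟨⟨γ.1 * trS 1 0, Sp4Z_mul γ.2 (trS_mem 1 0)⟩, fun i τ1 z τ2 hO => by
    have h := GG_tr (j := j) (k := k) (F := F) γ 1 0 i hO
    push_cast at h; rw [add_zero] at h; exact h⟩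
  u1 := fun γ => ⟨⟨γ.1 * uS (1:ℕ), Sp4Z_mul γ.2 (uS_mem (1:ℕ))⟩, fun i τ1 z τ2 hO => by
    have h := GG_u (j := j) (k := k) (F := F) γ 1 i hO
    rw [h]
    refine Finset.sum_congr rfl fun l _ => ?_
    norm_num⟩
  u2 := fun γ i τ1 z τ2 hO => by
    have h := GG_u (j := j) (k := k) (F := F) γ 2 i hO
    have e : GG j k F γ i τ1 z τ2 = GG j k F ⟨γ.1 * uS (2:ℕ), Sp4Z_mul γ.2 (uS_mem (2:ℕ))⟩ i τ1 z τ2 := by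
      refine GG_congr hF _ _ ?_ i hO
      have := mod_mul γ.1 (δ := 1) (δ' := uS (2:ℕ)) (by decide +kernel)
      simpa using this
    rw [e, h]
    refine Finset.sum_congr rfl fun l _ => ?_
    push_cast
    rw [show (2:ℂ) * 2 * z + 2 ^ 2 * τ1 = 4 * z + 4 * τ1 by ring]
  swap := fun γ => ⟨⟨γ.1 * swS, Sp4Z_mul γ.2 swS_mem⟩, (-1) ^ (-k), zpow_ne_zero _ (by norm_num),
    fun i hi τ1 z τ2 hO => GG_sw γ i hi hO⟩
  act_one := fun γ => by simp [actS, ioS_one]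
  act_mul := fun γ ρ σ => by simp [actS, ioS_mul, Matrix.mul_assoc]
  act_mod := fun γ ρ σ h i τ1 z τ2 hO => by
    refine GG_congr hF _ _ (mod_mul γ.1 ?_) i hO
    have e : ∀ a b, (ρ a b : ZMod 2) = (σ a b : ZMod 2) := fun a b => by rw [← redu_entry, ← redu_entry, h]
    intro a b
    fin_cases a <;> fin_cases b <;> simp [ioS, e]
  sl := fun γ σ τ1 z τ2 hO x y => GG_sl γ σ hO x y

end

/-- For all integers `j` with `0 ≤ j ≤ 8` and all integers `k ≤ 2`, the space
`S_{j,k}(Γ₂[2])` is zero. -/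
theorem vanishing_Sjk_level_two_small (j : ℕ) (hj : j ≤ 8) (k : ℤ) (hk : k ≤ 2) :
    SiegelCusp j k Sp4Z2 (fun _ => 1) = ⊥ := by
  rw [eq_bot_iff]
  intro F hF
  have hF : IsSiegelCuspForm j k Sp4Z2 (fun _ => 1) F := hF
  rw [Submodule.mem_bot]
  funext τ
  by_cases hτ : τ ∈ H2
  · obtain ⟨e, hO⟩ := H2_mk2 hτ
    have h1 : (1 : Matrix (Fin 4) (Fin 4) ℤ) ∈ Sp4Z2 := by
      refine ⟨?_, ?_⟩
      · show _ = _
        simp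
      · decide +kernel
    funext i
    have := (GG_Fam hF).vanish hj hk ⟨1, h1.1⟩ i hO
    rw [GG_fin, ← e, slash_lev hF h1 hτ] at this
    exact this
  · exact hF.2.2.2 τ hτ
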